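/- arXiv:1111.7263 — 2 statements merged into one kernel-verified Lean document; each statement's English description precedes it below -/
import Mathlib

section
/- Let k be a field of characteristic 0 and n ≥ 4. Then J_2(4,n) is generated in degrees ≤ 3: the ideal of relations among the 2-minors of a generic 4×n matrix is generated by its elements of degree at most 3 (quadrics and cubics). -/
open MvPolynomial

/-- The `t`-minor `[I|J]` of the generic `m × n` matrix. -/
noncomputable def genericMinor (k : Type*) [CommRing k] (m n t : ℕ)
    (I : Finset (Fin m)) (J : Finset (Fin n)) (hI : I.card = t) (hJ : J.card = t) :
    MvPolynomial (Fin m × Fin n) k :=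
  Matrix.det (Matrix.of fun a b : Fin t =>
    MvPolynomial.X ((↑(I.orderIsoOfFin hI a) : Fin m), (↑(J.orderIsoOfFin hJ b) : Fin n)))

/-- Index set for the `t`-minors of an `m × n` matrix: pairs `(I, J)` of a `t`-element set
of rows and a `t`-element set of columns. -/
def MinorIndex (t m n : ℕ) : Type :=
  {p : Finset (Fin m) × Finset (Fin n) // p.1.card = t ∧ p.2.card = t}

/-- The presentation map `π : S_t(m,n) → R(m,n)`, sending the indeterminate `y_{I,J}`
to the `t`-minor `[I|J]`. -/
noncomputable def minorPresentation (k : Type*) [CommRing k] (t m n : ℕ) :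
    MvPolynomial (MinorIndex t m n) k →ₐ[k] MvPolynomial (Fin m × Fin n) k :=
  MvPolynomial.aeval fun p => genericMinor k m n t p.1.1 p.1.2 p.2.1 p.2.2

/-- `J_t(m,n)`: the ideal of relations of the `t`-minors of the generic `m × n` matrix. -/
noncomputable def minorRelations (k : Type*) [CommRing k] (t m n : ℕ) :
    Ideal (MvPolynomial (MinorIndex t m n) k) :=
  RingHom.ker (minorPresentation k t m n).toRingHom

/-- An ideal of a polynomial ring is generated in degrees `≤ D` if it is generated by its
elements of total degree at most `D`. -/
def GeneratedInDegreesLE {k σ : Type*} [CommRing k]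
    (I : Ideal (MvPolynomial σ k)) (D : ℕ) : Prop :=
  I = Ideal.span {x | x ∈ I ∧ x.totalDegree ≤ D}

set_option linter.all false
namespace MR
open Equiv Finset

abbrev XX (d : ℕ) := Fin d × ℤˣ
def bar {d : ℕ} (x : XX d) : XX d := (x.1, -x.2)
@[simp] lemma bar_fst {d : ℕ} (x : XX d) : (bar x).1 = x.1 := rfl
@[simp] lemma bar_bar {d : ℕ} (x : XX d) : bar (bar x) = x := by simp [bar]
lemma bar_ne {d : ℕ} (x : XX d) : bar x ≠ x := by
  intro h
  have := congrArg Prod.snd h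
  rcases Int.units_eq_one_or x.2 with h' | h' <;> simp [bar, h'] at this
lemma eq_or_bar {d : ℕ} {x y : XX d} (h : x.1 = y.1) : x = y ∨ x = bar y := by
  obtain ⟨i, a⟩ := x
  obtain ⟨j, b⟩ := y
  simp only at h
  subst h
  rcases Int.units_eq_one_or a with rfl | rfl <;> rcases Int.units_eq_one_or b with rfl | rfl <;>
    simp [bar]

def flp {d : ℕ} : (Fin d → ℤˣ) →* Perm (XX d) where
  toFun f := ⟨fun x => (x.1, f x.1 * x.2), fun x => (x.1, (f x.1)⁻¹ * x.2),
    fun x => Prod.ext rfl (inv_mul_cancel_left _ _), fun x => Prod.ext rfl (mul_inv_cancel_left _ _)⟩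
  map_one' := by ext x <;> simp
  map_mul' f g := by ext x <;> simp [mul_assoc]
@[simp] lemma flp_apply {d : ℕ} (f : Fin d → ℤˣ) (x : XX d) : flp f x = (x.1, f x.1 * x.2) := rfl

def sg {d : ℕ} (f : Fin d → ℤˣ) : ℤˣ := ∏ i, f i
lemma sg_mul {d : ℕ} (f g : Fin d → ℤˣ) : sg (f * g) = sg f * sg g := by
  simp [sg, Finset.prod_mul_distrib]

def sgl {d : ℕ} (i : Fin d) : Fin d → ℤˣ := fun j => if j = i then -1 else 1
lemma sg_sgl {d : ℕ} (i : Fin d) : sg (sgl i) = -1 := by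
  simp [sg, sgl]

def tau {d : ℕ} (i : Fin d) : Perm (XX d) := swap (i, 1) (i, -1)
lemma tau_eq {d : ℕ} (i : Fin d) : tau i = flp (sgl i) := by
  ext1 ⟨j, a⟩
  by_cases h : j = i
  · subst h
    rcases Int.units_eq_one_or a with rfl | rfl <;> simp [tau, sgl]
  · simp [tau, sgl, h, swap_apply_def]
lemma tau_swap {d : ℕ} (x : XX d) : tau x.1 = swap x (bar x) := by
  obtain ⟨i, a⟩ := x
  rcases Int.units_eq_one_or a with rfl | rfl
  · simp [tau, bar]
  · simp [tau, bar, swap_comm]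

def bsw {d : ℕ} (x y : XX d) : Perm (XX d) :=
  if y = bar x then swap x y else swap x y * swap (bar x) (bar y)

lemma bsw_left {d : ℕ} (x y : XX d) : bsw x y x = y := by
  unfold bsw
  split_ifs with h
  · simp
  · have h1 : x ≠ bar y := fun h' => h (by rw [h']; simp)
    simp [swap_apply_of_ne_of_ne (bar_ne x).symm h1]
lemma bsw_left' {d : ℕ} (x y : XX d) : bsw x y (bar x) = bar y := by
  unfold bsw
  split_ifs with h
  · simp [h]
  · have h1 : bar y ≠ x := fun h' => h (by rw [← h']; simp)
    simp [swap_apply_of_ne_of_ne h1 (bar_ne y)]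
lemma bsw_other {d : ℕ} (x y t : XX d) (h1 : t.1 ≠ x.1) (h2 : t.1 ≠ y.1) : bsw x y t = t := by
  have a1 : t ≠ x := fun h => h1 (by rw [h])
  have a2 : t ≠ y := fun h => h2 (by rw [h])
  have a3 : t ≠ bar x := fun h => h1 (by rw [h]; rfl)
  have a4 : t ≠ bar y := fun h => h2 (by rw [h]; rfl)
  unfold bsw
  split_ifs with h
  · simp [swap_apply_of_ne_of_ne, *]
  · simp [swap_apply_of_ne_of_ne, *]
lemma bsw_mul_self {d : ℕ} (x y : XX d) : bsw x y * bsw x y = 1 := by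
  have hyx : bsw x y y = x := by
    by_cases h : y = bar x
    · rw [h, bsw_left']; simp
    · by_cases hxy : y = x
      · subst hxy; exact bsw_left _ _
      · have h1 : y ≠ x := hxy
        have : bsw x y = swap x y * swap (bar x) (bar y) := by simp [bsw, h]
        rw [this, Perm.mul_apply, swap_apply_of_ne_of_ne h (bar_ne y).symm, swap_apply_right]
  have hyx' : bsw x y (bar y) = bar x := by
    by_cases h : y = bar x
    · rw [h, bar_bar, bsw_left]
    · by_cases hxy : y = x
      · subst hxy; exact bsw_left' _ _
      · have : bsw x y = swap x y * swap (bar x) (bar y) := by simp [bsw, h]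
        rw [this, Perm.mul_apply, swap_apply_right, swap_apply_of_ne_of_ne (bar_ne x)]
        exact fun h' => h h'.symm
  ext1 t
  rw [Perm.mul_apply, Perm.one_apply]
  by_cases h1 : t.1 = x.1
  · rcases eq_or_bar h1 with rfl | rfl
    · rw [bsw_left, hyx]
    · rw [bsw_left', hyx']
  by_cases h2 : t.1 = y.1
  · rcases eq_or_bar h2 with rfl | rfl
    · rw [hyx, bsw_left]
    · rw [hyx', bsw_left']
  rw [bsw_other x y t h1 h2, bsw_other x y t h1 h2]

def PP {d : ℕ} (U : Finset (Fin d)) : Subgroup (Perm (XX d)) where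
  carrier := {w | ∀ x : XX d, x.1 ∉ U → w x = x}
  mul_mem' {a b} ha hb x hx := by rw [Perm.mul_apply, hb x hx, ha x hx]
  one_mem' x _ := rfl
  inv_mem' {a} ha x hx := by
    rw [Perm.inv_eq_iff_eq]; exact (ha x hx).symm

lemma PP_maps {d : ℕ} {U : Finset (Fin d)} {w : Perm (XX d)} (hw : w ∈ PP U) (x : XX d)
    (hx : x.1 ∈ U) : (w x).1 ∈ U := by
  by_contra h
  have := hw _ h
  have := w.injective this
  rw [this] at h
  exact h hx
lemma swap_PP {d : ℕ} {U : Finset (Fin d)} (x y : XX d) (hx : x.1 ∈ U) (hy : y.1 ∈ U) :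
    swap x y ∈ PP U := by
  intro t ht
  apply swap_apply_of_ne_of_ne
  · rintro rfl; exact ht hx
  · rintro rfl; exact ht hy
lemma bsw_PP {d : ℕ} {U : Finset (Fin d)} (x y : XX d) (hx : x.1 ∈ U) (hy : y.1 ∈ U) :
    bsw x y ∈ PP U := by
  unfold bsw
  split_ifs
  · exact swap_PP x y hx hy
  · exact mul_mem (swap_PP x y hx hy) (swap_PP _ _ hx hy)
lemma PP_mono {d : ℕ} {U V : Finset (Fin d)} (h : U ⊆ V) {w : Perm (XX d)} (hw : w ∈ PP U) :
    w ∈ PP V := fun x hx => hw x (fun h' => hx (h h'))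
lemma PP_erase {d : ℕ} {U : Finset (Fin d)} {w : Perm (XX d)} (hw : w ∈ PP U) (x : XX d)
    (h1 : w x = x) (h2 : w (bar x) = bar x) : w ∈ PP (U.erase x.1) := by
  intro t ht
  by_cases h : t.1 = x.1
  · rcases eq_or_bar h with rfl | rfl
    · exact h1
    · exact h2
  · exact hw t (fun h' => ht (Finset.mem_erase.2 ⟨h, h'⟩))
lemma PP_comm {d : ℕ} {U : Finset (Fin d)} {w : Perm (XX d)} (hw : w ∈ PP U) {i : Fin d}
    (hi : i ∉ U) : w * tau i = tau i * w := by
  unfold tau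
  rw [mul_swap_eq_swap_mul, hw _ hi, hw _ hi]

structure Sys {d : ℕ} {Z : Type*} [AddCommGroup Z] (φ : Perm (XX d) → Z) : Prop where
  tf : ∀ (n : ℤ) (z : Z), n ≠ 0 → n • z = 0 → z = 0
  lb : ∀ x y w1 w2, φ w1 = - φ w2 → φ (bsw x y * w1) = - φ (bsw x y * w2)
  rb : ∀ x y w1 w2, φ w1 = - φ w2 → φ (w1 * bsw x y) = - φ (w2 * bsw x y)
  lt : ∀ i w, φ (tau i * w) = - φ w
  rt : ∀ i w, φ (w * tau i) = - φ w
  mul : ∀ s x, φ s = 0 → φ x = 0 → ∑ f : Fin d → ℤˣ, ((sg f : ℤˣ) : ℤ) • φ (s * flp f * x) = 0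
  base : ∀ (U : Finset (Fin d)) w, U.card ≤ 3 → w ∈ PP U → φ w = 0

namespace Sys
variable {d : ℕ} {Z : Type*} [AddCommGroup Z] {φ : Perm (XX d) → Z}

lemma dual (h : Sys φ) : Sys (fun w => φ w⁻¹) where
  tf := h.tf
  lb x y w1 w2 e := by
    have hb : (bsw x y)⁻¹ = bsw x y := inv_eq_of_mul_eq_one_left (bsw_mul_self x y)
    simp only [mul_inv_rev, hb]
    exact h.rb _ _ _ _ e
  rb x y w1 w2 e := by
    have hb : (bsw x y)⁻¹ = bsw x y := inv_eq_of_mul_eq_one_left (bsw_mul_self x y)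
    simp only [mul_inv_rev, hb]
    exact h.lb _ _ _ _ e
  lt i w := by
    have : (tau i)⁻¹ = tau i := by simp [tau]
    simp only [mul_inv_rev, this]; exact h.rt _ _
  rt i w := by
    have : (tau i)⁻¹ = tau i := by simp [tau]
    simp only [mul_inv_rev, this]; exact h.lt _ _
  mul s x hs hx := by
    have := h.mul _ _ hx hs
    rw [← this]
    refine Finset.sum_congr rfl fun f _ => ?_
    have hf : f⁻¹ = f := by ext i; simp
    rw [mul_inv_rev, mul_inv_rev, ← map_inv, hf, mul_assoc]
  base U w hU hw := h.base U _ hU (inv_mem hw)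

lemma two (h : Sys φ) {w} (e : φ w = - φ w) : φ w = 0 := by
  apply h.tf 2 _ (by norm_num)
  rw [two_smul]
  nth_rewrite 1 [e]
  simp
lemma lb0 (h : Sys φ) (x y w) (e : φ w = 0) : φ (bsw x y * w) = 0 :=
  h.two (h.lb x y w w (by simp [e]))
lemma rb0 (h : Sys φ) (x y w) (e : φ w = 0) : φ (w * bsw x y) = 0 :=
  h.two (h.rb x y w w (by simp [e]))

/-- key sum reduction -/
lemma red (h : Sys φ) (s x : Perm (XX d)) (A : Finset (Fin d))
    (hA : ∀ i ∈ A, s * tau i = tau i * s ∨ x * tau i = tau i * x) (f : Fin d → ℤˣ) :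
    ((sg f : ℤˣ) : ℤ) • φ (s * flp f * x) =
      ((sg (fun j => if j ∈ A then 1 else f j) : ℤˣ) : ℤ) •
        φ (s * flp (fun j => if j ∈ A then 1 else f j) * x) := by
  induction A using Finset.induction_on with
  | empty => simp
  | insert i A hi ih =>
    rw [ih (fun j hj => hA j (Finset.mem_insert_of_mem hj))]
    set g : Fin d → ℤˣ := fun j => if j ∈ A then 1 else f j with hg
    rcases Int.units_eq_one_or (f i) with hfi | hfi
    · congr 3
      all_goals
        have : g = (fun j => if j ∈ insert i A then 1 else f j) := by
          ext j
          by_cases hj : j = i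
          · subst hj; simp [hg, hi, hfi]
          · simp [hg, hj]
        rw [this]
    · have hgg : g = sgl i * (fun j => if j ∈ insert i A then 1 else f j) := by
        ext j
        by_cases hj : j = i
        · subst hj; simp [hg, hi, hfi, sgl]
        · simp [hg, hj, sgl]
      rw [hgg, sg_mul, sg_sgl, map_mul, ← tau_eq]
      have key : φ (s * (tau i * flp (fun j => if j ∈ insert i A then 1 else f j)) * x) =
          - φ (s * flp (fun j => if j ∈ insert i A then 1 else f j) * x) := by
        rcases hA i (Finset.mem_insert_self _ _) with hc | hc
        · rw [← mul_assoc, hc, mul_assoc, mul_assoc, h.lt, mul_assoc]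
        · rw [tau_eq, ← map_mul, mul_comm (sgl i), map_mul, ← tau_eq, ← mul_assoc, mul_assoc, ← hc,
            ← mul_assoc, h.rt]
      rw [key]
      simp

lemma C0 (h : Sys φ) (s x : Perm (XX d)) (U V : Finset (Fin d)) (hs : s ∈ PP U) (hx : x ∈ PP V)
    (hUV : ∀ i, i ∈ U → i ∉ V) (h1 : φ s = 0) (h2 : φ x = 0) : φ (s * x) = 0 := by
  have := h.mul s x h1 h2
  rw [Finset.sum_congr rfl (fun f _ => h.red s x univ (fun i _ => by
    by_cases hi : i ∈ U
    · exact Or.inr (PP_comm hx (hUV i hi))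
    · exact Or.inl (PP_comm hs hi)) f)] at this
  simp only [Finset.mem_univ, if_true] at this
  have e1 : (fun _ : Fin d => (1 : ℤˣ)) = 1 := rfl
  rw [e1, map_one, Finset.sum_const, mul_one] at this
  have hz : ((Fintype.card (Fin d → ℤˣ) : ℕ) : ℤ) ≠ 0 := by
    exact_mod_cast Fintype.card_ne_zero
  apply h.tf _ _ hz
  rw [natCast_zsmul]
  simpa [sg] using this

lemma C1 (h : Sys φ) (s x : Perm (XX d)) (c : Fin d) (U V : Finset (Fin d)) (hs : s ∈ PP U)
    (hx : x ∈ PP V)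
    (hUV : ∀ i, i ≠ c → i ∈ U → i ∉ V) (h1 : φ s = 0) (h2 : φ x = 0) :
    φ (s * tau c * x) = φ (s * x) := by
  have := h.mul s x h1 h2
  have hr : ∀ f : Fin d → ℤˣ, ((sg f : ℤˣ) : ℤ) • φ (s * flp f * x) =
      if f c = 1 then φ (s * x) else - φ (s * tau c * x) := by
    intro f
    rw [h.red s x (univ.erase c) (fun i hi => by
      by_cases hi' : i ∈ U
      · exact Or.inr (PP_comm hx (hUV i (Finset.ne_of_mem_erase hi) hi'))
      · exact Or.inl (PP_comm hs hi')) f]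
    rcases Int.units_eq_one_or (f c) with hf | hf
    · have : (fun j => if j ∈ univ.erase c then 1 else f j) = (1 : Fin d → ℤˣ) := by
        ext j
        by_cases hj : j = c
        · subst hj; simp [hf]
        · simp [hj]
      rw [this, if_pos hf]
      simp [sg]
    · have : (fun j => if j ∈ univ.erase c then 1 else f j) = sgl c := by
        ext j
        by_cases hj : j = c
        · subst hj; simp [hf, sgl]
        · simp [hj, sgl]
      rw [this, if_neg (by rw [hf]; decide), sg_sgl, ← tau_eq]
      simp
  rw [Finset.sum_congr rfl (fun f _ => hr f)] at this
  -- pair up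
  have hp : ∑ f : Fin d → ℤˣ, (if f c = 1 then φ (s * x) else - φ (s * tau c * x)) =
      ∑ f : Fin d → ℤˣ, (if f c = 1 then - φ (s * tau c * x) else φ (s * x)) := by
    rw [← Equiv.sum_comp (Equiv.mulLeft (sgl c))]
    refine Finset.sum_congr rfl fun f _ => ?_
    rcases Int.units_eq_one_or (f c) with hf | hf <;> simp [sgl, hf]
  have h3 : ∑ f : Fin d → ℤˣ, (φ (s * x) - φ (s * tau c * x)) = 0 := by
    have e : ∀ f : Fin d → ℤˣ, (φ (s * x) - φ (s * tau c * x)) =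
      (if f c = 1 then φ (s * x) else - φ (s * tau c * x)) +
      (if f c = 1 then - φ (s * tau c * x) else φ (s * x)) := by
      intro f; split_ifs <;> abel
    rw [Finset.sum_congr rfl (fun f _ => e f), Finset.sum_add_distrib, ← hp, this, add_zero]
  rw [Finset.sum_const] at h3
  have hz : ((Fintype.card (Fin d → ℤˣ) : ℕ) : ℤ) ≠ 0 := by
    exact_mod_cast Fintype.card_ne_zero
  have h4 := h.tf _ (φ (s * x) - φ (s * tau c * x)) hz (by
    rw [natCast_zsmul]; simpa using h3)
  exact (sub_eq_zero.1 h4).symm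

lemma lemA (h : Sys φ) (U : Finset (Fin d)) (hU : 3 ≤ U.card)
    (IH : ∀ U' : Finset (Fin d), U'.card < U.card → ∀ w ∈ PP U', φ w = 0)
    (w : Perm (XX d)) (hw : w ∈ PP U) (x a b : XX d) (ha : w x = a) (hb : w (bar x) = b)
    (hab : a.1 ≠ b.1) :
    φ (swap a b * swap (bar a) (bar b) * w) = - φ w := by
  have hx : x.1 ∈ U := by
    by_contra hx
    have h1 := hw x hx
    have h2 := hw (bar x) hx
    rw [h1] at ha; rw [h2] at hb
    apply hab; rw [← ha, ← hb]; rfl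
  have haU : a.1 ∈ U := ha ▸ PP_maps hw x hx
  have hbU : b.1 ∈ U := hb ▸ PP_maps hw (bar x) hx
  have d1 : bar a ≠ b := fun e => hab (by rw [← e]; rfl)
  have d2 : a ≠ b := fun e => hab (by rw [e])
  have d3 : a ≠ bar b := fun e => hab (by rw [e]; rfl)
  have d4 : bar a ≠ bar b := fun e => hab (by
    have := congrArg (fun t : XX d => t.1) e; exact this)
  have d5 := bar_ne a
  have d6 := bar_ne b
  set s := swap (bar a) b with hs
  set y := s * w * bsw a x with hy
  have hsw : s * s = 1 := swap_mul_self _ _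
  have hwy : w = s * y * bsw a x := by
    rw [hy, mul_assoc, mul_assoc, mul_assoc, bsw_mul_self, mul_one, ← mul_assoc, hsw, one_mul]
  have hyU : y ∈ PP U := mul_mem (mul_mem (swap_PP _ _ haU hbU) hw) (bsw_PP _ _ haU hx)
  have hya : y a = a := by
    rw [hy, Perm.mul_apply, bsw_left, Perm.mul_apply, ha, hs, swap_apply_of_ne_of_ne d5.symm d2]
  have hya' : y (bar a) = bar a := by
    rw [hy, Perm.mul_apply, bsw_left', Perm.mul_apply, hb, hs, swap_apply_right]
  have hyE := PP_erase hyU a hya hya'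
  have hsE : s ∈ PP ({a.1, b.1} : Finset (Fin d)) := swap_PP _ _ (by simp) (by simp)
  have hc := h.C1 s y b.1 _ _ hsE hyE (by
    intro i hi hi'
    simp only [Finset.mem_insert, Finset.mem_singleton, hi, or_false] at hi'
    simp [hi'])
    (IH _ (lt_of_le_of_lt Finset.card_le_two (by omega)) _ hsE)
    (IH _ (Finset.card_erase_lt_of_mem haU) _ hyE)
  have hid : swap a b * swap (bar a) (bar b) * s = s * tau b.1 * tau a.1 := by
    rw [tau_swap, tau_swap, hs]
    ext1 t
    simp only [Perm.mul_apply]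
    by_cases t1 : t = a
    · subst t1; simp [swap_apply_def, *, Ne.symm]
      try grind
    by_cases t2 : t = bar a
    · subst t2; simp [swap_apply_def, *, Ne.symm]
      try grind
    by_cases t3 : t = b
    · subst t3; simp [swap_apply_def, *, Ne.symm]
      try grind
    by_cases t4 : t = bar b
    · subst t4; simp [swap_apply_def, *, Ne.symm]
      try grind
    simp [swap_apply_def, *]
  have hcomm : y * tau a.1 = tau a.1 * y := PP_comm hyE (by simp)
  have h5 : φ (swap a b * swap (bar a) (bar b) * (s * y)) = - φ (s * y) := by
    rw [← mul_assoc, hid, mul_assoc, ← hcomm, ← mul_assoc, h.rt, hc]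
  have := h.rb a x _ _ h5
  rw [← hwy] at this
  rw [← this]
  conv_lhs => rw [hwy]
  simp only [mul_assoc]

lemma six {α : Type*} [DecidableEq α] (p0 p1 q0 q1 r0 r1 : α)
    (hn : [p0, p1, q0, q1, r0, r1].Nodup) :
    (swap p0 q0 * swap p1 q1) * (swap p1 r0 * swap p0 r1) * (swap p0 q0 * swap p1 q1) *
      (swap p1 q0 * swap q1 r0) =
    swap q0 q1 * swap r0 r1 * swap p0 p1 * (swap p1 q0 * swap q1 r0) * swap r0 r1 *
      (swap p0 q0 * swap p1 q1) := by
  simp only [List.nodup_cons, List.mem_cons, List.not_mem_nil, not_or, or_false, List.nodup_nil,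
    not_false_eq_true, and_true] at hn
  obtain ⟨⟨a1, a2, a3, a4, a5⟩, ⟨b2, b3, b4, b5⟩, ⟨c3, c4, c5⟩, ⟨d4, d5⟩, e5⟩ := hn
  ext1 t
  simp only [Perm.mul_apply]
  by_cases t1 : t = p0
  · subst t1
    simp [swap_apply_def, a1, a2, a3, a4, a5, b2, b3, b4, b5, c3, c4, c5, d4, d5, e5,
      Ne.symm a1, Ne.symm a2, Ne.symm a3, Ne.symm a4, Ne.symm a5, Ne.symm b2, Ne.symm b3,
      Ne.symm b4, Ne.symm b5, Ne.symm c3, Ne.symm c4, Ne.symm c5, Ne.symm d4, Ne.symm d5,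
      Ne.symm e5]
  by_cases t2 : t = p1
  · subst t2
    simp [swap_apply_def, a1, a2, a3, a4, a5, b2, b3, b4, b5, c3, c4, c5, d4, d5, e5,
      Ne.symm a1, Ne.symm a2, Ne.symm a3, Ne.symm a4, Ne.symm a5, Ne.symm b2, Ne.symm b3,
      Ne.symm b4, Ne.symm b5, Ne.symm c3, Ne.symm c4, Ne.symm c5, Ne.symm d4, Ne.symm d5,
      Ne.symm e5]
  by_cases t3 : t = q0
  · subst t3
    simp [swap_apply_def, a1, a2, a3, a4, a5, b2, b3, b4, b5, c3, c4, c5, d4, d5, e5,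
      Ne.symm a1, Ne.symm a2, Ne.symm a3, Ne.symm a4, Ne.symm a5, Ne.symm b2, Ne.symm b3,
      Ne.symm b4, Ne.symm b5, Ne.symm c3, Ne.symm c4, Ne.symm c5, Ne.symm d4, Ne.symm d5,
      Ne.symm e5]
  by_cases t4 : t = q1
  · subst t4
    simp [swap_apply_def, a1, a2, a3, a4, a5, b2, b3, b4, b5, c3, c4, c5, d4, d5, e5,
      Ne.symm a1, Ne.symm a2, Ne.symm a3, Ne.symm a4, Ne.symm a5, Ne.symm b2, Ne.symm b3,
      Ne.symm b4, Ne.symm b5, Ne.symm c3, Ne.symm c4, Ne.symm c5, Ne.symm d4, Ne.symm d5,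
      Ne.symm e5]
  by_cases t5 : t = r0
  · subst t5
    simp [swap_apply_def, a1, a2, a3, a4, a5, b2, b3, b4, b5, c3, c4, c5, d4, d5, e5,
      Ne.symm a1, Ne.symm a2, Ne.symm a3, Ne.symm a4, Ne.symm a5, Ne.symm b2, Ne.symm b3,
      Ne.symm b4, Ne.symm b5, Ne.symm c3, Ne.symm c4, Ne.symm c5, Ne.symm d4, Ne.symm d5,
      Ne.symm e5]
  by_cases t6 : t = r1
  · subst t6
    simp [swap_apply_def, a1, a2, a3, a4, a5, b2, b3, b4, b5, c3, c4, c5, d4, d5, e5,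
      Ne.symm a1, Ne.symm a2, Ne.symm a3, Ne.symm a4, Ne.symm a5, Ne.symm b2, Ne.symm b3,
      Ne.symm b4, Ne.symm b5, Ne.symm c3, Ne.symm c4, Ne.symm c5, Ne.symm d4, Ne.symm d5,
      Ne.symm e5]
  simp [swap_apply_of_ne_of_ne, *]

lemma main_step (h : Sys φ) (U : Finset (Fin d)) (hU : 4 ≤ U.card)
    (IH : ∀ U' : Finset (Fin d), U'.card < U.card → ∀ w ∈ PP U', φ w = 0)
    (w : Perm (XX d)) (hw : w ∈ PP U) (p0 q0 r0 : XX d) (hp : p0.1 ∈ U) (hq : q0.1 ∈ U)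
    (hpq : p0.1 ≠ q0.1) (hpr : p0.1 ≠ r0.1) (hqr : q0.1 ≠ r0.1)
    (w1 : w p0 = p0) (w2 : w (bar p0) = q0) (w3 : w q0 = bar p0) (w4 : w (bar q0) = r0) :
    φ w = 0 := by
  have hr : r0.1 ∈ U := w4 ▸ PP_maps hw (bar q0) hq
  have n1 : ∀ {x y : XX d}, x.1 ≠ y.1 → x ≠ y := fun hxy e => hxy (by rw [e])
  have hn : [p0, bar p0, q0, bar q0, r0, bar r0].Nodup := by
    have := bar_ne p0
    have := bar_ne q0
    have := bar_ne r0
    have e1 := @n1 p0 q0 hpq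
    have e2 := @n1 p0 (bar q0) hpq
    have e3 := @n1 p0 r0 hpr
    have e4 := @n1 p0 (bar r0) hpr
    have f1 := @n1 (bar p0) q0 hpq
    have f2 := @n1 (bar p0) (bar q0) hpq
    have f3 := @n1 (bar p0) r0 hpr
    have f4 := @n1 (bar p0) (bar r0) hpr
    have g3 := @n1 q0 r0 hqr
    have g4 := @n1 q0 (bar r0) hqr
    have k3 := @n1 (bar q0) r0 hqr
    have k4 := @n1 (bar q0) (bar r0) hqr
    simp [*, Ne.symm, Ne.symm (bar_ne p0), Ne.symm (bar_ne q0), Ne.symm (bar_ne r0)]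
  set S := bsw p0 q0 with hS
  have hSe : S = swap p0 q0 * swap (bar p0) (bar q0) := by
    rw [hS, bsw, if_neg]; exact fun e => hpq (by rw [e]; rfl)
  set S2 := bsw (bar p0) r0 with hS2
  have hS2e : S2 = swap (bar p0) r0 * swap p0 (bar r0) := by
    rw [hS2, bsw, if_neg, bar_bar]; exact fun e => hpr (by rw [e]; simp)
  have A1 : φ (S * w) = - φ w := by
    rw [hSe]; exact h.lemA U (by omega) IH w hw p0 p0 q0 w1 w2 hpq
  have A2 : φ (S2 * w) = - φ w := by
    have := h.lemA U (by omega) IH w hw q0 (bar p0) r0 w3 w4 hpr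
    rw [bar_bar] at this
    rw [hS2e]; exact this
  have hSS : S * S = 1 := bsw_mul_self _ _
  have A3 : φ (w * S) = - φ w := by
    have := h.dual.lemA U (by omega) (fun U' h' w' hw' => IH U' h' _ (inv_mem hw')) w⁻¹
      (inv_mem hw) p0 p0 q0 (by rw [Perm.inv_eq_iff_eq, w1]) (by rw [Perm.inv_eq_iff_eq, w3]) hpq
    rw [← hSe] at this
    simp only [mul_inv_rev, inv_inv] at this
    rwa [inv_eq_of_mul_eq_one_left hSS] at this
  have B1 : φ (S2 * (S * w)) = φ w := by rw [h.lb _ _ _ _ A1, A2, neg_neg]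
  have B2 : φ (S * (S2 * (S * w))) = - φ w := by
    have : φ (S2 * (S * w)) = - φ (S * w) := by rw [B1, A1, neg_neg]
    rw [h.lb _ _ _ _ this, ← mul_assoc, hSS, one_mul]
  set z := swap (bar p0) q0 * swap (bar q0) r0 with hz
  set x := swap (bar q0) r0 * (swap (bar p0) q0 * w) with hx
  have hwz : w = z * x := by
    rw [hz, hx, mul_assoc, ← mul_assoc (swap (bar q0) r0) (swap (bar q0) r0), swap_mul_self,
      one_mul, ← mul_assoc, swap_mul_self, one_mul]
  have hid := six p0 (bar p0) q0 (bar q0) r0 (bar r0) hn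
  rw [← hSe, ← hS2e, ← hz, ← tau_swap, ← tau_swap, ← tau_swap] at hid
  have hxU : x ∈ PP U := mul_mem (swap_PP _ _ hq hr) (mul_mem (swap_PP _ _ hp hq) hw)
  simp only [List.nodup_cons, List.mem_cons, List.not_mem_nil, not_or, or_false, List.nodup_nil,
    not_false_eq_true, and_true] at hn
  obtain ⟨⟨a1, a2, a3, a4, a5⟩, ⟨b2, b3, b4, b5⟩, ⟨c3, c4, c5⟩, ⟨d4, d5⟩, e5⟩ := hn
  have x1 : x p0 = p0 := by
    rw [hx, Perm.mul_apply, Perm.mul_apply, w1, swap_apply_of_ne_of_ne a1 a2,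
      swap_apply_of_ne_of_ne a3 a4]
  have x2 : x (bar p0) = bar p0 := by
    rw [hx, Perm.mul_apply, Perm.mul_apply, w2, swap_apply_right,
      swap_apply_of_ne_of_ne b3 b4]
  have x3 : x q0 = q0 := by
    rw [hx, Perm.mul_apply, Perm.mul_apply, w3, swap_apply_left,
      swap_apply_of_ne_of_ne c3 c4]
  have x4 : x (bar q0) = bar q0 := by
    rw [hx, Perm.mul_apply, Perm.mul_apply, w4, swap_apply_of_ne_of_ne (Ne.symm b4) (Ne.symm c4),
      swap_apply_right]
  have hxE := PP_erase (PP_erase hxU p0 x1 x2) q0 x3 x4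
  have hzE : z ∈ PP ({p0.1, q0.1, r0.1} : Finset (Fin d)) :=
    mul_mem (swap_PP _ _ (by simp) (by simp)) (swap_PP _ _ (by simp) (by simp))
  have hC := h.C1 z x r0.1 _ _ hzE hxE (by
      intro i hi hi'
      simp only [Finset.mem_insert, Finset.mem_singleton, hi, or_false] at hi'
      rcases hi' with rfl | rfl <;> simp)
    (IH _ (lt_of_le_of_lt Finset.card_le_three (by omega)) _ hzE)
    (IH _ (lt_of_le_of_lt (Finset.card_erase_le) (Finset.card_erase_lt_of_mem hp)) _ hxE)
  have hSx : S * x = x * S := by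
    have e1 : x * swap p0 q0 = swap p0 q0 * x := by rw [mul_swap_eq_swap_mul, x1, x3]
    have e2 : x * swap (bar p0) (bar q0) = swap (bar p0) (bar q0) * x := by
      rw [mul_swap_eq_swap_mul, x2, x4]
    rw [hSe, ← mul_assoc x, e1, mul_assoc, mul_assoc, e2]
  have D1 : φ (z * tau r0.1 * x * S) = - φ w := by
    have e : φ (z * tau r0.1 * x) = - φ (w * S) := by rw [hC, ← hwz, A3, neg_neg]
    rw [h.rb _ _ _ _ e, mul_assoc, hSS, mul_one]
  have D2 : φ (S * (S2 * (S * w))) = φ w := by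
    have : S * (S2 * (S * w)) =
        tau q0.1 * (tau r0.1 * (tau p0.1 * (z * tau r0.1 * x * S))) := by
      calc S * (S2 * (S * w)) = (S * S2 * S * z) * x := by rw [hwz]; simp only [mul_assoc]
        _ = _ := by rw [hid]; simp only [mul_assoc, hSx]
    rw [this, h.lt, h.lt, h.lt, D1]; simp
  exact h.two (D2.symm.trans B2)

theorem all_zero (h : Sys φ) : ∀ (n : ℕ) (U : Finset (Fin d)), U.card = n → ∀ w ∈ PP U,
    φ w = 0 := by
  intro n
  induction n using Nat.strong_induction_on with
  | _ n ih =>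
  intro U hUn w hw
  have IH : ∀ U' : Finset (Fin d), U'.card < U.card → ∀ w ∈ PP U', φ w = 0 :=
    fun U' h' w hw => ih _ (hUn ▸ h') U' rfl w hw
  by_cases hU3 : U.card ≤ 3
  · exact h.base U w hU3 hw
  have hU : 4 ≤ U.card := by omega
  obtain ⟨p, hp⟩ : U.Nonempty := Finset.card_pos.1 (by omega)
  obtain ⟨p0, hp0⟩ : ∃ p0 : XX d, p0.1 = p := ⟨(p, 1), rfl⟩
  subst hp0
  suffices H : ∀ w ∈ PP U, w p0 = p0 → φ w = 0 by
    have h1 := H (bsw (w p0) p0 * w) (mul_mem (bsw_PP _ _ (PP_maps hw _ hp) hp) hw)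
      (by rw [Perm.mul_apply, bsw_left])
    have := h.lb0 (w p0) p0 _ h1
    rwa [← mul_assoc, bsw_mul_self, one_mul] at this
  clear hw w
  intro w hw w1
  by_cases hb : w (bar p0) = bar p0
  · exact IH _ (Finset.card_erase_lt_of_mem hp) w (PP_erase hw p0 w1 hb)
  obtain ⟨q0, w2⟩ : ∃ q0, w (bar p0) = q0 := ⟨_, rfl⟩
  have hq : q0.1 ∈ U := w2 ▸ PP_maps hw (bar p0) hp
  have hpq : p0.1 ≠ q0.1 := by
    intro e
    rcases eq_or_bar e.symm with e' | e'
    · rw [e'] at w2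
      exact bar_ne p0 (w.injective (w2.trans w1.symm))
    · exact hb (w2.trans e')
  obtain ⟨t, ht⟩ : ∃ t, w t = bar p0 := w.surjective _
  have htp : p0.1 ≠ t.1 := by
    intro e
    rcases eq_or_bar e.symm with e' | e'
    · rw [e', w1] at ht; exact bar_ne p0 ht.symm
    · rw [e'] at ht; exact hb ht
  have htU : t.1 ∈ U := by
    by_contra hh
    have := hw t hh
    rw [this] at ht
    exact htp (by rw [ht]; rfl)
  suffices H : ∀ w ∈ PP U, w p0 = p0 → w (bar p0) = q0 → w q0 = bar p0 → φ w = 0 by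
    have h1 := H (w * bsw q0 t) (mul_mem hw (bsw_PP _ _ hq htU))
      (by rw [Perm.mul_apply, bsw_other _ _ _ hpq htp, w1])
      (by rw [Perm.mul_apply, bsw_other _ _ (bar p0) hpq htp, w2])
      (by rw [Perm.mul_apply, bsw_left, ht])
    have := h.rb0 q0 t _ h1
    rwa [mul_assoc, bsw_mul_self, mul_one] at this
  clear ht htp htU t w2 hb w1 hw w
  intro w hw w1 w2 w3
  by_cases hg : w (bar q0) = bar q0
  · have hne : ∀ {x y : XX d}, x.1 ≠ y.1 → x ≠ y := fun hxy e => hxy (by rw [e])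
    have hx : swap (bar p0) q0 * w ∈ PP ((U.erase p0.1).erase q0.1) := by
      refine PP_erase (PP_erase (mul_mem (swap_PP (bar p0) q0 hp hq) hw) p0 ?_ ?_) q0 ?_ ?_
      · rw [Perm.mul_apply, w1, swap_apply_of_ne_of_ne (bar_ne p0).symm (hne hpq)]
      · rw [Perm.mul_apply, w2, swap_apply_right]
      · rw [Perm.mul_apply, w3, swap_apply_left]
      · rw [Perm.mul_apply, hg, swap_apply_of_ne_of_ne (hne (x := bar q0) (y := bar p0) (Ne.symm hpq)) (bar_ne q0)]
    have hs : swap (bar p0) q0 ∈ PP ({p0.1, q0.1} : Finset (Fin d)) :=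
      swap_PP _ _ (by simp) (by simp)
    have := h.C0 _ _ _ _ hs hx (by
        intro i hi
        simp only [Finset.mem_insert, Finset.mem_singleton] at hi
        rcases hi with rfl | rfl <;> simp)
      (IH _ (lt_of_le_of_lt Finset.card_le_two (by omega)) _ hs)
      (IH _ (lt_of_le_of_lt (Finset.card_erase_le) (Finset.card_erase_lt_of_mem hp)) _ hx)
    rwa [← mul_assoc, swap_mul_self, one_mul] at this
  obtain ⟨r0, w4⟩ : ∃ r0, w (bar q0) = r0 := ⟨_, rfl⟩
  refine h.main_step U hU IH w hw p0 q0 r0 hp hq hpq ?_ ?_ w1 w2 w3 w4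
  · intro e
    rcases eq_or_bar e.symm with e' | e'
    · rw [e', ← w1] at w4
      exact hpq (by rw [← w.injective w4]; rfl)
    · rw [e', ← w3] at w4
      exact bar_ne q0 (w.injective w4)
  · intro e
    rcases eq_or_bar e.symm with e' | e'
    · have h1 : w (bar q0) = w (bar p0) := by rw [w4, e', w2]
      have h2 := congrArg (fun t : XX d => t.1) (w.injective h1)
      exact hpq h2.symm
    · exact hg (w4.trans e')

theorem all (h : Sys φ) (w : Perm (XX d)) : φ w = 0 :=
  h.all_zero _ univ rfl w (fun _ hx => absurd (Finset.mem_univ _) hx)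
end Sys
end MR

namespace MR
open Equiv Finset

lemma ss_left_id {A : Type*} [Ring A] [IsSemisimpleRing A] (E : A) :
    ∃ c : A →₀ A, ∀ a b : A, (c.sum fun y x => x * (E * y)) * (a * (E * b)) = a * (E * b) ∧
      (a * (E * b)) * (c.sum fun y x => x * (E * y)) = a * (E * b) := by
  obtain ⟨f, hf, hI⟩ := IsSemisimpleRing.ideal_eq_span_idempotent
    (Ideal.span (Set.range fun b : A => E * b))
  have hfm : f ∈ Ideal.span (Set.range fun b : A => E * b) := by
    rw [hI]; exact Ideal.mem_span_singleton_self f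
  obtain ⟨c, hc⟩ := Finsupp.mem_span_range_iff_exists_finsupp.1 hfm
  simp only [smul_eq_mul] at hc
  have hgen : ∀ a b : A, a * (E * b) ∈ Ideal.span (Set.range fun b : A => E * b) :=
    fun a b => Ideal.mul_mem_left _ _ (Ideal.subset_span ⟨b, rfl⟩)
  have hts : ∀ x ∈ Ideal.span (Set.range fun b : A => E * b), ∀ z,
      x * z ∈ Ideal.span (Set.range fun b : A => E * b) := by
    intro x hx z
    induction hx using Submodule.span_induction with
    | mem x h =>
      obtain ⟨b, rfl⟩ := h
      simp only [mul_assoc]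
      exact Ideal.subset_span ⟨_, rfl⟩
    | zero => simp
    | add x y _ _ h1 h2 => rw [add_mul]; exact add_mem h1 h2
    | smul r x _ h => rw [smul_eq_mul, mul_assoc]; exact Ideal.mul_mem_left _ _ h
  have hr : ∀ x ∈ Ideal.span (Set.range fun b : A => E * b), x * f = x := by
    intro x hx
    rw [hI] at hx
    obtain ⟨r, rfl⟩ := Ideal.mem_span_singleton'.1 hx
    rw [mul_assoc, hf.eq]
  have hl : ∀ x ∈ Ideal.span (Set.range fun b : A => E * b), f * x = x := by
    intro x hx
    have hy : x - f * x ∈ Ideal.span (Set.range fun b : A => E * b) :=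
      sub_mem hx (Ideal.mul_mem_left _ _ hx)
    have hfy : f * (x - f * x) = 0 := by
      rw [mul_sub, ← mul_assoc, hf.eq, sub_self]
    set y := x - f * x with hyd
    have hIy : ∀ z ∈ Ideal.span (Set.range fun b : A => E * b), z * y = 0 := by
      intro z hz
      rw [← hr z hz, mul_assoc, hfy, mul_zero]
    obtain ⟨e, he, hye⟩ := IsSemisimpleRing.ideal_eq_span_idempotent (Ideal.span {y})
    obtain ⟨a, ha⟩ := Ideal.mem_span_singleton'.1 (hye ▸ Ideal.mem_span_singleton_self e : e ∈ Ideal.span {y})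
    obtain ⟨b, hb⟩ := Ideal.mem_span_singleton'.1 (hye ▸ Ideal.mem_span_singleton_self y : y ∈ Ideal.span {e})
    have he0 : e = 0 := by
      rw [← he.eq, ← ha, ← mul_assoc]
      apply hIy
      rw [mul_assoc]
      exact Ideal.mul_mem_left _ _ (hts _ hy _)
    have : y = 0 := by rw [← hb, he0, mul_zero]
    exact (sub_eq_zero.1 this).symm
  refine ⟨c, fun a b => ?_⟩
  rw [hc]
  exact ⟨hl _ (hgen a b), hr _ (hgen a b)⟩

theorem casimir {k A Z : Type*} [Field k] [Ring A] [Algebra k A] [IsSemisimpleRing A]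
    [AddCommGroup Z] [Module k Z] (L R : A →ₗ[k] Module.End k Z) (E : A) (c : k) (hc : c ≠ 0)
    (hE : E * E = c • E) (Θ : Z)
    (L1 : L 1 = 1) (R1 : R 1 = 1)
    (Lm : ∀ x y, L (x * y) = L x * L y) (Rm : ∀ x y, R (x * y) = R y * R x)
    (LR : ∀ x y z, L x (R y z) = R y (L x z))
    (LE : L E Θ = c • Θ)
    (H : ∀ a, L (E * a) Θ = R (a * E) Θ) :
    ∃ Ψ : Z, (∀ g, L g Ψ = R g Ψ) ∧ L E Ψ = Θ := by
  obtain ⟨s, hs⟩ := ss_left_id E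
  set f := s.sum fun y x => x * (E * y) with hf
  let B : A → A → Z := fun p q => L p (R q Θ)
  have B1 : ∀ p a q, B (p * (E * a)) q = B p (a * E * q) := by
    intro p a q
    simp only [B]
    rw [Lm, Module.End.mul_apply, LR, H, Rm (a * E) q, Module.End.mul_apply]
  have RE : R E Θ = c • Θ := by
    have := H 1
    rw [mul_one, one_mul] at this
    rw [← this, LE]
  have B2 : ∀ p q, B (p * E) q = c • B p q := by
    intro p q
    simp only [B]
    rw [Lm, Module.End.mul_apply, LR, LE, map_smul, map_smul]
  have B3 : ∀ p q, B p (E * q) = c • B p q := by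
    intro p q
    simp only [B]
    rw [Rm, Module.End.mul_apply, RE, map_smul, map_smul]
  have Bs1 : ∀ (p : A → A → A) q, B (s.sum p) q = s.sum fun y x => B (p y x) q := by
    intro p q
    simp only [B, Finsupp.sum, map_sum, LinearMap.sum_apply]
  have Bs2 : ∀ (p : A → A → A) q, B q (s.sum p) = s.sum fun y x => B q (p y x) := by
    intro p q
    simp only [B, Finsupp.sum, map_sum, LinearMap.sum_apply]
  have Bsm1 : ∀ p q (t : k), B (t • p) q = t • B p q := by
    intro p q t; simp [B]
  have Bsm2 : ∀ p q (t : k), B p (t • q) = t • B p q := by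
    intro p q t; simp [B]
  have B4 : ∀ p a q, B (p * (E * (a * E))) q = c • B p (a * (E * q)) := by
    intro p a q
    rw [B1, ← Bsm2, mul_assoc, mul_assoc, ← mul_assoc E E, hE]
    simp
  have cc : ∀ z w : Z, c • z = c • w → z = w := fun z w h => by
    simpa [smul_smul, hc] using congrArg (c⁻¹ • ·) h
  have key : ∀ g, (s.sum fun y x => B (g * x) y) = s.sum fun y x => B x (y * g * f) := by
    intro g
    have e1 : ∀ x y, c • B (g * x) y = s.sum fun y' x' => c • B x' (y' * g * (x * (E * y))) := by
      intro x y
      rw [← B2]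
      have := (hs (g * x) 1).1
      rw [mul_one] at this
      rw [← this, hf, Finsupp.sum_mul, Bs1]
      refine Finset.sum_congr rfl fun y' _ => ?_
      simp only
      rw [show s y' * (E * y') * (g * x * E) = s y' * (E * ((y' * g * x) * E)) by
        simp only [mul_assoc], B4]
      simp only [mul_assoc]
    apply cc
    simp only [Finsupp.sum, Finset.smul_sum] at e1 ⊢
    rw [Finset.sum_congr rfl fun y _ => e1 (s y) y, Finset.sum_comm]
    refine Finset.sum_congr rfl fun y' _ => ?_
    rw [hf, Finsupp.mul_sum, Bs2]
    simp only [Finsupp.sum, Finset.smul_sum]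
  refine ⟨s.sum fun y x => B x y, fun g => ?_, ?_⟩
  · have e1 : L g (s.sum fun y x => B x y) = s.sum fun y x => B (g * x) y := by
      simp only [B, Finsupp.sum, map_sum, Lm, Module.End.mul_apply]
    have e2 : R g (s.sum fun y x => B x y) = s.sum fun y x => B x (y * g) := by
      simp only [B, Finsupp.sum, map_sum, Rm, Module.End.mul_apply, LR]
    rw [e1, e2, key]
    refine Finset.sum_congr rfl fun y _ => cc _ _ ?_
    simp only
    rw [← B3, ← B3]
    have := (hs 1 (y * g)).2
    rw [one_mul] at this
    rw [← mul_assoc, this]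
  · have e1 : L E (s.sum fun y x => B x y) = s.sum fun y x => B (E * x) y := by
      simp only [B, Finsupp.sum, map_sum, Lm, Module.End.mul_apply]
    have e2 : (s.sum fun y x => B (E * x) y) = B 1 f := by
      rw [hf, Bs2]
      refine Finset.sum_congr rfl fun y _ => cc _ _ ?_
      simp only
      rw [← B2]
      have := B4 1 (s y) y
      rw [one_mul, ← mul_assoc] at this
      exact this
    rw [e1, e2]
    apply cc
    rw [← B3]
    have := (hs 1 1).2
    rw [mul_one, one_mul] at this
    rw [this, ← mul_one E, B3]
    simp [B, L1, R1]

lemma bsw_right {d : ℕ} (x y : XX d) : bsw x y y = x := by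
  have := congrArg (fun g : Perm (XX d) => g x) (bsw_mul_self x y)
  simpa [Perm.mul_apply, bsw_left] using this
lemma bsw_right' {d : ℕ} (x y : XX d) : bsw x y (bar y) = bar x := by
  have := congrArg (fun g : Perm (XX d) => g (bar x)) (bsw_mul_self x y)
  simpa [Perm.mul_apply, bsw_left'] using this

lemma bsw_bar {d : ℕ} (x y t : XX d) : bsw x y (bar t) = bar (bsw x y t) := by
  by_cases h1 : t.1 = x.1
  · rcases eq_or_bar h1 with rfl | rfl
    · rw [bsw_left, bsw_left']
    · rw [bar_bar, bsw_left, bsw_left', bar_bar]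
  by_cases h2 : t.1 = y.1
  · rcases eq_or_bar h2 with rfl | rfl
    · rw [bsw_right, bsw_right']
    · rw [bar_bar, bsw_right, bsw_right', bar_bar]
  rw [bsw_other x y t h1 h2, bsw_other x y (bar t) h1 h2]

lemma bsw_fst {d : ℕ} (x y t : XX d) : (bsw x y t).1 = swap x.1 y.1 t.1 := by
  by_cases h1 : t.1 = x.1
  · rcases eq_or_bar h1 with rfl | rfl
    · rw [bsw_left]; simp
    · rw [bsw_left']; simp
  by_cases h2 : t.1 = y.1
  · rcases eq_or_bar h2 with rfl | rfl
    · rw [bsw_right]; simp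
    · rw [bsw_right']; simp
  rw [bsw_other x y t h1 h2, swap_apply_of_ne_of_ne h1 h2]

lemma flp_one_of {d : ℕ} (f : Fin d → ℤˣ) (t : XX d) (h : f t.1 = 1) : flp f t = t := by
  ext <;> simp [h]
lemma flp_neg_of {d : ℕ} (f : Fin d → ℤˣ) (t : XX d) (h : f t.1 = -1) : flp f t = bar t := by
  ext <;> simp [h, bar]

lemma bsw_flp {d : ℕ} (x y : XX d) (f : Fin d → ℤˣ) :
    bsw x y * flp (f ∘ swap x.1 y.1) = flp f * bsw x y := by
  ext1 t
  rw [Perm.mul_apply, Perm.mul_apply]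
  rcases Int.units_eq_one_or (f (swap x.1 y.1 t.1)) with h | h
  · rw [flp_one_of _ t h, flp_one_of f _ (by rw [bsw_fst, h])]
  · rw [flp_neg_of _ t h, flp_neg_of f _ (by rw [bsw_fst, h]), bsw_bar]

section main
variable {d : ℕ} {k Z : Type*} [Field k] [CharZero k] [AddCommGroup Z] [Module k Z]

variable (k d) in
noncomputable def EE : MonoidAlgebra k (Perm (XX d)) :=
  ∑ f : Fin d → ℤˣ, ((sg f : ℤˣ) : ℤ) • MonoidAlgebra.of k _ (flp f)

lemma EE_flp (f : Fin d → ℤˣ) :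
    EE d k * MonoidAlgebra.of k _ (flp f) = ((sg f : ℤˣ) : ℤ) • EE d k := by
  unfold EE
  rw [Finset.sum_mul, Finset.smul_sum]
  refine Fintype.sum_equiv (Equiv.mulRight f) _ _ fun g => ?_
  rw [smul_mul_assoc, ← map_mul, ← map_mul, smul_smul, Equiv.coe_mulRight, sg_mul,
    Units.val_mul, mul_left_comm, ← Units.val_mul (sg f), Int.units_mul_self, Units.val_one, mul_one]

lemma flp_EE (f : Fin d → ℤˣ) :
    MonoidAlgebra.of k _ (flp f) * EE d k = ((sg f : ℤˣ) : ℤ) • EE d k := by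
  rw [← EE_flp]
  unfold EE
  rw [Finset.sum_mul, Finset.mul_sum]
  refine Finset.sum_congr rfl fun g _ => ?_
  rw [smul_mul_assoc, mul_smul_comm, ← map_mul, ← map_mul, ← map_mul, ← map_mul, mul_comm]

lemma EE_EE : EE d k * EE d k = (2 ^ d : k) • EE d k := by
  conv_lhs => arg 1; rw [EE]
  rw [Finset.sum_mul]
  have : ∀ f : Fin d → ℤˣ, ((sg f : ℤˣ) : ℤ) • MonoidAlgebra.of k _ (flp f) * EE d k = EE d k := by
    intro f
    rw [smul_mul_assoc, flp_EE, smul_smul, ← Units.val_mul, Int.units_mul_self, Units.val_one, one_smul]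
  have hu : Fintype.card ℤˣ = 2 := rfl
  rw [Finset.sum_congr rfl fun f _ => this f, Finset.sum_const, Finset.card_univ, Fintype.card_fun, hu, Fintype.card_fin,
    ← Nat.cast_smul_eq_nsmul k]
  push_cast
  rfl

lemma EE_bsw (x y : XX d) : EE d k * MonoidAlgebra.of k _ (bsw x y) =
    MonoidAlgebra.of k _ (bsw x y) * EE d k := by
  unfold EE
  rw [Finset.sum_mul, Finset.mul_sum]
  refine Fintype.sum_equiv (Equiv.arrowCongr (swap x.1 y.1) (Equiv.refl _)) _ _ fun f => ?_
  rw [smul_mul_assoc, mul_smul_comm, ← map_mul, ← map_mul]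
  have e1 : (Equiv.arrowCongr (swap x.1 y.1) (Equiv.refl ℤˣ)) f = f ∘ swap x.1 y.1 := by
    funext i; simp [Equiv.arrowCongr_apply]
  have e2 : sg (f ∘ swap x.1 y.1) = sg f := Equiv.prod_comp (swap x.1 y.1) f
  have e3 : f = (f ∘ swap x.1 y.1) ∘ swap x.1 y.1 := by funext i; simp
  rw [e1, e2, bsw_flp]

theorem absMain (Lg : Perm (XX d) →* Module.End k Z) (Rg : Perm (XX d) →* (Module.End k Z)ᵐᵒᵖ)
    (Θ : Z)
    (comm : ∀ g h z, Lg g ((Rg h).unop z) = (Rg h).unop (Lg g z))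
    (hb : ∀ x y, Lg (bsw x y) Θ = (Rg (bsw x y)).unop Θ)
    (hL : ∀ f, Lg (flp f) Θ = ((sg f : ℤˣ) : ℤ) • Θ)
    (hR : ∀ f, (Rg (flp f)).unop Θ = ((sg f : ℤˣ) : ℤ) • Θ)
    (base : ∀ (U : Finset (Fin d)) w, U.card ≤ 3 → w ∈ PP U →
      ∑ f : Fin d → ℤˣ, ((sg f : ℤˣ) : ℤ) • Lg (flp f * w) Θ =
      ∑ f : Fin d → ℤˣ, ((sg f : ℤˣ) : ℤ) • (Rg (w * flp f)).unop Θ) :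
    ∃ Ψ : Z, (∀ g, Lg g Ψ = (Rg g).unop Ψ) ∧
      ∑ f : Fin d → ℤˣ, ((sg f : ℤˣ) : ℤ) • Lg (flp f) Ψ = Θ := by
  let A := MonoidAlgebra k (Perm (XX d))
  let o : Perm (XX d) →* A := MonoidAlgebra.of k _
  let LA : A →ₐ[k] Module.End k Z := MonoidAlgebra.lift k _ _ Lg
  let RA : A →ₐ[k] (Module.End k Z)ᵐᵒᵖ := MonoidAlgebra.lift k _ _ Rg
  let L : A →ₗ[k] Module.End k Z := LA.toLinearMap
  let R : A →ₗ[k] Module.End k Z := (MulOpposite.opLinearEquiv k).symm.toLinearMap ∘ₗ RA.toLinearMap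
  have om : ∀ g h, o (g * h) = o g * o h := map_mul o
  have Lo : ∀ g, L (o g) = Lg g := fun g => MonoidAlgebra.lift_of _ _
  have Ro : ∀ g, R (o g) = (Rg g).unop := fun g =>
    congrArg MulOpposite.unop (MonoidAlgebra.lift_of Rg g)
  have L1 : L 1 = 1 := map_one LA
  have R1 : R 1 = 1 := congrArg MulOpposite.unop (map_one RA)
  have Lm : ∀ x y, L (x * y) = L x * L y := fun x y => map_mul LA x y
  have Rm : ∀ x y, R (x * y) = R y * R x := fun x y =>
    congrArg MulOpposite.unop (map_mul RA x y)
  have ind : ∀ {P : A → Prop} (h1 : ∀ g, P (o g)) (h2 : ∀ x y, P x → P y → P (x + y))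
      (h3 : ∀ (r : k) x, P x → P (r • x)), ∀ x, P x := by
    intro P h1 h2 h3 x
    exact MonoidAlgebra.induction_on x h1 h2 h3
  have LR : ∀ x y z, L x (R y z) = R y (L x z) := by
    intro x y z
    induction x using ind with
    | h1 g =>
      induction y using ind with
      | h1 h => rw [Lo, Ro, comm]
      | h2 x y h1 h2 => simp only [map_add, LinearMap.add_apply, h1, h2]
      | h3 r x h => simp only [map_smul, LinearMap.smul_apply, h]
    | h2 x y h1 h2 => simp only [map_add, LinearMap.add_apply, h1, h2]
    | h3 r x h => simp only [map_smul, LinearMap.smul_apply, h]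
  have LEw : ∀ w, L (EE d k * o w) Θ = ∑ f : Fin d → ℤˣ, ((sg f : ℤˣ) : ℤ) • Lg (flp f * w) Θ := by
    intro w
    rw [EE, Finset.sum_mul, map_sum, LinearMap.sum_apply]
    refine Finset.sum_congr rfl fun f _ => ?_
    rw [smul_mul_assoc, map_zsmul, ← Lo, om]
    rfl
  have REw : ∀ w, R (o w * EE d k) Θ =
      ∑ f : Fin d → ℤˣ, ((sg f : ℤˣ) : ℤ) • (Rg (w * flp f)).unop Θ := by
    intro w
    rw [EE, Finset.mul_sum, map_sum, LinearMap.sum_apply]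
    refine Finset.sum_congr rfl fun f _ => ?_
    rw [mul_smul_comm, map_zsmul, ← Ro, om]
    rfl
  have LEz : ∀ z, L (EE d k) z = ∑ f : Fin d → ℤˣ, ((sg f : ℤˣ) : ℤ) • Lg (flp f) z := by
    intro z
    rw [EE, map_sum, LinearMap.sum_apply]
    refine Finset.sum_congr rfl fun f _ => ?_
    rw [map_zsmul, ← Lo]
    rfl
  have hbA : ∀ x y, L (o (bsw x y)) Θ = R (o (bsw x y)) Θ := fun x y => by rw [Lo, Ro, hb]
  have hEb : ∀ x y, EE d k * o (bsw x y) = o (bsw x y) * EE d k := EE_bsw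
  have hEt : ∀ i : Fin d, EE d k * o (tau i) = - EE d k := by
    intro i
    rw [tau_eq]
    refine (EE_flp _).trans ?_
    rw [sg_sgl]; simp
  have htE : ∀ i : Fin d, o (tau i) * EE d k = - EE d k := by
    intro i
    rw [tau_eq]
    refine (flp_EE _).trans ?_
    rw [sg_sgl]; simp
  have hLt : ∀ i, L (o (tau i)) Θ = - Θ := by
    intro i; rw [Lo, tau_eq, hL, sg_sgl]; simp
  have hRt : ∀ i, R (o (tau i)) Θ = - Θ := by
    intro i; rw [Ro, tau_eq, hR, sg_sgl]; simp
  have plb : ∀ x y w, L (EE d k * o (bsw x y * w)) Θ - R (o (bsw x y * w) * EE d k) Θ =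
      L (o (bsw x y)) (L (EE d k * o w) Θ - R (o w * EE d k) Θ) := by
    intro x y w
    rw [om, ← mul_assoc, hEb, mul_assoc, mul_assoc, Lm, Rm (o (bsw x y)), Module.End.mul_apply,
      Module.End.mul_apply, ← hbA, ← LR, map_sub]
  have prb : ∀ x y w, L (EE d k * o (w * bsw x y)) Θ - R (o (w * bsw x y) * EE d k) Θ =
      R (o (bsw x y)) (L (EE d k * o w) Θ - R (o w * EE d k) Θ) := by
    intro x y w
    rw [om, ← mul_assoc, mul_assoc (o w), ← hEb, ← mul_assoc, Lm, Rm _ (o (bsw x y)),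
      Module.End.mul_apply, Module.End.mul_apply, hbA, LR, map_sub]
  have S : Sys (fun w : Perm (XX d) => L (EE d k * o w) Θ - R (o w * EE d k) Θ) := {
    tf := by
      intro n z hn hz
      rw [← Int.cast_smul_eq_zsmul k] at hz
      rcases smul_eq_zero.1 hz with h | h
      · exact absurd (Int.cast_eq_zero.1 h) hn
      · exact h
    lb := by
      intro x y w1 w2 h
      rw [plb, plb, h, map_neg]
    rb := by
      intro x y w1 w2 h
      rw [prb, prb, h, map_neg]
    lt := by
      intro i w
      rw [om, ← mul_assoc, hEt, mul_assoc, Rm (o (tau i)), Module.End.mul_apply, hRt]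
      simp only [neg_mul, map_neg, LinearMap.neg_apply]
      abel
    rt := by
      intro i w
      rw [om, ← mul_assoc, mul_assoc (o w), htE, Lm _ (o (tau i)), Module.End.mul_apply, hLt]
      rw [mul_neg]; simp only [map_neg, LinearMap.neg_apply]
      abel
    mul := by
      intro s x hs hx
      simp only [sub_eq_zero] at hs hx
      have e1 : ∑ f : Fin d → ℤˣ, ((sg f : ℤˣ) : ℤ) •
          (L (EE d k * o (s * flp f * x)) Θ - R (o (s * flp f * x) * EE d k) Θ) =
          L (EE d k * o s * (EE d k * o x)) Θ - R (o s * EE d k * (o x * EE d k)) Θ := by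
        have i1 : EE d k * o s * (EE d k * o x) =
            ∑ f : Fin d → ℤˣ, ((sg f : ℤˣ) : ℤ) • (EE d k * o (s * flp f * x)) := by
          conv_lhs => rw [mul_assoc, ← mul_assoc (o s)]; arg 2; rw [EE]
          rw [Finset.mul_sum, Finset.sum_mul, Finset.mul_sum]
          refine Finset.sum_congr rfl fun f _ => ?_
          rw [mul_smul_comm, smul_mul_assoc, mul_smul_comm, om, om]
        have i2 : o s * EE d k * (o x * EE d k) =
            ∑ f : Fin d → ℤˣ, ((sg f : ℤˣ) : ℤ) • (o (s * flp f * x) * EE d k) := by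
          conv_lhs => rw [← mul_assoc]; arg 1; rw [EE]
          rw [Finset.mul_sum, Finset.sum_mul, Finset.sum_mul]
          refine Finset.sum_congr rfl fun f _ => ?_
          rw [mul_smul_comm, smul_mul_assoc, smul_mul_assoc, om, om]
        rw [i1, i2]
        simp only [map_sum, LinearMap.sum_apply, map_zsmul, LinearMap.smul_apply, smul_sub,
          Finset.sum_sub_distrib]
      rw [e1, Lm, Module.End.mul_apply, hx, LR, hs, Rm (o s * EE d k), Module.End.mul_apply, sub_self]
    base := by
      intro U w h1 h2
      rw [LEw, REw, base U w h1 h2, sub_self] }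
  have H : ∀ a, L (EE d k * a) Θ = R (a * EE d k) Θ := by
    intro a
    induction a using ind with
    | h1 g => exact sub_eq_zero.1 (S.all g)
    | h2 x y h1 h2 => simp only [mul_add, add_mul, map_add, LinearMap.add_apply, h1, h2]
    | h3 r x h => simp only [mul_smul_comm, smul_mul_assoc, map_smul, LinearMap.smul_apply, h]
  have LE : L (EE d k) Θ = (2 ^ d : k) • Θ := by
    rw [LEz]
    have : ∀ f : Fin d → ℤˣ, ((sg f : ℤˣ) : ℤ) • Lg (flp f) Θ = Θ := by
      intro f
      rw [hL, smul_smul, ← Units.val_mul, Int.units_mul_self]; simp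
    simp_rw [this]
    have hu : Fintype.card ℤˣ = 2 := rfl
    rw [Finset.sum_const, Finset.card_univ, Fintype.card_fun, hu, Fintype.card_fin,
      ← Nat.cast_smul_eq_nsmul k]
    push_cast
    rfl
  haveI : NeZero (Nat.card (Perm (XX d)) : k) := ⟨by
    exact_mod_cast Nat.card_pos.ne'⟩
  obtain ⟨Ψ, p1, p2⟩ := casimir L R (EE d k) (2 ^ d) (pow_ne_zero _ two_ne_zero) EE_EE Θ L1 R1 Lm Rm LR LE H
  refine ⟨Ψ, fun g => ?_, ?_⟩
  · rw [← Lo, ← Ro]; exact p1 _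
  · rw [← LEz]; exact p2
end main
end MR

namespace MR
open Equiv Finset

section yv
variable {k : Type*} [Field k] {m n : ℕ}

def osg {N : ℕ} (a b : Fin N) : ℤ := if a < b then 1 else -1
lemma osg_swap {N : ℕ} {a b : Fin N} (h : a ≠ b) : osg b a = - osg a b := by
  unfold osg
  rcases lt_or_gt_of_ne h with h | h
  · rw [if_neg (not_lt.2 h.le), if_pos h]
  · rw [if_pos h, if_neg (not_lt.2 h.le), neg_neg]

def mkI {a b : Fin m} {c e : Fin n} (h : a ≠ b ∧ c ≠ e) : MinorIndex 2 m n :=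
  ⟨({a, b}, {c, e}), Finset.card_pair h.1, Finset.card_pair h.2⟩

variable (k) in
noncomputable def yv (a b : Fin m) (c e : Fin n) : MvPolynomial (MinorIndex 2 m n) k :=
  if h : a ≠ b ∧ c ≠ e then
    ((osg a b * osg c e : ℤ) : MvPolynomial (MinorIndex 2 m n) k) *
      X (mkI h)
  else 0

lemma yv_row (a b : Fin m) (c e : Fin n) : yv k b a c e = - yv k a b c e := by
  unfold yv
  by_cases h : a ≠ b ∧ c ≠ e
  · rw [dif_pos h, dif_pos ⟨h.1.symm, h.2⟩, osg_swap h.1]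
    have : mkI (⟨h.1.symm, h.2⟩ : b ≠ a ∧ c ≠ e) = mkI h :=
      Subtype.ext (Prod.ext (Finset.pair_comm _ _) rfl)
    rw [this]; push_cast; ring
  · rw [dif_neg h, dif_neg (fun h' => h ⟨h'.1.symm, h'.2⟩), neg_zero]

lemma yv_col (a b : Fin m) (c e : Fin n) : yv k a b e c = - yv k a b c e := by
  unfold yv
  by_cases h : a ≠ b ∧ c ≠ e
  · rw [dif_pos h, dif_pos ⟨h.1, h.2.symm⟩, osg_swap h.2]
    have : mkI (⟨h.1, h.2.symm⟩ : a ≠ b ∧ e ≠ c) = mkI h :=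
      Subtype.ext (Prod.ext rfl (Finset.pair_comm _ _))
    rw [this]; push_cast; ring
  · rw [dif_neg h, dif_neg (fun h' => h ⟨h'.1, h'.2.symm⟩), neg_zero]

lemma yv_deg (a b : Fin m) (c e : Fin n) : (yv k a b c e).totalDegree ≤ 1 := by
  unfold yv
  split_ifs with h
  · refine (totalDegree_mul _ _).trans ?_
    have : ((osg a b * osg c e : ℤ) : MvPolynomial (MinorIndex 2 m n) k) = C ((osg a b * osg c e : ℤ) : k) := by
      simp
    rw [this, totalDegree_C, totalDegree_X]
  · simp

lemma order_pair {N : ℕ} {a b : Fin N} (h : a < b) (hc : ({a, b} : Finset (Fin N)).card = 2) :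
    ((({a, b} : Finset (Fin N)).orderIsoOfFin hc 0 : Fin N) = a) ∧
    ((({a, b} : Finset (Fin N)).orderIsoOfFin hc 1 : Fin N) = b) := by
  have := Finset.orderEmbOfFin_unique hc (f := ![a, b]) (by intro x; fin_cases x <;> simp)
    (by intro x y hxy; fin_cases x <;> fin_cases y <;> simp_all)
  rw [Finset.coe_orderIsoOfFin_apply, Finset.coe_orderIsoOfFin_apply, ← this]
  simp

lemma X_eq_yv (p : MinorIndex 2 m n) : ∃ a b c e, a ≠ b ∧ c ≠ e ∧
    (X p : MvPolynomial (MinorIndex 2 m n) k) = yv k a b c e := by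
  obtain ⟨⟨A, B⟩, hA, hB⟩ := p
  simp only at hA hB
  have key : ∀ {N : ℕ} {A : Finset (Fin N)}, A.card = 2 → ∃ a b, a < b ∧ A = {a, b} := by
    intro N A hA
    obtain ⟨a, b, hab, rfl⟩ := Finset.card_eq_two.1 hA
    rcases lt_or_gt_of_ne hab with h | h
    · exact ⟨a, b, h, rfl⟩
    · exact ⟨b, a, h, Finset.pair_comm _ _⟩
  obtain ⟨a, b, hab, rfl⟩ := key hA
  obtain ⟨c, e, hce, rfl⟩ := key hB
  refine ⟨a, b, c, e, hab.ne, hce.ne, ?_⟩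
  unfold yv
  rw [dif_pos ⟨hab.ne, hce.ne⟩, osg, osg, if_pos hab, if_pos hce, mul_one, Int.cast_one, one_mul]
  rfl

lemma pi_yv (a b : Fin m) (c e : Fin n) : minorPresentation k 2 m n (yv k a b c e) =
    X (a, c) * X (b, e) - X (a, e) * X (b, c) := by
  wlog hab : a < b generalizing a b
  · rcases eq_or_lt_of_le (not_lt.1 hab) with h | h
    · subst h
      simp [yv]; ring
    · rw [yv_row, map_neg, this _ _ h]; ring
  wlog hce : c < e generalizing c e
  · rcases eq_or_lt_of_le (not_lt.1 hce) with h | h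
    · subst h
      simp [yv]
    · rw [yv_col, map_neg, this _ _ h]; ring
  have h : a ≠ b ∧ c ≠ e := ⟨hab.ne, hce.ne⟩
  have h2 : minorPresentation k 2 m n (X (mkI h)) =
      genericMinor k m n 2 {a, b} {c, e} (Finset.card_pair h.1) (Finset.card_pair h.2) :=
    aeval_X _ _
  unfold yv
  rw [dif_pos h, osg, osg, if_pos hab, if_pos hce, mul_one, Int.cast_one, one_mul, h2,
    genericMinor, Matrix.det_fin_two]
  simp only [Matrix.of_apply]
  rw [(order_pair hab _).1, (order_pair hab _).2, (order_pair hce _).1, (order_pair hce _).2]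
end yv

section theta
variable {k : Type*} [Field k] {m n d : ℕ}

variable (k) in
noncomputable def YZ (z : XX d) (u : XX d → Fin m) (v : XX d → Fin n) :
    MvPolynomial (MinorIndex 2 m n) k := yv k (u z) (u (bar z)) (v z) (v (bar z))

lemma YZ_bar (z : XX d) (u : XX d → Fin m) (v : XX d → Fin n) : YZ k (bar z) u v = YZ k z u v := by
  unfold YZ
  rw [bar_bar, yv_row, yv_col, neg_neg]

lemma YZ_fst {z z' : XX d} (h : z.1 = z'.1) (u : XX d → Fin m) (v : XX d → Fin n) :
    YZ k z u v = YZ k z' u v := by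
  rcases eq_or_bar h with rfl | rfl
  · rfl
  · exact YZ_bar _ _ _

variable (k) in
noncomputable def Y (i : Fin d) (u : XX d → Fin m) (v : XX d → Fin n) :
    MvPolynomial (MinorIndex 2 m n) k := YZ k (i, 1) u v

lemma Y_deg (i : Fin d) (u : XX d → Fin m) (v : XX d → Fin n) : (Y k i u v).totalDegree ≤ 1 :=
  yv_deg _ _ _ _

lemma Y_congr {i : Fin d} {u u' : XX d → Fin m} {v v' : XX d → Fin n}
    (hu : ∀ x : XX d, x.1 = i → u x = u' x) (hv : ∀ x : XX d, x.1 = i → v x = v' x) :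
    Y k i u v = Y k i u' v' := by
  unfold Y YZ
  rw [hu _ rfl, hu (bar (i, 1)) rfl, hv _ rfl, hv (bar (i, 1)) rfl]

lemma Y_flpu (i : Fin d) (f : Fin d → ℤˣ) (u : XX d → Fin m) (v : XX d → Fin n) :
    Y k i (u ∘ flp f) v = (((f i : ℤˣ) : ℤ) : MvPolynomial (MinorIndex 2 m n) k) * Y k i u v := by
  unfold Y YZ
  rcases Int.units_eq_one_or (f i) with h | h
  · rw [Function.comp_apply, Function.comp_apply, flp_one_of _ _ h, flp_one_of _ _ h, h]; simp
  · rw [Function.comp_apply, Function.comp_apply, flp_neg_of _ _ h, flp_neg_of _ (bar (i, 1)) h, h,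
      bar_bar, yv_row]; simp

lemma Y_flpv (i : Fin d) (f : Fin d → ℤˣ) (u : XX d → Fin m) (v : XX d → Fin n) :
    Y k i u (v ∘ flp f) = (((f i : ℤˣ) : ℤ) : MvPolynomial (MinorIndex 2 m n) k) * Y k i u v := by
  unfold Y YZ
  rcases Int.units_eq_one_or (f i) with h | h
  · rw [Function.comp_apply, Function.comp_apply, flp_one_of _ _ h, flp_one_of _ _ h, h]; simp
  · rw [Function.comp_apply, Function.comp_apply, flp_neg_of _ _ h, flp_neg_of _ (bar (i, 1)) h, h,
      bar_bar, yv_col]; simp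

variable (k) in
noncomputable def Th (u : XX d → Fin m) (v : XX d → Fin n) :
    MvPolynomial (MinorIndex 2 m n) k := ∏ i, Y k i u v

lemma Th_flpu (f : Fin d → ℤˣ) (u : XX d → Fin m) (v : XX d → Fin n) :
    Th k (u ∘ flp f) v = (((sg f : ℤˣ) : ℤ) : MvPolynomial (MinorIndex 2 m n) k) * Th k u v := by
  unfold Th sg
  simp only [Y_flpu, Finset.prod_mul_distrib]
  congr 1
  push_cast; rfl

lemma Th_flpv (f : Fin d → ℤˣ) (u : XX d → Fin m) (v : XX d → Fin n) :
    Th k u (v ∘ flp f) = (((sg f : ℤˣ) : ℤ) : MvPolynomial (MinorIndex 2 m n) k) * Th k u v := by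
  unfold Th sg
  simp only [Y_flpv, Finset.prod_mul_distrib]
  congr 1
  push_cast; rfl

lemma Th_bsw (x y : XX d) (u : XX d → Fin m) (v : XX d → Fin n) :
    Th k (u ∘ bsw x y) (v ∘ bsw x y) = Th k u v := by
  unfold Th
  refine Fintype.prod_equiv (swap x.1 y.1) _ _ fun i => ?_
  have : Y k i (u ∘ bsw x y) (v ∘ bsw x y) = YZ k (bsw x y (i, 1)) u v := by
    unfold Y YZ
    simp only [Function.comp_apply, bsw_bar]
  rw [this]
  exact YZ_fst (by rw [bsw_fst]) _ _

variable (k) in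
noncomputable def ph (u : XX d → Fin m) (v : XX d → Fin n) : MvPolynomial (Fin m × Fin n) k :=
  ∏ x, X (u x, v x)

lemma ph_perm (g : Perm (XX d)) (u : XX d → Fin m) (v : XX d → Fin n) :
    ph k (u ∘ g) (v ∘ g) = ph k u v :=
  Equiv.prod_comp g (fun x => (X (u x, v x) : MvPolynomial (Fin m × Fin n) k))

lemma prod_zu {M : Type*} [CommMonoid M] (F : ℤˣ → M) : ∏ e, F e = F 1 * F (-1) := by
  rw [show (univ : Finset ℤˣ) = {1, -1} from rfl, Finset.prod_pair (by decide)]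
lemma sum_zu {M : Type*} [AddCommMonoid M] (F : ℤˣ → M) : ∑ e, F e = F 1 + F (-1) := by
  rw [show (univ : Finset ℤˣ) = {1, -1} from rfl, Finset.sum_pair (by decide)]

lemma pi_Th (u : XX d → Fin m) (v : XX d → Fin n) : minorPresentation k 2 m n (Th k u v) =
    ∑ f : Fin d → ℤˣ, (((sg f : ℤˣ) : ℤ) : MvPolynomial (Fin m × Fin n) k) * ph k u (v ∘ flp f) := by
  have h1 : ∀ i : Fin d, minorPresentation k 2 m n (Y k i u v) =
      ∑ e : ℤˣ, (((e : ℤˣ) : ℤ) : MvPolynomial (Fin m × Fin n) k) *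
        (X (u (i, 1), v (i, e)) * X (u (i, -1), v (i, -e))) := by
    intro i
    unfold Y YZ
    rw [pi_yv, sum_zu]
    simp [bar]; ring
  unfold Th
  rw [map_prod]
  simp only [h1]
  rw [Finset.prod_univ_sum, Fintype.piFinset_univ]
  refine Finset.sum_congr rfl fun f _ => ?_
  rw [Finset.prod_mul_distrib]
  congr 1
  · unfold sg; push_cast; rfl
  · unfold ph
    rw [Fintype.prod_prod_type]
    refine Finset.prod_congr rfl fun i _ => ?_
    rw [prod_zu]
    simp

end theta
end MR

namespace MR
open Equiv Finset

section base
variable {k : Type*} [Field k] {m n d : ℕ}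

variable (k) in
noncomputable def DD (U : Finset (Fin d)) (w : Perm (XX d)) (u : XX d → Fin m) (v : XX d → Fin n) :
    MvPolynomial (MinorIndex 2 m n) k :=
  ∑ f : Fin d → ℤˣ, ((((sg f * ∏ i ∈ Uᶜ, f i : ℤˣ)) : ℤ) : MvPolynomial (MinorIndex 2 m n) k) *
    (∏ i ∈ U, Y k i (u ∘ flp f ∘ w) v - ∏ i ∈ U, Y k i u (v ∘ flp f ∘ (w⁻¹ : Perm (XX d))))

lemma prodY_deg (U : Finset (Fin d)) (u : XX d → Fin m) (v : XX d → Fin n) :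
    (∏ i ∈ U, Y k i u v).totalDegree ≤ U.card := by
  refine (totalDegree_finsetProd _ _).trans ?_
  refine (Finset.sum_le_sum fun i _ => Y_deg i u v).trans ?_
  simp

lemma DD_deg (U : Finset (Fin d)) (w : Perm (XX d)) (u : XX d → Fin m) (v : XX d → Fin n) :
    (DD k U w u v).totalDegree ≤ U.card := by
  unfold DD
  refine totalDegree_finsetSum_le fun f _ => ?_
  refine (totalDegree_mul _ _).trans ?_
  have : ∀ z : ℤ, ((z : ℤ) : MvPolynomial (MinorIndex 2 m n) k).totalDegree = 0 := by
    intro z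
    have : ((z : ℤ) : MvPolynomial (MinorIndex 2 m n) k) = C ((z : ℤ) : k) := by simp
    rw [this, totalDegree_C]
  rw [this, zero_add]
  exact (totalDegree_sub _ _).trans (max_le (prodY_deg _ _ _) (prodY_deg _ _ _))

lemma DD_congr {U : Finset (Fin d)} {w : Perm (XX d)} (hw : w ∈ PP U) {u u' : XX d → Fin m}
    {v v' : XX d → Fin n} (hu : ∀ x : XX d, x.1 ∈ U → u x = u' x)
    (hv : ∀ x : XX d, x.1 ∈ U → v x = v' x) : DD k U w u v = DD k U w u' v' := by
  unfold DD
  refine Finset.sum_congr rfl fun f _ => ?_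
  congr 2
  · refine Finset.prod_congr rfl fun i hi => Y_congr (fun x hx => ?_) (fun x hx => ?_)
    · exact hu _ (PP_maps hw x (hx ▸ hi))
    · exact hv _ (hx ▸ hi)
  · refine Finset.prod_congr rfl fun i hi => Y_congr (fun x hx => ?_) (fun x hx => ?_)
    · exact hu _ (hx ▸ hi)
    · exact hv _ (PP_maps (inv_mem hw) x (hx ▸ hi))

lemma DD_spec {U : Finset (Fin d)} {w : Perm (XX d)} (hw : w ∈ PP U) (u : XX d → Fin m)
    (v : XX d → Fin n) :
    ∑ f : Fin d → ℤˣ, (((sg f : ℤˣ) : ℤ) : MvPolynomial (MinorIndex 2 m n) k) *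
      (Th k (u ∘ flp f ∘ w) v - Th k u (v ∘ flp f ∘ (w⁻¹ : Perm (XX d)))) =
    (∏ i ∈ Uᶜ, Y k i u v) * DD k U w u v := by
  unfold DD
  rw [Finset.mul_sum]
  refine Finset.sum_congr rfl fun f _ => ?_
  have h1 : ∏ i ∈ Uᶜ, Y k i (u ∘ flp f ∘ w) v =
      (((∏ i ∈ Uᶜ, f i : ℤˣ) : ℤ) : MvPolynomial (MinorIndex 2 m n) k) * ∏ i ∈ Uᶜ, Y k i u v := by
    rw [Units.coe_prod, Int.cast_prod, ← Finset.prod_mul_distrib]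
    refine Finset.prod_congr rfl fun i hi => ?_
    rw [← Y_flpu]
    refine Y_congr (fun x hx => ?_) (fun x hx => rfl)
    simp only [Function.comp_apply]
    rw [hw x (by rw [hx]; exact Finset.mem_compl.1 hi)]
  have h2 : ∏ i ∈ Uᶜ, Y k i u (v ∘ flp f ∘ (w⁻¹ : Perm (XX d))) =
      (((∏ i ∈ Uᶜ, f i : ℤˣ) : ℤ) : MvPolynomial (MinorIndex 2 m n) k) * ∏ i ∈ Uᶜ, Y k i u v := by
    rw [Units.coe_prod, Int.cast_prod, ← Finset.prod_mul_distrib]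
    refine Finset.prod_congr rfl fun i hi => ?_
    rw [← Y_flpv]
    refine Y_congr (fun x hx => rfl) (fun x hx => ?_)
    simp only [Function.comp_apply]
    rw [(inv_mem hw : w⁻¹ ∈ PP U) x (by rw [hx]; exact Finset.mem_compl.1 hi)]
  unfold Th
  rw [← Finset.prod_mul_prod_compl U, h1, ← Finset.prod_mul_prod_compl U (fun i => Y k i u _), h2,
    Units.val_mul, Int.cast_mul]
  ring

lemma pi_spec (w : Perm (XX d)) (u : XX d → Fin m) (v : XX d → Fin n) :
    minorPresentation k 2 m n
     (∑ f : Fin d → ℤˣ, (((sg f : ℤˣ) : ℤ) : MvPolynomial (MinorIndex 2 m n) k) *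
      (Th k (u ∘ flp f ∘ w) v - Th k u (v ∘ flp f ∘ (w⁻¹ : Perm (XX d))))) = 0 := by
  simp only [map_sum, map_mul, map_sub, map_intCast, pi_Th, mul_sub, Finset.sum_sub_distrib,
    Finset.mul_sum]
  rw [sub_eq_zero, Finset.sum_comm]
  refine Finset.sum_congr rfl fun f _ => Finset.sum_congr rfl fun g _ => ?_
  rw [mul_left_comm]
  congr 2
  rw [← ph_perm (flp g * w) u]
  congr 1
  funext x
  simp only [Function.comp_apply, Perm.mul_apply]
  have : flp g (flp g (w x)) = w x := by
    rw [← Perm.mul_apply, ← map_mul]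
    have : g * g = 1 := by ext i; simp
    rw [this]; simp
  rw [this]; simp

lemma DD_mem {U : Finset (Fin d)} {w : Perm (XX d)} (hw : w ∈ PP U) (u : XX d → Fin m)
    (v : XX d → Fin n) {r0 r1 : Fin m} (hr : r0 ≠ r1) {c0 c1 : Fin n} (hc : c0 ≠ c1) :
    minorPresentation k 2 m n (DD k U w u v) = 0 := by
  let u' : XX d → Fin m := fun x => if x.1 ∈ U then u x else if x.2 = 1 then r0 else r1
  let v' : XX d → Fin n := fun x => if x.1 ∈ U then v x else if x.2 = 1 then c0 else c1
  rw [DD_congr hw (u' := u') (v' := v') (fun x hx => by simp [u', hx]) (fun x hx => by simp [v', hx])]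
  have h1 := pi_spec (k := k) w u' v'
  rw [DD_spec hw, map_mul] at h1
  refine (mul_eq_zero.1 h1).resolve_left ?_
  rw [map_prod]
  refine Finset.prod_ne_zero_iff.2 ?_
  intro i hi
  have hi' := Finset.mem_compl.1 hi
  have e : Y k i u' v' = yv k r0 r1 c0 c1 := by
    unfold Y YZ
    simp [u', v', hi', bar]
  rw [e, pi_yv]
  intro h0
  have := congrArg (MvPolynomial.eval (fun p : Fin m × Fin n =>
    if p = (r0, c0) ∨ p = (r1, c1) then (1 : k) else 0)) h0
  simp [hr, hc, hr.symm, hc.symm] at this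

end base

section fin
variable (k : Type*) [Field k] [CharZero k] (m n d : ℕ)

noncomputable def II : Ideal (MvPolynomial (MinorIndex 2 m n) k) :=
  Ideal.span {x | x ∈ minorRelations k 2 m n ∧ x.totalDegree ≤ 3}

abbrev QQ := MvPolynomial (MinorIndex 2 m n) k ⧸ II k m n

def Lh : Perm (XX d) →* Module.End k ((XX d → Fin m) → (XX d → Fin n) → QQ k m n) where
  toFun g := { toFun := fun F u v => F (u ∘ g) v, map_add' := fun _ _ => rfl,
               map_smul' := fun _ _ => rfl }
  map_one' := rfl
  map_mul' g h := rfl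

def Rh : Perm (XX d) →* (Module.End k ((XX d → Fin m) → (XX d → Fin n) → QQ k m n))ᵐᵒᵖ where
  toFun g := MulOpposite.op
    { toFun := fun F u v => F u (v ∘ (g⁻¹ : Perm (XX d)))
      map_add' := fun _ _ => rfl
      map_smul' := fun _ _ => rfl }
  map_one' := rfl
  map_mul' g h := by
    rw [← MulOpposite.op_mul]
    congr 1

lemma exists_Psi {r0 r1 : Fin m} (hr : r0 ≠ r1) {c0 c1 : Fin n} (hc : c0 ≠ c1) :
    ∃ Ψ : (XX d → Fin m) → (XX d → Fin n) → QQ k m n,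
      (∀ (g : Perm (XX d)) u v, Ψ (u ∘ g) (v ∘ g) = Ψ u v) ∧
      ∀ u v, ∑ f : Fin d → ℤˣ, ((sg f : ℤˣ) : ℤ) • Ψ u (v ∘ flp f) =
        Ideal.Quotient.mk (II k m n) (Th k u v) := by
  have zm : ∀ (z : ℤ) (x : MvPolynomial (MinorIndex 2 m n) k),
      z • Ideal.Quotient.mk (II k m n) x =
      Ideal.Quotient.mk (II k m n) ((z : MvPolynomial (MinorIndex 2 m n) k) * x) := by
    intro z x
    rw [map_mul, map_intCast, zsmul_eq_mul]
  have finv : ∀ f : Fin d → ℤˣ, (flp f)⁻¹ = flp f := by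
    intro f
    rw [← map_inv]
    congr 1
    ext i; simp
  obtain ⟨Ψ, h1, h2⟩ := absMain (Lh k m n d) (Rh k m n d)
    (fun u v => Ideal.Quotient.mk (II k m n) (Th k u v))
    (fun g h z => rfl)
    (by
      intro x y
      funext u v
      change Ideal.Quotient.mk (II k m n) (Th k (u ∘ bsw x y) v) =
        Ideal.Quotient.mk (II k m n) (Th k u (v ∘ ((bsw x y)⁻¹ : Perm (XX d))))
      rw [← Th_bsw x y u (v ∘ ((bsw x y)⁻¹ : Perm (XX d)))]
      congr 2
      funext t
      simp)
    (by
      intro f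
      funext u v
      change Ideal.Quotient.mk (II k m n) (Th k (u ∘ flp f) v) =
        ((sg f : ℤˣ) : ℤ) • Ideal.Quotient.mk (II k m n) (Th k u v)
      rw [Th_flpu, zm])
    (by
      intro f
      funext u v
      change Ideal.Quotient.mk (II k m n) (Th k u (v ∘ ((flp f)⁻¹ : Perm (XX d)))) =
        ((sg f : ℤˣ) : ℤ) • Ideal.Quotient.mk (II k m n) (Th k u v)
      rw [finv, Th_flpv, zm])
    (by
      intro U w hU hw
      funext u v
      simp only [Finset.sum_apply]
      change ∑ f : Fin d → ℤˣ, ((sg f : ℤˣ) : ℤ) •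
          Ideal.Quotient.mk (II k m n) (Th k (u ∘ flp f ∘ w) v) =
        ∑ f : Fin d → ℤˣ, ((sg f : ℤˣ) : ℤ) •
          Ideal.Quotient.mk (II k m n) (Th k u (v ∘ ((w * flp f)⁻¹ : Perm (XX d))))
      simp only [mul_inv_rev, finv, zm]
      rw [← map_sum, ← map_sum, ← sub_eq_zero, ← map_sub, ← Finset.sum_sub_distrib]
      simp only [← mul_sub]
      refine Ideal.Quotient.eq_zero_iff_mem.2 ?_
      have := DD_spec (k := k) hw u v
      refine (congrArg (· ∈ II k m n) this).mpr ?_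
      refine Ideal.mul_mem_left _ _ (Ideal.subset_span ⟨?_, (DD_deg _ _ _ _).trans hU⟩)
      exact DD_mem hw u v hr hc)
  have h3 : ∀ (g : Perm (XX d)) u v, Ψ (u ∘ g) v = Ψ u (v ∘ (g⁻¹ : Perm (XX d))) := by
    intro g u v
    exact congrFun (congrFun (h1 g) u) v
  refine ⟨Ψ, ?_, ?_⟩
  · intro g u v
    rw [h3]
    congr 1
    funext t; simp
  · intro u v
    have := congrFun (congrFun h2 u) v
    simp only [Finset.sum_apply] at this
    rw [← this]
    refine Finset.sum_congr rfl fun f _ => ?_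
    change _ = ((sg f : ℤˣ) : ℤ) • Ψ (u ∘ flp f) v
    rw [h3, finv]

variable {k m n d} in
noncomputable def mon {d : ℕ} (u : XX d → Fin m) (v : XX d → Fin n) : (Fin m × Fin n) →₀ ℕ :=
  ∑ x, Finsupp.single (u x, v x) 1

lemma ph_mon (u : XX d → Fin m) (v : XX d → Fin n) : ph k u v = monomial (mon u v) 1 := by
  unfold ph mon
  rw [monomial_sum_one]
  rfl

variable {m n} in
lemma mon_deg {d : ℕ} (u : XX d → Fin m) (v : XX d → Fin n) : (mon u v).degree = d * 2 := by
  unfold mon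
  rw [map_sum]
  simp only [Finsupp.degree_single]
  have hu : Fintype.card ℤˣ = 2 := rfl
  simp [hu]

lemma perm_of_count {X C : Type*} [Fintype X] [DecidableEq X] [DecidableEq C] (F F' : X → C)
    (h : ∀ c, (univ.filter fun x => F x = c).card = (univ.filter fun x => F' x = c).card) :
    ∃ g : Perm X, F' ∘ g = F := by
  have e : ∀ c, {x // F x = c} ≃ {x // F' x = c} := fun c =>
    Fintype.equivOfCardEq (by rw [Fintype.card_subtype, Fintype.card_subtype, h])
  refine ⟨(Equiv.sigmaFiberEquiv F).symm.trans ((Equiv.sigmaCongrRight e).trans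
    (Equiv.sigmaFiberEquiv F')), ?_⟩
  funext x
  simp only [Function.comp_apply, Equiv.trans_apply]
  exact (e (F x) ⟨x, rfl⟩).2

variable {m n} in
lemma mon_perm {d : ℕ} (u u' : XX d → Fin m) (v v' : XX d → Fin n) (h : mon u v = mon u' v') :
    ∃ g : Perm (XX d), u' ∘ g = u ∧ v' ∘ g = v := by
  have key : ∀ (u : XX d → Fin m) (v : XX d → Fin n) c,
      mon u v c = (univ.filter fun x => (u x, v x) = c).card := by
    intro u v c
    unfold mon
    rw [Finsupp.finset_sum_apply, Finset.card_filter]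
    refine Finset.sum_congr rfl fun x _ => ?_
    rw [Finsupp.single_apply]
  obtain ⟨g, hg⟩ := perm_of_count (fun x => (u x, v x)) (fun x => (u' x, v' x))
    (fun c => by rw [← key, ← key, h])
  exact ⟨g, funext fun x => congrArg Prod.fst (congrFun hg x),
    funext fun x => congrArg Prod.snd (congrFun hg x)⟩

theorem gen_main {r0 r1 : Fin m} (hr : r0 ≠ r1) {c0 c1 : Fin n} (hc : c0 ≠ c1) :
    GeneratedInDegreesLE (minorRelations k 2 m n) 3 := by
  unfold GeneratedInDegreesLE
  refine le_antisymm ?_ (Ideal.span_le.2 fun x hx => hx.1)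
  choose Ψ h1 h2 using fun d => exists_Psi k m n d hr hc
  classical
  let G : ((Fin m × Fin n) →₀ ℕ) → QQ k m n := fun s =>
    if h : ∃ (d : ℕ) (u : XX d → Fin m) (v : XX d → Fin n), mon u v = s then
      Ψ h.choose h.choose_spec.choose h.choose_spec.choose_spec.choose else 0
  have hinv : ∀ (d d' : ℕ) (u : XX d → Fin m) (v : XX d → Fin n) (u' : XX d' → Fin m)
      (v' : XX d' → Fin n), mon u v = mon u' v' → Ψ d u v = Ψ d' u' v' := by
    intro d d' u v u' v' h
    have hd : d = d' := by
      have := mon_deg u v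
      rw [h, mon_deg] at this
      omega
    subst hd
    obtain ⟨g, rfl, rfl⟩ := mon_perm u u' v v' h
    exact h1 _ _ _ _
  have hG : ∀ (d : ℕ) (u : XX d → Fin m) (v : XX d → Fin n), G (mon u v) = Ψ d u v := by
    intro d u v
    have h : ∃ (d' : ℕ) (u' : XX d' → Fin m) (v' : XX d' → Fin n), mon u' v' = mon u v :=
      ⟨d, u, v, rfl⟩
    simp only [G]
    rw [dif_pos h]
    exact hinv _ _ _ _ _ _ h.choose_spec.choose_spec.choose_spec
  let P : MvPolynomial (Fin m × Fin n) k →ₗ[k] QQ k m n := (basisMonomials (Fin m × Fin n) k).constr k G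
  have hP : ∀ (d : ℕ) (u : XX d → Fin m) (v : XX d → Fin n), P (ph k u v) = Ψ d u v := by
    intro d u v
    rw [ph_mon, ← hG]
    have := (basisMonomials (Fin m × Fin n) k).constr_basis k G (mon u v)
    rwa [coe_basisMonomials] at this
  have hT : ∀ (d : ℕ) (u : XX d → Fin m) (v : XX d → Fin n),
      P (minorPresentation k 2 m n (Th k u v)) = Ideal.Quotient.mk (II k m n) (Th k u v) := by
    intro d u v
    rw [pi_Th, map_sum, ← h2]
    refine Finset.sum_congr rfl fun f _ => ?_
    rw [← zsmul_eq_mul, map_zsmul, hP]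
  have hl : P ∘ₗ (minorPresentation k 2 m n).toLinearMap = (Ideal.Quotient.mkₐ k (II k m n)).toLinearMap := by
    refine (basisMonomials (MinorIndex 2 m n) k).ext fun s => ?_
    rw [coe_basisMonomials]
    beta_reduce
    choose a b c e hab hce hX using fun p => X_eq_yv (k := k) (m := m) (n := n) p
    have : ∃ (d : ℕ) (u : XX d → Fin m) (v : XX d → Fin n), monomial s (1 : k) = Th k u v := by
      let l := s.toMultiset.toList
      refine ⟨l.length, fun x => if x.2 = 1 then a (l.get x.1) else b (l.get x.1),
        fun x => if x.2 = 1 then c (l.get x.1) else e (l.get x.1), ?_⟩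
      have e1 : monomial s (1 : k) = (l.map X).prod := by
        rw [← Multiset.prod_coe, ← Multiset.map_coe, Multiset.coe_toList, Finsupp.toMultiset_map,
          Finsupp.prod_toMultiset, Finsupp.prod_mapDomain_index (by simp) (by intros; rw [pow_add]), monomial_eq]
        simp
      rw [e1, ← Fin.prod_univ_fun_getElem]
      unfold Th
      refine Finset.prod_congr rfl fun i _ => ?_
      rw [hX]
      unfold Y YZ
      simp [bar]
    obtain ⟨d, u, v, h⟩ := this
    rw [h]
    exact hT d u v
  intro x hx
  have h0 : minorPresentation k 2 m n x = 0 := hx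
  have := LinearMap.congr_fun hl x
  refine Ideal.Quotient.eq_zero_iff_mem.1 (this.symm.trans ?_)
  change P (minorPresentation k 2 m n x) = 0
  rw [h0, map_zero]
end fin
end MR

/-- The ideal of relations among the 2-minors of a generic `4 × n` matrix is generated
by its elements of degree at most 3. -/
theorem minorRelations_two_four_n (k : Type*) [Field k] [CharZero k]
    (n : ℕ) (hn : 4 ≤ n) :
    GeneratedInDegreesLE (minorRelations k 2 4 n) 3 := by
  exact MR.gen_main k 4 n (r0 := 0) (r1 := 1) (by decide) (c0 := ⟨0, by omega⟩)
    (c1 := ⟨1, by omega⟩) (by simp)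
end

section
/- Let k be a field of characteristic 0. Then J_2(5,5) is generated in degrees ≤ 3, and J_3(5,5) is generated in degrees ≤ 3: the ideals of relations among the 2-minors, respectively the 3-minors, of a generic 5×5 matrix are generated by their elements of degree at most 3. -/
open MvPolynomial

set_option linter.unusedSectionVars false
set_option linter.unusedSimpArgs false
section GroupAlg

variable {G : Type} [Group G]

/-- group element in the group algebra -/
noncomputable def go (g : G) : MonoidAlgebra ℚ G := MonoidAlgebra.of ℚ G g

theorem go_mul (g h : G) : go (g * h) = go g * go h := map_mul _ _ _

theorem go_one : go (1 : G) = 1 := map_one _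

theorem ga_induction {p : MonoidAlgebra ℚ G → Prop} (x : MonoidAlgebra ℚ G)
    (h1 : ∀ g, p (go g)) (h2 : ∀ x y, p x → p y → p (x + y)) (h3 : ∀ (r : ℚ) x, p x → p (r • x)) :
    p x := MonoidAlgebra.induction_on x h1 h2 h3

theorem ga_ext {V : Type*} [AddCommGroup V] [Module ℚ V] {f g : MonoidAlgebra ℚ G →ₗ[ℚ] V}
    (h : ∀ x, f (go x) = g (go x)) (x : MonoidAlgebra ℚ G) : f x = g x := by
  induction x using ga_induction with
  | h1 g => exact h g
  | h2 x y hx hy => rw [map_add, map_add, hx, hy]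
  | h3 r x hx => rw [map_smul, map_smul, hx]

/-- anti-automorphism -/
noncomputable def ginvHom : MonoidAlgebra ℚ G →ₐ[ℚ] (MonoidAlgebra ℚ G)ᵐᵒᵖ :=
  MonoidAlgebra.lift ℚ (MonoidAlgebra ℚ G)ᵐᵒᵖ G
    { toFun := fun g => MulOpposite.op (go g⁻¹)
      map_one' := by rw [inv_one, go_one]; rfl
      map_mul' := fun a b => by rw [mul_inv_rev, go_mul]; rfl }

/-- anti-automorphism, linear -/
noncomputable def ginv : MonoidAlgebra ℚ G →ₗ[ℚ] MonoidAlgebra ℚ G :=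
  (MulOpposite.opLinearEquiv ℚ).symm.toLinearMap ∘ₗ ginvHom.toLinearMap

theorem ginv_go (g : G) : ginv (go g) = go g⁻¹ := by
  simp only [ginv, ginvHom, LinearMap.comp_apply, AlgHom.toLinearMap_apply]
  rw [go, MonoidAlgebra.lift_of]
  rfl

theorem ginv_mul (x y : MonoidAlgebra ℚ G) : ginv (x * y) = ginv y * ginv x := by
  simp only [ginv, LinearMap.comp_apply, AlgHom.toLinearMap_apply, map_mul]
  rfl

theorem ginv_ginv (x : MonoidAlgebra ℚ G) : ginv (ginv x) = x := by
  induction x using ga_induction with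
  | h1 g => rw [ginv_go, ginv_go, inv_inv]
  | h2 x y hx hy => rw [map_add, map_add, hx, hy]
  | h3 r x hx => rw [map_smul, map_smul, hx]

variable [Fintype G]

/-- inner product -/
noncomputable def gip (a b : MonoidAlgebra ℚ G) : ℚ := ∑ g, a.coeff g * b.coeff g

theorem gip_add_left (a b c : MonoidAlgebra ℚ G) : gip (a + b) c = gip a c + gip b c := by
  simp [gip, add_mul, Finset.sum_add_distrib]

theorem gip_comm (a b : MonoidAlgebra ℚ G) : gip a b = gip b a := by
  simp [gip, mul_comm]

theorem gip_add_right (a b c : MonoidAlgebra ℚ G) : gip c (a + b) = gip c a + gip c b := by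
  rw [gip_comm, gip_add_left, gip_comm a, gip_comm b]

theorem gip_smul_left (r : ℚ) (b c : MonoidAlgebra ℚ G) : gip (r • b) c = r * gip b c := by
  simp [gip, mul_assoc, Finset.mul_sum]

theorem gip_smul_right (r : ℚ) (b c : MonoidAlgebra ℚ G) : gip c (r • b) = r * gip c b := by
  rw [gip_comm, gip_smul_left, gip_comm]

theorem gip_zero_right (a : MonoidAlgebra ℚ G) : gip a 0 = 0 := by simp [gip]

theorem gip_sum_right {ι : Type*} (s : Finset ι) (f : ι → MonoidAlgebra ℚ G) (a : MonoidAlgebra ℚ G) :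
    gip a (∑ i ∈ s, f i) = ∑ i ∈ s, gip a (f i) := by
  classical
  induction s using Finset.induction_on with
  | empty => simp [gip_zero_right]
  | insert i s hi ih => rw [Finset.sum_insert hi, Finset.sum_insert hi, gip_add_right, ih]

theorem gip_sum_left {ι : Type*} (s : Finset ι) (f : ι → MonoidAlgebra ℚ G) (a : MonoidAlgebra ℚ G) :
    gip (∑ i ∈ s, f i) a = ∑ i ∈ s, gip (f i) a := by
  rw [gip_comm, gip_sum_right]; simp [gip_comm]

theorem gip_self_nonneg (a : MonoidAlgebra ℚ G) : 0 ≤ gip a a :=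
  Finset.sum_nonneg fun _ _ => mul_self_nonneg _

theorem gip_self_eq_zero {a : MonoidAlgebra ℚ G} (h : gip a a = 0) : a = 0 := by
  have := (Finset.sum_eq_zero_iff_of_nonneg (fun g _ => mul_self_nonneg (a.coeff g))).1 h
  ext g
  simpa using this g (Finset.mem_univ g)

theorem gip_go (g : G) (a b : MonoidAlgebra ℚ G) : gip (go g * a) b = gip a (go g⁻¹ * b) := by
  simp only [gip, go, MonoidAlgebra.of_apply, MonoidAlgebra.coeff_single_mul_apply, one_mul, inv_inv]
  refine Fintype.sum_equiv (Equiv.mulLeft g⁻¹) _ _ fun h => ?_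
  simp

theorem gip_mul (x a b : MonoidAlgebra ℚ G) : gip (x * a) b = gip a (ginv x * b) := by
  induction x using ga_induction with
  | h1 g => rw [gip_go, ginv_go]
  | h2 x y hx hy => rw [add_mul, gip_add_left, hx, hy, map_add, add_mul, gip_add_right]
  | h3 r x hx => rw [smul_mul_assoc, gip_smul_left, hx, map_smul, smul_mul_assoc, gip_smul_right]

open Polynomial in
theorem lemmaL (s f : MonoidAlgebra ℚ G)
    (h : ∀ g : ℚ[X], s * (aeval s g * f) = 0 → aeval s g * f = 0) :
    ∃ g : ℚ[X], f = s * aeval s g * f := by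
  classical
  have hint : IsIntegral ℚ s := by
    have : Module.Finite ℚ (MonoidAlgebra ℚ G) := by infer_instance
    exact IsIntegral.of_finite ℚ s
  obtain ⟨q, hq, hqs⟩ := hint
  have hex : ∃ n, ∃ q : ℚ[X], q ≠ 0 ∧ aeval s q * f = 0 ∧ q.natDegree = n :=
    ⟨_, q, hq.ne_zero, by rw [Polynomial.aeval_def, hqs, zero_mul], rfl⟩
  obtain ⟨q, hq0, hqf, hqd⟩ := Nat.find_spec hex
  have hmin := fun m => @Nat.find_min _ _ hex m
  have key : aeval s q = s * aeval s q.divX + algebraMap ℚ _ (q.coeff 0) := by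
    conv_lhs => rw [← X_mul_divX_add q]
    rw [map_add, map_mul, Polynomial.aeval_X, Polynomial.aeval_C]
  have hc : q.coeff 0 ≠ 0 := by
    intro hc
    rw [key, hc, map_zero, add_zero, mul_assoc] at hqf
    have h2 := h _ hqf
    have hd : q.divX ≠ 0 := by
      intro hd
      apply hq0
      rw [← X_mul_divX_add q, hd, hc]; simp
    have hd2 : q.natDegree ≠ 0 := by
      intro h0
      apply hd
      rw [divX_eq_zero_iff]
      exact eq_C_of_natDegree_eq_zero h0
    refine hmin q.divX.natDegree ?_ ⟨q.divX, hd, h2, rfl⟩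
    rw [← hqd, natDegree_divX_eq_natDegree_tsub_one]
    omega
  refine ⟨Polynomial.C (-(q.coeff 0)⁻¹) * q.divX, ?_⟩
  rw [key, add_mul] at hqf
  have h3 : algebraMap ℚ (MonoidAlgebra ℚ G) (q.coeff 0) * f = -(s * aeval s q.divX * f) := by
    rw [eq_neg_iff_add_eq_zero, add_comm]; exact hqf
  rw [← Algebra.smul_def] at h3
  have h4 : f = (q.coeff 0)⁻¹ • (q.coeff 0 • f) := by rw [smul_smul, inv_mul_cancel₀ hc, one_smul]
  conv_lhs => rw [h4, h3]
  rw [map_mul, Polynomial.aeval_C, ← Algebra.smul_def, mul_smul_comm, smul_mul_assoc, neg_smul, smul_neg]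

theorem lemmaZ (e : MonoidAlgebra ℚ G) (he : ginv e = e) (c : ℚ) (hee : e * e = c • e) :
    ∃ h : MonoidAlgebra ℚ G, (∀ w : G, go w * h = h * go w) ∧
      e = (∑ w : G, go w * e * go w⁻¹) * h * e := by
  set z : MonoidAlgebra ℚ G := ∑ w : G, go w * e * go w⁻¹ with hz
  have hcen : ∀ u : G, go u * z = z * go u := by
    intro u
    rw [hz, Finset.mul_sum, Finset.sum_mul]
    refine Fintype.sum_equiv (Equiv.mulLeft u) _ _ fun w => ?_
    simp only [Equiv.coe_mulLeft, mul_inv_rev, go_mul, mul_assoc]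
    rw [← go_mul u⁻¹ u, inv_mul_cancel, go_one, mul_one]
  have hcz : ∀ x : MonoidAlgebra ℚ G, x * z = z * x := by
    intro x
    induction x using ga_induction with
    | h1 g => exact hcen g
    | h2 x y hx hy => rw [add_mul, mul_add, hx, hy]
    | h3 r x hx => rw [smul_mul_assoc, mul_smul_comm, hx]
  have inj : ∀ x : MonoidAlgebra ℚ G, z * (x * e) = 0 → x * e = 0 := by
    intro x hx
    set v := x * e with hv
    have h0 : ∑ w : G, gip (e * (go w⁻¹ * v)) (e * (go w⁻¹ * v)) = 0 := by
      have : gip v (z * v) = 0 := by rw [hx, gip_zero_right]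
      rw [hz, Finset.sum_mul, gip_sum_right] at this
      have h1 : ∀ w : G, gip (e * (go w⁻¹ * v)) (e * (go w⁻¹ * v)) =
          c * gip v (go w * e * go w⁻¹ * v) := by
        intro w
        rw [gip_mul, he, ← mul_assoc e e, hee, gip_go, inv_inv, smul_mul_assoc, mul_smul_comm,
          gip_smul_right]
        simp only [mul_assoc]
      simp only [h1, ← Finset.mul_sum, this, mul_zero]
    have h1 : ∀ w : G, e * (go w⁻¹ * v) = 0 := fun w =>
      gip_self_eq_zero ((Finset.sum_eq_zero_iff_of_nonneg (fun g _ => gip_self_nonneg _)).1 h0 w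
        (Finset.mem_univ _))
    have h2 : ∀ y : MonoidAlgebra ℚ G, e * (y * v) = 0 := by
      intro y
      induction y using ga_induction with
      | h1 g => simpa using h1 g⁻¹
      | h2 x y hx hy => rw [add_mul, mul_add, hx, hy, add_zero]
      | h3 r x hx => rw [smul_mul_assoc, mul_smul_comm, hx, smul_zero]
    apply gip_self_eq_zero
    have h3 : gip (x * e) v = 0 := by
      rw [gip_mul, ← mul_one e, gip_mul, he, h2, gip_zero_right]
    exact h3
  obtain ⟨g, hg⟩ := lemmaL z e fun g h => inj _ h
  refine ⟨Polynomial.aeval z g, fun w => ?_, hg⟩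
  have hsub : ∀ x : MonoidAlgebra ℚ G, Commute x (Polynomial.aeval z g) := by
    intro x
    have hx : z ∈ Subalgebra.centralizer ℚ {x} := by
      rw [Subalgebra.mem_centralizer_iff]
      intro y hy
      rw [hy, hcz]
    have hg2 : Polynomial.aeval z g ∈ Subalgebra.centralizer ℚ {x} :=
      Algebra.adjoin_le (Set.singleton_subset_iff.2 hx) (Polynomial.aeval_mem_adjoin_singleton ℚ z)
    exact (Subalgebra.mem_centralizer_iff ℚ).1 hg2 x rfl
  exact hsub _

end GroupAlg

section LemK

variable {P ι : Type} [Fintype P] [DecidableEq P] [DecidableEq ι]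

/-- block-preserving permutations -/
def Yg (b : P → ι) : Subgroup (Equiv.Perm P) where
  carrier := {σ | ∀ p, b (σ p) = b p}
  mul_mem' := fun {x y} hx hy p => by
    rw [Equiv.Perm.mul_apply, hx, hy]
  one_mem' := fun p => rfl
  inv_mem' := fun {x} hx p => by
    have := hx (x⁻¹ p)
    simpa using this.symm

theorem mem_Yg {b : P → ι} {σ : Equiv.Perm P} : σ ∈ Yg b ↔ ∀ p, b (σ p) = b p := Iff.rfl

instance (b : P → ι) : DecidablePred (· ∈ Yg b) := fun σ => decidable_of_iff _ mem_Yg.symm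

/-- symmetrizer -/
noncomputable def sy (b : P → ι) : MonoidAlgebra ℚ (Equiv.Perm P) :=
  ∑ σ ∈ Finset.univ.filter (· ∈ Yg b), go σ

/-- order -/
def syc (b : P → ι) : ℕ := (Finset.univ.filter (· ∈ Yg b)).card

theorem syc_pos (b : P → ι) : 0 < syc b :=
  Finset.card_pos.2 ⟨1, by simp [one_mem]⟩

theorem syc_ne (b : P → ι) : (syc b : ℚ) ≠ 0 := by
  exact_mod_cast (syc_pos b).ne'

theorem sy_left {b : P → ι} {τ : Equiv.Perm P} (h : τ ∈ Yg b) : go τ * sy b = sy b := by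
  rw [sy, Finset.mul_sum]
  refine Finset.sum_equiv (Equiv.mulLeft τ) (fun σ => ?_) (fun σ _ => ?_)
  · simp [Subgroup.mul_mem_cancel_left _ h]
  · rw [← go_mul]; rfl

theorem sy_right {b : P → ι} {τ : Equiv.Perm P} (h : τ ∈ Yg b) : sy b * go τ = sy b := by
  rw [sy, Finset.sum_mul]
  refine Finset.sum_equiv (Equiv.mulRight τ) (fun σ => ?_) (fun σ _ => ?_)
  · simp [Subgroup.mul_mem_cancel_right _ h]
  · rw [← go_mul]; rfl

theorem ginv_sy (b : P → ι) : ginv (sy b) = sy b := by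
  rw [sy, map_sum]
  refine Finset.sum_equiv (Equiv.inv _) (fun σ => ?_) (fun σ _ => ?_)
  · simp
  · rw [ginv_go]; rfl

theorem sy_mul_of_inv {b : P → ι} {v : MonoidAlgebra ℚ (Equiv.Perm P)}
    (h : ∀ τ ∈ Yg b, go τ * v = v) : sy b * v = (syc b : ℚ) • v := by
  rw [sy, Finset.sum_mul, Finset.sum_congr rfl (g := fun _ => v)]
  · rw [Finset.sum_const, syc, Nat.cast_smul_eq_nsmul]
  · intro σ hσ
    exact h _ (by simpa using hσ)

theorem sy_mul_sy (b : P → ι) : sy b * sy b = (syc b : ℚ) • sy b :=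
  sy_mul_of_inv fun _ h => sy_left h

open Equiv in
theorem K_inj (b : P → ι) (p1 : P) (i3 : ι) (hne : b p1 ≠ i3)
    (hcard : (Finset.univ.filter fun p => b p = b p1).card = (Finset.univ.filter fun p => b p = i3).card)
    (v : MonoidAlgebra ℚ (Perm P)) (hv : ∀ τ ∈ Yg (Function.update b p1 i3), go τ * v = v)
    (h0 : sy b * v = 0) : v = 0 := by
  set b' := Function.update b p1 i3 with hb'
  set F1 := Finset.univ.filter fun p => b p = b p1 with hF1
  set A := F1.erase p1 with hA
  set B := Finset.univ.filter fun p => b' p = i3 with hB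
  have hp1F : p1 ∈ F1 := by simp [hF1]
  have b'1 : b' p1 = i3 := by simp [hb']
  have b'2 : ∀ q, q ≠ p1 → b' q = b q := fun q hq => by simp [hb', hq]
  have hswapY : ∀ x y, b' x = b' y → swap x y ∈ Yg b' := by
    intro x y hxy q
    rcases eq_or_ne q x with rfl | h1
    · rw [swap_apply_left, hxy]
    rcases eq_or_ne q y with rfl | h2
    · rw [swap_apply_right, hxy]
    rw [swap_apply_of_ne_of_ne h1 h2]
  have hswapYb : ∀ x y, b x = b y → swap x y ∈ Yg b := by
    intro x y hxy q
    rcases eq_or_ne q x with rfl | h1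
    · rw [swap_apply_left, hxy]
    rcases eq_or_ne q y with rfl | h2
    · rw [swap_apply_right, hxy]
    rw [swap_apply_of_ne_of_ne h1 h2]
  have hfix : ∀ σ ∈ Yg b, σ p1 = p1 → σ ∈ Yg b' := by
    intro σ hσ hσ1 q
    rcases eq_or_ne q p1 with rfl | hq
    · rw [hσ1]
    · have : σ q ≠ p1 := fun h => hq (σ.injective (h.trans hσ1.symm))
      rw [b'2 _ this, b'2 _ hq, hσ]
  -- step 1
  have hE : ∑ a ∈ F1, go (swap a p1) * v = 0 := by
    have h1 : ∀ σ ∈ Yg b, go σ * v = go (swap (σ p1) p1) * v := by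
      intro σ hσ
      have h2 : swap (σ p1) p1 * σ ∈ Yg b' := by
        apply hfix
        · exact mul_mem (hswapYb _ _ (hσ p1)) hσ
        · simp
      have h3 := hv _ h2
      conv_rhs => rw [← h3]
      rw [go_mul, ← mul_assoc, ← mul_assoc, ← go_mul, swap_mul_self, go_one, one_mul]
    have h2 : sy b * v = ∑ a ∈ F1, ∑ σ ∈ (Finset.univ.filter (· ∈ Yg b)).filter (fun σ : Perm P => σ p1 = a),
        go σ * v := by
      rw [sy, Finset.sum_mul, Finset.sum_fiberwise_of_maps_to]
      intro σ hσ
      simp only [Finset.mem_filter, Finset.mem_univ, true_and, hF1] at hσ ⊢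
      exact hσ p1
    set c := ((Finset.univ.filter (· ∈ Yg b)).filter (fun σ : Perm P => σ p1 = p1)).card with hc
    have h3 : ∀ a ∈ F1, ((Finset.univ.filter (· ∈ Yg b)).filter (fun σ : Perm P => σ p1 = a)).card = c := by
      intro a ha
      have haY : swap a p1 ∈ Yg b := hswapYb _ _ (by simpa [hF1] using ha)
      refine Finset.card_equiv (Equiv.mulLeft (swap a p1)) fun σ => ?_
      simp only [Finset.mem_filter, Finset.mem_univ, true_and, coe_mulLeft,
        Subgroup.mul_mem_cancel_left _ haY, Perm.mul_apply]
      refine and_congr_right fun _ => ?_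
      rw [swap_apply_eq_iff, swap_apply_right]
    have h4 : sy b * v = (c : ℚ) • ∑ a ∈ F1, go (swap a p1) * v := by
      rw [h2, Finset.smul_sum]
      refine Finset.sum_congr rfl fun a ha => ?_
      rw [← h3 a ha, Nat.cast_smul_eq_nsmul, ← Finset.sum_const]
      refine Finset.sum_congr rfl fun σ hσ => ?_
      simp only [Finset.mem_filter, Finset.mem_univ, true_and] at hσ
      rw [h1 σ hσ.1, hσ.2]
    have hcpos : (c : ℚ) ≠ 0 := by
      have : 0 < c := Finset.card_pos.2 ⟨1, by simp [one_mem]⟩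
      exact_mod_cast this.ne'
    rw [h4] at h0
    exact (smul_eq_zero.1 h0).resolve_left hcpos
  have hE2 : v + ∑ a ∈ A, go (swap a p1) * v = 0 := by
    rw [← Finset.add_sum_erase _ _ hp1F] at hE
    rw [← hE, swap_self]
    congr 1
    exact (one_mul v).symm.trans (by rw [← go_one]; rfl)
  have hAB : ∀ a ∈ A, ∀ q ∈ B, a ≠ q ∧ a ≠ p1 := by
    intro a ha q hq
    have ha1 : a ≠ p1 := Finset.ne_of_mem_erase ha
    have ha2 : b a = b p1 := by simpa [hF1] using Finset.mem_of_mem_erase ha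
    refine ⟨?_, ha1⟩
    rintro rfl
    have : b' a = i3 := by simpa [hB] using hq
    rw [b'2 _ ha1, ha2] at this
    exact hne this
  have hBi : ∀ q ∈ B, b' q = i3 := fun q hq => by simpa [hB] using hq
  have hE3 : ∀ q ∈ B, v + ∑ a ∈ A, go (swap a q) * v = 0 := by
    intro q hq
    have hY : swap q p1 ∈ Yg b' := hswapY _ _ ((hBi q hq).trans b'1.symm)
    have h1 : go (swap q p1) * (v + ∑ a ∈ A, go (swap a p1) * v) = 0 := by rw [hE2, mul_zero]
    rw [mul_add, hv _ hY, Finset.mul_sum] at h1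
    rw [← h1]
    congr 1
    refine Finset.sum_congr rfl fun a ha => ?_
    obtain ⟨h2, h3⟩ := hAB a ha q hq
    have h4 : swap a q = swap q p1 * swap a p1 * swap q p1 := by
      have := Equiv.swap_apply_apply (swap q p1) a p1
      rw [swap_apply_of_ne_of_ne h2 h3, swap_apply_right, swap_inv] at this
      exact this
    rw [h4, go_mul, go_mul, mul_assoc, mul_assoc, hv _ hY]
  set Q : P → MonoidAlgebra ℚ (Perm P) := fun a => v + ∑ q ∈ B, go (swap a q) * v with hQ
  have hQinv : ∀ a ∈ A, ∀ q ∈ B, go (swap a q) * Q a = Q a := by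
    intro a ha q hq
    simp only [hQ]
    rw [← Finset.add_sum_erase _ _ hq, mul_add, mul_add, ← mul_assoc, ← go_mul, swap_mul_self, go_one,
      one_mul, ← add_assoc, ← add_assoc, add_comm v]
    congr 1
    rw [Finset.mul_sum]
    refine Finset.sum_congr rfl fun q' hq' => ?_
    have hqq : q' ≠ q := Finset.ne_of_mem_erase hq'
    have hq'B := Finset.mem_of_mem_erase hq'
    have h1 : swap a q * swap a q' = swap a q' * swap q q' := by
      have h5 := Equiv.swap_apply_apply (swap a q') q q'
      rw [swap_apply_of_ne_of_ne (hAB a ha q hq).1.symm hqq.symm, swap_apply_right, swap_inv] at h5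
      rw [swap_comm a q, h5, mul_assoc, swap_mul_self, mul_one]
    rw [← mul_assoc, ← go_mul, h1, go_mul, mul_assoc, hv _ (hswapY _ _ ((hBi q hq).trans (hBi q' hq'B).symm))]
  have hpos : ∀ a ∈ A, 0 ≤ gip v (Q a) := by
    intro a ha
    have h1 : gip (Q a) (Q a) = (1 + (B.card : ℚ)) * gip v (Q a) := by
      conv_lhs => rw [hQ]
      simp only []
      rw [gip_add_left, gip_sum_left, Finset.sum_congr rfl (g := fun _ => gip v (Q a))]
      · rw [Finset.sum_const, nsmul_eq_mul]; ring
      · intro q hq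
        have := hQinv a ha q hq
        rw [gip_go, swap_inv, this]
    have h2 := gip_self_nonneg (Q a)
    rw [h1] at h2
    have h3 : (0 : ℚ) < 1 + B.card := by positivity
    exact nonneg_of_mul_nonneg_right h2 h3
  have hs1 : 0 ≤ (A.card : ℚ) * gip v v + ∑ a ∈ A, ∑ q ∈ B, gip v (go (swap a q) * v) := by
    have := Finset.sum_nonneg hpos
    simp only [hQ, gip_add_right, gip_sum_right, Finset.sum_add_distrib, Finset.sum_const,
      nsmul_eq_mul] at this
    exact this
  have hs2 : (B.card : ℚ) * gip v v + ∑ a ∈ A, ∑ q ∈ B, gip v (go (swap a q) * v) = 0 := by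
    have : ∑ q ∈ B, gip v (v + ∑ a ∈ A, go (swap a q) * v) = 0 :=
      Finset.sum_eq_zero fun q hq => by rw [hE3 q hq, gip_zero_right]
    simp only [gip_add_right, gip_sum_right, Finset.sum_add_distrib, Finset.sum_const,
      nsmul_eq_mul] at this
    rw [Finset.sum_comm]
    exact this
  have hlt : A.card < B.card := by
    have h1 : A.card < F1.card := Finset.card_erase_lt_of_mem hp1F
    refine h1.trans_le ?_
    rw [hcard]
    refine Finset.card_le_card fun q hq => ?_
    have hq2 : b q = i3 := by simpa using hq
    have : q ≠ p1 := by rintro rfl; exact hne hq2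
    simp [hB, b'2 q this, hq2]
  apply gip_self_eq_zero
  have h5 := gip_self_nonneg v
  have h6 : (A.card : ℚ) < B.card := by exact_mod_cast hlt
  nlinarith

theorem lemmaK (b : P → ι) (p1 : P) (i3 : ι) (hne : b p1 ≠ i3)
    (hcard : (Finset.univ.filter fun p => b p = b p1).card = (Finset.univ.filter fun p => b p = i3).card) :
    ∃ y ∈ Algebra.adjoin ℚ ({sy b, sy (Function.update b p1 i3)} : Set (MonoidAlgebra ℚ (Equiv.Perm P))),
      sy (Function.update b p1 i3) = sy (Function.update b p1 i3) * sy b * y := by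
  set b' := Function.update b p1 i3 with hb'
  set e := sy b
  set f := sy b'
  obtain ⟨g, hg⟩ := lemmaL (f * e * f) f (by
    intro g hg
    set s := f * e * f
    -- commute
    have hcm : ∀ n : ℕ, ∀ τ ∈ Yg b', go τ * (s ^ n * f) = s ^ n * f := by
      intro n τ hτ
      cases n with
      | zero => rw [pow_zero, one_mul]; exact sy_left hτ
      | succ n =>
        have : go τ * s = s := by
          simp only [s, ← mul_assoc]
          rw [sy_left hτ]
        rw [pow_succ', mul_assoc, ← mul_assoc, this]
    set v := Polynomial.aeval s g * f with hv
    have hinv : ∀ τ ∈ Yg b', go τ * v = v := by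
      intro τ hτ
      rw [hv, Polynomial.aeval_eq_sum_range, Finset.sum_mul, Finset.mul_sum]
      refine Finset.sum_congr rfl fun i _ => ?_
      rw [smul_mul_assoc, mul_smul_comm, hcm i τ hτ]
    apply K_inj b p1 i3 hne hcard v hinv
    have hfv : f * v = (syc b' : ℚ) • v := sy_mul_of_inv hinv
    have h1 : f * (e * v) = 0 := by
      have h2 : s * v = (syc b' : ℚ) • (f * (e * v)) := by
        simp only [s, mul_assoc]
        rw [hfv, mul_smul_comm, mul_smul_comm]
      rw [hg] at h2
      exact (smul_eq_zero.1 h2.symm).resolve_left (syc_ne b')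
    apply gip_self_eq_zero
    have h3 : gip v (e * v) = 0 := by
      have h4 : gip (f * v) (e * v) = 0 := by
        rw [gip_mul, ginv_sy, h1, gip_zero_right]
      rw [hfv, gip_smul_left] at h4
      exact (mul_eq_zero.1 h4).resolve_left (syc_ne b')
    rw [gip_mul, ginv_sy, ← mul_assoc, sy_mul_sy, smul_mul_assoc, gip_smul_right, h3, mul_zero])
  refine ⟨f * Polynomial.aeval (f * e * f) g * f, ?_, ?_⟩
  · have he : e ∈ Algebra.adjoin ℚ {e, f} := Algebra.subset_adjoin (by simp)
    have hf : f ∈ Algebra.adjoin ℚ {e, f} := Algebra.subset_adjoin (by simp)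
    refine mul_mem (mul_mem hf ?_) hf
    exact Algebra.adjoin_le (Set.singleton_subset_iff.2 (mul_mem (mul_mem hf he) hf))
      (Polynomial.aeval_mem_adjoin_singleton ℚ (f * e * f))
  · conv_lhs => rw [hg]
    simp only [mul_assoc]

end LemK


section Gen2
open Equiv Equiv.Perm

variable {P ι : Type} [Fintype P] [DecidableEq P] [DecidableEq ι]

theorem pinv1 {Q : Type} (σ : Perm Q) (q : Q) : σ (σ⁻¹ q) = q := Equiv.apply_symm_apply σ q

theorem pinv2 {Q : Type} (σ : Perm Q) (q : Q) : σ⁻¹ (σ q) = q := Equiv.symm_apply_apply σ q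

/-- permutations preserving the blocks outside of B -/
def SB (b : P → ι) (B : Finset ι) : Submonoid (Perm P) where
  carrier := {w | ∀ p, b p ∉ B → b (w p) = b p}
  mul_mem' := fun {x y} hx hy p hp => by
    have h1 := hy p hp
    rw [Perm.mul_apply, hx _ (by rwa [h1]), h1]
  one_mem' := fun _ _ => rfl

theorem mem_SB {b : P → ι} {B : Finset ι} {w : Perm P} : w ∈ SB b B ↔ ∀ p, b p ∉ B → b (w p) = b p :=
  Iff.rfl

theorem SB_mono {b : P → ι} {B C : Finset ι} (h : B ⊆ C) : SB b B ≤ SB b C :=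
  fun _ hw p hp => hw p fun h' => hp (h h')

theorem Yg_SB {b : P → ι} (B : Finset ι) {w : Perm P} (h : w ∈ Yg b) : w ∈ SB b B := fun p _ => h p

theorem swap_mem_Yg {b : P → ι} {x y : P} (hxy : b x = b y) : swap x y ∈ Yg b := by
  intro q
  rcases eq_or_ne q x with rfl | h1
  · rw [swap_apply_left, hxy]
  rcases eq_or_ne q y with rfl | h2
  · rw [swap_apply_right, hxy]
  rw [swap_apply_of_ne_of_ne h1 h2]

/-- points changing block -/
def offs (b : P → ι) (w : Perm P) : Finset P := Finset.univ.filter fun p => b (w p) ≠ b p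

theorem mem_offs {b : P → ι} {w : Perm P} {p : P} : p ∈ offs b w ↔ b (w p) ≠ b p := by simp [offs]

theorem offs_subset (b : P → ι) (w : Perm P) : offs b w ⊆ w.support := by
  intro p hp
  rw [mem_offs] at hp
  rw [mem_support]
  exact fun h => hp (by rw [h])

theorem offs_mul_right {b : P → ι} {w σ : Perm P} (h : σ ∈ Yg b) :
    (offs b (w * σ)).card = (offs b w).card := by
  refine Finset.card_equiv σ fun p => ?_
  rw [mem_offs, mem_offs, Perm.mul_apply, h p]

theorem offs_mul_left {b : P → ι} {w σ : Perm P} (h : σ ∈ Yg b) :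
    offs b (σ * w) = offs b w := by
  ext p
  rw [mem_offs, mem_offs, Perm.mul_apply, h]

theorem extend_Yg (b : P → ι) (φ : P → P) (hb : ∀ p, b (φ p) = b p) (S : Finset P)
    (hinj : Set.InjOn φ S) : ∃ τ ∈ Yg b, ∀ p ∈ S, τ p = φ p := by
  induction S using Finset.induction_on with
  | empty => exact ⟨1, one_mem _, by simp⟩
  | insert p S hp ih =>
    obtain ⟨τ, hτ, h⟩ := ih (hinj.mono (by simp))
    refine ⟨swap (τ p) (φ p) * τ, mul_mem (swap_mem_Yg (by rw [hτ, hb])) hτ, ?_⟩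
    intro q hq
    rw [Finset.mem_insert] at hq
    rcases hq with rfl | hq
    · simp
    · have hne : q ≠ p := by rintro rfl; exact hp hq
      rw [Perm.mul_apply, swap_apply_of_ne_of_ne, h q hq]
      · exact fun h' => hne (τ.injective h')
      · rw [h q hq]
        exact fun h' => hne (hinj (by simp [hq]) (by simp) h')

variable {V : Type*} [AddCommGroup V] [Module ℚ V]

/-- the good set -/
noncomputable def AA (b : P → ι)
    (β : MonoidAlgebra ℚ (Perm P) →ₗ[ℚ] MonoidAlgebra ℚ (Perm P) →ₗ[ℚ] V) :
    Submodule ℚ (MonoidAlgebra ℚ (Perm P)) where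
  carrier := {a | ∀ x y, β (x * sy b * a) y = β x (y * sy b * ginv a)}
  add_mem' := fun {a c} ha hc x y => by
    rw [mul_add, map_add, LinearMap.add_apply, ha, hc, map_add, mul_add, map_add]
  zero_mem' := fun x y => by simp
  smul_mem' := fun r a ha x y => by
    rw [mul_smul_comm, map_smul, LinearMap.smul_apply, ha, map_smul, mul_smul_comm, map_smul]

theorem mem_AA {b : P → ι} {β : MonoidAlgebra ℚ (Perm P) →ₗ[ℚ] MonoidAlgebra ℚ (Perm P) →ₗ[ℚ] V}
    {a : MonoidAlgebra ℚ (Perm P)} :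
    a ∈ AA b β ↔ ∀ x y, β (x * sy b * a) y = β x (y * sy b * ginv a) := Iff.rfl

/-- invariance hypotheses -/
def HY (b : P → ι) (β : MonoidAlgebra ℚ (Perm P) →ₗ[ℚ] MonoidAlgebra ℚ (Perm P) →ₗ[ℚ] V) : Prop :=
  ∀ σ ∈ Yg b, ∀ x y, β (x * go σ) y = β x y ∧ β x (y * go σ) = β x y

variable {b : P → ι} {β : MonoidAlgebra ℚ (Perm P) →ₗ[ℚ] MonoidAlgebra ℚ (Perm P) →ₗ[ℚ] V}

theorem AA_key (H : HY b β) {σ τ : Perm P} (hσ : σ ∈ Yg b) (hτ : τ ∈ Yg b)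
    (a x y : MonoidAlgebra ℚ (Perm P)) :
    β (x * sy b * (go σ * a * go τ)) y - β x (y * sy b * ginv (go σ * a * go τ)) =
    β (x * sy b * a) y - β x (y * sy b * ginv a) := by
  have h1 : x * sy b * (go σ * a * go τ) = x * sy b * a * go τ := by
    simp only [mul_assoc]
    rw [← mul_assoc (sy b) (go σ), sy_right hσ]
  have h2 : y * sy b * ginv (go σ * a * go τ) = y * sy b * ginv a * go σ⁻¹ := by
    rw [ginv_mul, ginv_mul, ginv_go, ginv_go]
    simp only [mul_assoc]
    rw [← mul_assoc (sy b) (go τ⁻¹), sy_right (inv_mem hτ)]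
  rw [h1, h2, (H τ hτ _ _).1, (H σ⁻¹ (inv_mem hσ) _ _).2]

theorem AA_coset (H : HY b β) {σ τ w : Perm P} (hσ : σ ∈ Yg b) (hτ : τ ∈ Yg b) :
    go (σ * w * τ) ∈ AA b β ↔ go w ∈ AA b β := by
  simp only [mem_AA]
  refine forall_congr' fun x => forall_congr' fun y => ?_
  rw [← sub_eq_zero, go_mul, go_mul, AA_key H hσ hτ, sub_eq_zero]

theorem AA_mid {a c : MonoidAlgebra ℚ (Perm P)} (ha : a ∈ AA b β) (hc : c ∈ AA b β) :
    a * sy b * c ∈ AA b β := by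
  intro x y
  have h1 : x * sy b * (a * sy b * c) = (x * sy b * a) * sy b * c := by simp only [mul_assoc]
  rw [h1, hc, ha, ginv_mul, ginv_mul, ginv_sy]
  simp only [mul_assoc]

theorem AA_of_sum (H : HY b β) {κ : Type*} (S : Finset κ) (F : κ → Perm P) (w : Perm P)
    (hsum : ∑ s ∈ S, go (F s) ∈ AA b β)
    (h : ∀ s ∈ S, go (F s) ∈ AA b β ∨ ∃ σ ∈ Yg b, ∃ τ ∈ Yg b, F s = σ * w * τ)
    (hne : ∃ s ∈ S, F s = w) : go w ∈ AA b β := by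
  intro x y
  set Φ : MonoidAlgebra ℚ (Perm P) → V := fun a => β (x * sy b * a) y - β x (y * sy b * ginv a) with hΦ
  have hAΦ : ∀ a ∈ AA b β, Φ a = 0 := fun a ha => sub_eq_zero.2 (ha x y)
  have hs : Φ (∑ s ∈ S, go (F s)) = ∑ s ∈ S, Φ (go (F s)) := by
    simp only [hΦ, Finset.mul_sum, map_sum, LinearMap.sum_apply, Finset.sum_sub_distrib]
  rw [hAΦ _ hsum] at hs
  by_contra hcon
  have hw : Φ (go w) ≠ 0 := fun h => hcon (sub_eq_zero.1 h)
  have h2 : ∀ s : κ, ∃ n : ℕ, s ∈ S → (Φ (go (F s)) = n • Φ (go w) ∧ (F s = w → n = 1)) := by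
    intro s
    by_cases hsS : s ∈ S
    · by_cases h1 : go (F s) ∈ AA b β
      · refine ⟨0, fun _ => ⟨by rw [hAΦ _ h1, zero_smul], fun h => ?_⟩⟩
        rw [h] at h1
        exact absurd (hAΦ _ h1) hw
      · obtain ⟨σ, hσ, τ, hτ, h3⟩ := (h s hsS).resolve_left h1
        refine ⟨1, fun _ => ⟨?_, fun _ => rfl⟩⟩
        rw [h3, go_mul, go_mul, one_smul]
        exact AA_key H hσ hτ _ _ _
    · exact ⟨0, fun h => absurd h hsS⟩
  choose n hn using h2
  rw [Finset.sum_congr rfl (fun s hs => (hn s hs).1), ← Finset.sum_smul] at hs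
  obtain ⟨s0, hs0, hs1⟩ := hne
  have hpos : 0 < ∑ s ∈ S, n s := by
    have h1 := (hn s0 hs0).2 hs1
    have := Finset.single_le_sum (f := n) (fun _ _ => Nat.zero_le _) hs0
    omega
  rw [← Nat.cast_smul_eq_nsmul ℚ] at hs
  rcases smul_eq_zero.1 hs.symm with h | h
  · have : ((∑ s ∈ S, n s : ℕ) : ℚ) ≠ 0 := by exact_mod_cast hpos.ne'
    exact this h
  · exact hw h

theorem go_mul_sy_mul (w1 w2 : Perm P) :
    go w1 * sy b * go w2 = ∑ σ ∈ Finset.univ.filter (· ∈ Yg b), go (w1 * σ * w2) := by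
  rw [sy, Finset.mul_sum, Finset.sum_mul]
  simp only [go_mul]

theorem spn_mem {M : Submonoid (Perm P)} {N : Submodule ℚ (MonoidAlgebra ℚ (Perm P))}
    (h : ∀ g ∈ M, go g ∈ N) {a : MonoidAlgebra ℚ (Perm P)}
    (ha : a ∈ Algebra.adjoin ℚ ((go : Perm P → _) '' (M : Set (Perm P)))) : a ∈ N := by
  have h1 : ((go : Perm P → _) '' (M : Set (Perm P))) =
      (M.map (MonoidAlgebra.of ℚ (Perm P)) : Set (MonoidAlgebra ℚ (Perm P))) := rfl
  rw [← Subalgebra.mem_toSubmodule, Algebra.adjoin_eq_span, h1, Submonoid.closure_eq, ← h1] at ha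
  refine Submodule.span_le.2 ?_ ha
  rintro _ ⟨g, hg, rfl⟩
  exact h g hg

/-- case 3 -/
theorem case_split (H : HY b β) {B : Finset ι} {w w1 w2 : Perm P} (hw : w = w1 * w2)
    (hd : Disjoint w1 w2) (hw1 : w1 ∈ SB b B) (hw2 : w2 ∈ SB b B)
    (hr1 : ∀ p, w1 p ≠ p → b (w1 p) ≠ b p) (hr2 : ∀ p, w2 p ≠ p → b (w2 p) ≠ b p)
    (h1 : w1 ≠ 1) (h2 : w2 ≠ 1)
    (IH : ∀ v ∈ SB b B, (offs b v).card < w.support.card → go v ∈ AA b β) : go w ∈ AA b β := by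
  have hs1 : offs b w1 = w1.support := by
    ext p; rw [mem_offs, mem_support]; exact ⟨fun h h' => h (by rw [h']), hr1 p⟩
  have hs2 : offs b w2 = w2.support := by
    ext p; rw [mem_offs, mem_support]; exact ⟨fun h h' => h (by rw [h']), hr2 p⟩
  have hc : w.support.card = w1.support.card + w2.support.card := by
    rw [hw, hd.card_support_mul]
  have hp1 : 0 < w1.support.card := Finset.card_pos.2 (by
    rw [Finset.nonempty_iff_ne_empty, Ne, support_eq_empty_iff]; exact h1)
  have hp2 : 0 < w2.support.card := Finset.card_pos.2 (by
    rw [Finset.nonempty_iff_ne_empty, Ne, support_eq_empty_iff]; exact h2)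
  have ha1 : go w1 ∈ AA b β := IH _ hw1 (by rw [hs1]; omega)
  have ha2 : go w2 ∈ AA b β := IH _ hw2 (by rw [hs2]; omega)
  have hsum := AA_mid ha1 ha2
  rw [go_mul_sy_mul] at hsum
  refine AA_of_sum H _ _ w hsum ?_ ⟨1, by simp [one_mem], by rw [mul_one, hw]⟩
  intro σ hσ
  have hσ : σ ∈ Yg b := by simpa using hσ
  by_cases hcase : ∃ r, w2 r ≠ r ∧ w1 (σ (w2 r)) ≠ σ (w2 r)
  · left
    obtain ⟨r, hr, hr'⟩ := hcase
    apply IH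
    · exact mul_mem (mul_mem hw1 (Yg_SB _ hσ)) hw2
    · set T := w1.support.map (w2.symm.toEmbedding.trans σ.symm.toEmbedding) with hT
      have hsub : offs b (w1 * σ * w2) ⊆ (w2.support) ∪ w1.support.map (σ * w2).symm.toEmbedding := by
        intro p hp
        rw [mem_offs] at hp
        rw [Finset.mem_union]
        by_contra hcon
        push Not at hcon
        obtain ⟨hA, hB⟩ := hcon
        rw [notMem_support] at hA
        rw [Finset.mem_map_equiv, Equiv.symm_symm, notMem_support] at hB
        apply hp
        rw [mul_assoc, Perm.mul_apply, hB, Perm.mul_apply, hσ, hA]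
      have hlt : (w2.support ∪ w1.support.map (σ * w2).symm.toEmbedding).card <
          w2.support.card + w1.support.card := by
        have h3 := Finset.card_union_add_card_inter w2.support (w1.support.map (σ * w2).symm.toEmbedding)
        rw [Finset.card_map] at h3
        have h4 : 0 < (w2.support ∩ w1.support.map (σ * w2).symm.toEmbedding).card := by
          refine Finset.card_pos.2 ⟨r, ?_⟩
          rw [Finset.mem_inter, mem_support, Finset.mem_map_equiv, Equiv.symm_symm, mem_support]
          exact ⟨hr, hr'⟩
        omega
      have := Finset.card_le_card hsub
      omega
  · right
    push Not at hcase
    have hcase' : ∀ q, w2 q ≠ q → w1 (σ q) = σ q := by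
      intro q hq
      have := hcase (w2⁻¹ q) (by
        intro h
        rw [pinv1] at h
        apply hq
        conv_lhs => rw [h]
        rw [pinv1])
      rwa [pinv1] at this
    obtain ⟨τ, hτ, hτe⟩ := extend_Yg b (fun q => if w2 q ≠ q then q else σ q) (by
      intro p
      split_ifs
      · rfl
      · exact hσ p) (Finset.univ.filter fun q => w2 q ≠ q ∨ w1 (σ q) ≠ σ q) (by
      intro p hp q hq hpq
      simp only [Finset.coe_filter, Finset.mem_univ, true_and, Set.mem_ofPred_eq] at hp hq hpq
      by_cases h3 : w2 p = p <;> by_cases h4 : w2 q = q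
      · simp only [h3, h4, ne_eq, not_true_eq_false, if_false] at hpq
        exact σ.injective hpq
      · simp only [h3, h4, ne_eq, not_true_eq_false, not_false_eq_true, if_false, if_true] at hpq
        have h5 : w1 (σ p) ≠ σ p := hp.resolve_left (by simp [h3])
        rw [hpq] at h5
        exact absurd ((hd q).resolve_right h4) h5
      · simp only [h3, h4, ne_eq, not_true_eq_false, not_false_eq_true, if_false, if_true] at hpq
        have h5 : w1 (σ q) ≠ σ q := hq.resolve_left (by simp [h4])
        rw [← hpq] at h5
        exact absurd ((hd p).resolve_right h3) h5
      · simpa only [h3, h4, ne_eq, not_true_eq_false, not_false_eq_true, if_false, if_true] using hpq)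
    have hd2 : Disjoint τ w2 := by
      intro q
      by_cases hq : w2 q = q
      · exact Or.inr hq
      · left
        rw [hτe q (by simp [hq])]
        simp [hq]
    have hd1 : Disjoint (σ * τ⁻¹) w1 := by
      intro q
      by_cases hq : w1 q = q
      · exact Or.inr hq
      · left
        have h3 : w2 (σ⁻¹ q) = σ⁻¹ q := by
          by_contra h3
          have := hcase' _ h3
          rw [pinv1] at this
          exact hq this
        have h4 : τ (σ⁻¹ q) = q := by
          rw [hτe _ (by rw [Finset.mem_filter, pinv1]; exact ⟨Finset.mem_univ _, Or.inr hq⟩), if_neg (not_not.2 h3),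
            pinv1]
        rw [Perm.mul_apply]
        have h5 : τ⁻¹ q = σ⁻¹ q := by rw [inv_eq_iff_eq, h4]
        rw [h5, pinv1]
    refine ⟨σ * τ⁻¹, mul_mem hσ (inv_mem hτ), τ, hτ, ?_⟩
    have c1 : w1 * (σ * τ⁻¹) = (σ * τ⁻¹) * w1 := hd1.commute.eq.symm
    have c2 : τ * w2 = w2 * τ := hd2.commute.eq
    calc w1 * σ * w2 = w1 * (σ * τ⁻¹) * (τ * w2) := by group
      _ = (σ * τ⁻¹) * w1 * (w2 * τ) := by rw [c1, c2]
      _ = _ := by rw [hw]; group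

theorem case_noncycle (H : HY b β) {B : Finset ι} {w : Perm P} (hwB : w ∈ SB b B)
    (hr : ∀ p, w p ≠ p → b (w p) ≠ b p) (h1 : w ≠ 1) (hcy : ¬ w.IsCycle)
    (IH : ∀ v ∈ SB b B, (offs b v).card < w.support.card → go v ∈ AA b β) : go w ∈ AA b β := by
  obtain ⟨p, hp⟩ : ∃ p, w p ≠ p := by
    by_contra h; push Not at h; exact h1 (Perm.ext h)
  set w1 := w.cycleOf p with hw1
  have hmem : w1 ∈ w.cycleFactorsFinset := by
    rw [hw1, cycleOf_mem_cycleFactorsFinset_iff, mem_support]; exact hp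
  have hd := (disjoint_mul_inv_of_mem_cycleFactorsFinset hmem)
  have hcyc : w1.IsCycle := isCycle_cycleOf _ hp
  have e1 : ∀ q, w1 q ≠ q → w1 q = w q := by
    intro q hq
    exact ((mem_cycleFactorsFinset_iff.1 hmem).2 q (mem_support.2 hq))
  have e2 : ∀ q, (w * w1⁻¹) q ≠ q → (w * w1⁻¹) q = w q := by
    intro q hq
    have h3 := (hd q).resolve_left hq
    have h4 : w1⁻¹ q = q := by rw [inv_eq_iff_eq, h3]
    rw [Perm.mul_apply, h4]
  have hsb : ∀ v : Perm P, (∀ q, v q ≠ q → v q = w q) → v ∈ SB b B ∧ ∀ q, v q ≠ q → b (v q) ≠ b q := by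
    intro v hv
    refine ⟨fun q hq => ?_, fun q hq => ?_⟩
    · by_cases h : v q = q
      · rw [h]
      · rw [hv q h]; exact hwB q hq
    · rw [hv q hq]
      exact hr q (by rw [← hv q hq]; exact hq)
  refine case_split H (w1 := w * w1⁻¹) (w2 := w1) (by group) hd (hsb _ e2).1 (hsb _ e1).1 (hsb _ e2).2
    (hsb _ e1).2 ?_ hcyc.ne_one IH
  intro h
  apply hcy
  rw [mul_inv_eq_one] at h
  rw [h]
  exact hcyc

theorem case_double (H : HY b β) {B : Finset ι} {w : Perm P} (hwB : w ∈ SB b B)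
    (hr : ∀ p, w p ≠ p → b (w p) ≠ b p) (hcy : w.IsCycle) (x y : P) (hx : w x ≠ x) (hy : w y ≠ y)
    (hxy : x ≠ y) (hb : b x = b y)
    (IH : ∀ v ∈ SB b B, (offs b v).card < w.support.card → go v ∈ AA b β) : go w ∈ AA b β := by
  have hs := swap_mem_Yg hb
  set w2 := w * swap x y with hw2
  have hw2B : w2 ∈ SB b B := mul_mem hwB (Yg_SB _ hs)
  have hr2 : ∀ p, w2 p ≠ p → b (w2 p) ≠ b p := by
    intro p hp
    rcases eq_or_ne p x with rfl | h1
    · rw [hw2, Perm.mul_apply, swap_apply_left, hb]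
      exact hr _ hy
    rcases eq_or_ne p y with rfl | h2
    · rw [hw2, Perm.mul_apply, swap_apply_right, ← hb]
      exact hr _ hx
    rw [hw2, Perm.mul_apply, swap_apply_of_ne_of_ne h1 h2] at hp ⊢
    exact hr p hp
  have hsupp : ∀ v : Perm P, (∀ p, v p ≠ p → b (v p) ≠ b p) → offs b v = v.support := by
    intro v hv
    ext p; rw [mem_offs, mem_support]; exact ⟨fun h h' => h (by rw [h']), hv p⟩
  have hcard : w2.support.card = w.support.card := by
    rw [← hsupp _ hr2, ← hsupp _ hr, hw2, offs_mul_right hs]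
  have hw : w = 1 * w2 * swap x y := by rw [hw2]; simp [mul_assoc]
  have hncy : ¬ w2.IsCycle := by
    intro h
    have h1 := h.sign
    rw [hcard, ← hcy.sign, hw2, Perm.sign_mul, sign_swap hxy] at h1
    have h2 : (-1 : ℤˣ) = 1 := by
      have := mul_left_cancel (a := sign w) (b := -1) (c := 1) (by rw [h1, mul_one])
      exact this
    exact absurd h2 (by decide)
  rw [hw, AA_coset H (one_mem _) hs]
  refine case_noncycle H hw2B hr2 ?_ hncy (by rw [hcard]; exact IH)
  intro h
  rw [h, Perm.support_one, Finset.card_empty] at hcard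
  have := Finset.card_eq_zero.1 hcard.symm
  rw [support_eq_empty_iff] at this
  exact hcy.ne_one this

end Gen2

section Gen3
open Equiv Equiv.Perm

variable {P ι : Type} [Fintype P] [DecidableEq P] [DecidableEq ι]
variable {V : Type*} [AddCommGroup V] [Module ℚ V]
variable {b : P → ι} {β : MonoidAlgebra ℚ (Perm P) →ₗ[ℚ] MonoidAlgebra ℚ (Perm P) →ₗ[ℚ] V}

theorem sy_mem_spn (b' : P → ι) {M : Submonoid (Perm P)} (h : ∀ σ ∈ Yg b', σ ∈ M) :
    sy b' ∈ Algebra.adjoin ℚ ((go : Perm P → _) '' (M : Set (Perm P))) := by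
  rw [sy]
  refine sum_mem fun σ hσ => Algebra.subset_adjoin ⟨σ, h σ (by simpa using hσ), rfl⟩

theorem case_long (H : HY b β)
    (hcard : ∀ p q, (Finset.univ.filter fun r => b r = b p).card = (Finset.univ.filter fun r => b r = b q).card)
    {B : Finset ι} {w : Perm P} (hwB : w ∈ SB b B)
    (hr : ∀ p, w p ≠ p → b (w p) ≠ b p) (hcy : w.IsCycle)
    (hdist : ∀ x y, w x ≠ x → w y ≠ y → b x = b y → x = y)
    (IHB : ∀ B' : Finset ι, B'.card < B.card → ∀ v ∈ SB b B', go v ∈ AA b β)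
    (H2 : ∀ B' : Finset ι, B'.card ≤ 3 → ∀ v ∈ SB b B', go v ∈ AA b β)
    (IH : ∀ v ∈ SB b B, (offs b v).card < w.support.card → go v ∈ AA b β) : go w ∈ AA b β := by
  by_cases h3 : w.support.card ≤ 3
  · refine H2 (w.support.image b) (Finset.card_image_le.trans h3) w fun p hp => ?_
    have : p ∉ w.support := fun h => hp (Finset.mem_image_of_mem _ h)
    rw [notMem_support] at this
    rw [this]
  push Not at h3
  obtain ⟨p1, hp1⟩ : ∃ p, w p ≠ p := by
    obtain ⟨p, hp, _⟩ := hcy; exact ⟨p, hp⟩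
  set p2 := w p1 with hp2
  set p3 := w p2 with hp3
  have hmv : ∀ q, w q ≠ q → w (w q) ≠ w q := fun q hq h => hq (w.injective h)
  have m2 : w p2 ≠ p2 := hmv _ hp1
  have m3 : w p3 ≠ p3 := hmv _ m2
  have hpow : ∀ n, 0 < n → n ≤ 3 → (w ^ n) p1 ≠ p1 := by
    intro n hn hn3 h
    have h4 := (hcy.pow_eq_one_iff' hp1).2 h
    have h5 := orderOf_dvd_of_pow_eq_one h4
    rw [hcy.orderOf] at h5
    have := Nat.le_of_dvd hn h5
    omega
  have n12 : p1 ≠ p2 := fun h => hp1 h.symm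
  have n23 : p2 ≠ p3 := fun h => m2 h.symm
  have n13 : p1 ≠ p3 := by
    have := hpow 2 (by norm_num) (by norm_num)
    intro h
    apply this
    rw [pow_two, Perm.mul_apply]
    exact h.symm
  have n14 : w p3 ≠ p1 := by
    have := hpow 3 (by norm_num) (by norm_num)
    intro h
    apply this
    rw [pow_succ, pow_two, Perm.mul_apply, Perm.mul_apply]
    exact h
  have b12 : b p1 ≠ b p2 := fun h => n12 (hdist _ _ hp1 m2 h)
  have b13 : b p1 ≠ b p3 := fun h => n13 (hdist _ _ hp1 m3 h)
  have b23 : b p2 ≠ b p3 := fun h => n23 (hdist _ _ m2 m3 h)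
  have hBm : ∀ q, w q ≠ q → b q ∈ B := by
    intro q hq
    by_contra h
    exact hr q hq (hwB q h)
  set u : Perm P := swap p1 p2 * swap p2 p3 with hu
  have u1 : u p1 = p2 := by
    rw [hu, Perm.mul_apply, swap_apply_of_ne_of_ne n12 n13, swap_apply_left]
  have u2 : u p2 = p3 := by
    rw [hu, Perm.mul_apply, swap_apply_left, swap_apply_of_ne_of_ne n13.symm n23.symm]
  have u3 : u p3 = p1 := by
    rw [hu, Perm.mul_apply, swap_apply_right, swap_apply_right]
  have u4 : ∀ q, q ≠ p1 → q ≠ p2 → q ≠ p3 → u q = q := by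
    intro q h1 h2 h3
    rw [hu, Perm.mul_apply, swap_apply_of_ne_of_ne h2 h3, swap_apply_of_ne_of_ne h1 h2]
  have ui1 : u⁻¹ p1 = p3 := by rw [inv_eq_iff_eq, u3]
  have ui2 : u⁻¹ p2 = p1 := by rw [inv_eq_iff_eq, u1]
  have ui3 : u⁻¹ p3 = p2 := by rw [inv_eq_iff_eq, u2]
  have ui4 : ∀ q, q ≠ p1 → q ≠ p2 → q ≠ p3 → u⁻¹ q = q := by
    intro q h1 h2 h3
    rw [inv_eq_iff_eq, u4 q h1 h2 h3]
  set v : Perm P := w * u⁻¹ with hv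
  have v1 : v p1 = w p3 := by rw [hv, Perm.mul_apply, ui1]
  have v2 : v p2 = p2 := by rw [hv, Perm.mul_apply, ui2]
  have v3 : v p3 = p3 := by rw [hv, Perm.mul_apply, ui3]
  have v4 : ∀ q, q ≠ p1 → q ≠ p2 → q ≠ p3 → v q = w q := by
    intro q h1 h2 h3
    rw [hv, Perm.mul_apply, ui4 q h1 h2 h3]
  have hvw : v * u = w := by rw [hv]; group
  -- v fixes blocks of p2 and p3
  have vfix : ∀ q, (b q = b p2 ∨ b q = b p3) → v q = q := by
    intro q hq
    rcases eq_or_ne q p2 with rfl | h2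
    · exact v2
    rcases eq_or_ne q p3 with h3 | h3
    · rw [h3]; exact v3
    have h1 : q ≠ p1 := by
      rintro rfl
      rcases hq with h | h
      · exact b12 h
      · exact b13 h
    rw [v4 q h1 h2 h3]
    by_contra hm
    rcases hq with h | h
    · exact h2 (hdist _ _ hm m2 h)
    · exact h3 (hdist _ _ hm m3 h)
  have vB : v ∈ SB b (B.erase (b p2)) := by
    intro q hq
    by_cases h2 : b q = b p2
    · rw [vfix q (Or.inl h2)]
    have hqB : b q ∉ B := fun h => hq (Finset.mem_erase.2 ⟨h2, h⟩)
    have h : ∀ r, w r ≠ r → q ≠ r := fun r hr h => hqB (h ▸ hBm r hr)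
    rw [v4 q (h _ hp1) (h _ m2) (h _ m3)]
    exact hwB q hqB
  have vsupp : v.support ⊆ (w.support.erase p2).erase p3 := by
    intro q hq
    rw [mem_support] at hq
    have h2 : q ≠ p2 := by rintro rfl; exact hq v2
    have h3 : q ≠ p3 := by intro h; rw [h] at hq; exact hq v3
    rw [Finset.mem_erase, Finset.mem_erase, mem_support]
    refine ⟨h3, h2, ?_⟩
    rcases eq_or_ne q p1 with rfl | h1
    · exact hp1
    · rwa [← v4 q h1 h2 h3]
  have vcard : v.support.card + 2 ≤ w.support.card := by
    have h4 := Finset.card_le_card vsupp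
    rw [Finset.card_erase_of_mem (by
      rw [Finset.mem_erase, mem_support]; exact ⟨n23.symm, m3⟩), Finset.card_erase_of_mem (by
      rw [mem_support]; exact m2)] at h4
    omega
  set b' := Function.update b p1 (b p3) with hb'
  have b'1 : b' p1 = b p3 := by simp [hb']
  have b'2 : ∀ q, q ≠ p1 → b' q = b q := fun q hq => by simp [hb', hq]
  have YSB : ∀ σ ∈ Yg b', σ ∈ SB b {b p1, b p3} := by
    intro σ hσ q hq
    simp only [Finset.mem_insert, Finset.mem_singleton, not_or] at hq
    have h1 : q ≠ p1 := by rintro rfl; exact hq.1 rfl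
    have h2 := hσ q
    rw [b'2 q h1] at h2
    have h3 : σ q ≠ p1 := by
      intro h
      rw [h, b'1] at h2
      exact hq.2 h2.symm
    rwa [b'2 _ h3] at h2
  obtain ⟨y, hy, hf⟩ := lemmaK b p1 (b p3) b13 (hcard p1 p3)
  rw [← hb'] at hy hf
  have hy3 : y ∈ Algebra.adjoin ℚ ((go : Perm P → _) '' (SB b {b p1, b p2, b p3} : Set (Perm P))) := by
    refine Algebra.adjoin_le ?_ hy
    intro z hz
    simp only [Set.mem_insert_iff, Set.mem_singleton_iff] at hz
    rcases hz with rfl | rfl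
    · exact sy_mem_spn _ fun σ hσ => Yg_SB _ hσ
    · exact sy_mem_spn _ fun σ hσ => SB_mono (by
        intro i hi
        simp only [Finset.mem_insert, Finset.mem_singleton] at hi ⊢
        tauto) (YSB σ hσ)
  have huB : u ∈ SB b {b p1, b p2, b p3} := by
    intro q hq
    simp only [Finset.mem_insert, Finset.mem_singleton, not_or] at hq
    rw [u4 q] <;> (rintro rfl; simp at hq)
  have hyu : y * go u ∈ AA b β := by
    refine spn_mem (H2 {b p1, b p2, b p3} Finset.card_le_three) (mul_mem hy3 ?_)
    exact Algebra.subset_adjoin ⟨u, huB, rfl⟩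
  have hvf : go v * sy b' ∈ AA b β := by
    rw [sy, Finset.mul_sum]
    refine sum_mem fun σ hσ => ?_
    have hσ : σ ∈ Yg b' := by simpa using hσ
    rw [← go_mul]
    refine IHB (B.erase (b p2)) (Finset.card_erase_lt_of_mem (hBm _ m2)) _ (mul_mem vB ?_)
    refine SB_mono ?_ (YSB σ hσ)
    intro i hi
    simp only [Finset.mem_insert, Finset.mem_singleton] at hi
    rw [Finset.mem_erase]
    rcases hi with rfl | rfl
    · exact ⟨b12, hBm _ hp1⟩
    · exact ⟨b23.symm, hBm _ m3⟩
  have hsum : ∑ τ ∈ Finset.univ.filter (· ∈ Yg b'), go (v * τ * u) ∈ AA b β := by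
    rw [← go_mul_sy_mul, hf]
    have := AA_mid hvf hyu
    simpa only [mul_assoc] using this
  have hup : ∀ q, q ≠ p1 → q ≠ p2 → b' (u q) = b q := by
    intro q h1 h2
    rcases eq_or_ne q p3 with h3 | h3
    · rw [h3, u3, b'1]
    · rw [u4 q h1 h2 h3, b'2 q h1]
  have hui : ∀ q, q ≠ p2 → q ≠ p3 → b (u⁻¹ q) = b' q := by
    intro q h2 h3
    rcases eq_or_ne q p1 with h1 | h1
    · rw [h1, ui1, b'1]
    · rw [ui4 q h1 h2 h3, b'2 q h1]
  have vB' : v ∈ SB b B := SB_mono (Finset.erase_subset _ _) vB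
  have uB' : u ∈ SB b B := SB_mono (by
    intro i hi
    simp only [Finset.mem_insert, Finset.mem_singleton] at hi
    rcases hi with rfl | rfl | rfl
    · exact hBm _ hp1
    · exact hBm _ m2
    · exact hBm _ m3) huB
  refine AA_of_sum H _ _ w hsum ?_ ⟨1, by simp [one_mem], by rw [mul_one, hvw]⟩
  intro τ hτ
  have hτ : τ ∈ Yg b' := by simpa using hτ
  have v1m : v p1 ≠ p1 := by rw [v1]; exact n14
  by_cases hcase : τ p3 = p1
  · left
    apply IH
    · refine mul_mem (mul_mem vB' (SB_mono ?_ (YSB τ hτ))) uB'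
      intro i hi
      simp only [Finset.mem_insert, Finset.mem_singleton] at hi
      rcases hi with rfl | rfl
      · exact hBm _ hp1
      · exact hBm _ m3
    · have hsub : offs b (v * τ * u) ⊆ insert p1 (v.support.map (τ * u).symm.toEmbedding) := by
        intro p hp
        rw [mem_offs] at hp
        rw [Finset.mem_insert]
        by_contra hcon
        push Not at hcon
        obtain ⟨hA, hB⟩ := hcon
        rw [Finset.mem_map_equiv, Equiv.symm_symm, notMem_support] at hB
        replace hB : v (τ (u p)) = τ (u p) := hB
        have hp2' : p ≠ p2 := by
          intro h
          rw [h, u2, hcase] at hB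
          exact v1m hB
        have hne : τ (u p) ≠ p1 := by
          intro h
          rw [h] at hB
          exact v1m hB
        apply hp
        rw [Perm.mul_apply, Perm.mul_apply, hB, ← b'2 _ hne, hτ, hup p hA hp2']
      have h5 := Finset.card_le_card hsub
      have h6 := Finset.card_insert_le p1 (v.support.map (τ * u).symm.toEmbedding)
      rw [Finset.card_map] at h6
      omega
  · right
    have t2 : b (τ p2) = b p2 ∧ τ p2 ≠ p1 := by
      have h1 := hτ p2
      rw [b'2 p2 n12.symm] at h1
      have h2 : τ p2 ≠ p1 := by
        intro h
        rw [h, b'1] at h1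
        exact b23 h1.symm
      rw [b'2 _ h2] at h1
      exact ⟨h1, h2⟩
    have t3 : b (τ p3) = b p3 := by
      have h1 := hτ p3
      rwa [b'2 p3 n13.symm, b'2 _ hcase] at h1
    have hτne : τ p2 ≠ τ p3 := fun h => n23 (τ.injective h)
    set τ1 : Perm P := swap p2 (τ p2) * swap p3 (τ p3) with hτ1
    have hτ1Y : τ1 ∈ Yg b := mul_mem (swap_mem_Yg t2.1.symm) (swap_mem_Yg t3.symm)
    have hf1 : ∀ q, b q ≠ b p2 → b q ≠ b p3 → τ1 q = q := by
      intro q h2 h3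
      rw [hτ1, Perm.mul_apply, swap_apply_of_ne_of_ne (a := p3), swap_apply_of_ne_of_ne]
      · rintro rfl; exact h2 rfl
      · rintro rfl; exact h2 t2.1
      · intro h; exact h3 (by rw [h])
      · rintro rfl; exact h3 t3
    have hτ1p1 : τ1 p1 = p1 := hf1 _ b12 b13
    have hd : Disjoint v τ1 := by
      intro q
      by_cases h2 : b q = b p2
      · exact Or.inl (vfix q (Or.inl h2))
      by_cases h3 : b q = b p3
      · exact Or.inl (vfix q (Or.inr h3))
      exact Or.inr (hf1 q h2 h3)
    have hτ1Y' : τ1 ∈ Yg b' := by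
      intro q
      rcases eq_or_ne q p1 with rfl | h1
      · rw [hτ1p1]
      · have : τ1 q ≠ p1 := by
          intro h
          exact h1 (τ1.injective (h.trans hτ1p1.symm))
        rw [b'2 _ this, b'2 _ h1, hτ1Y]
    set τ2 : Perm P := τ1⁻¹ * τ with hτ2
    have hτ2Y : τ2 ∈ Yg b' := mul_mem (inv_mem hτ1Y') hτ
    have e2 : τ2 p2 = p2 := by
      rw [hτ2, Perm.mul_apply, inv_eq_iff_eq, hτ1, Perm.mul_apply, swap_apply_of_ne_of_ne (a := p3),
        swap_apply_left]
      · exact n23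
      · intro h
        apply b23
        rw [h, t3]
    have e3 : τ2 p3 = p3 := by
      rw [hτ2, Perm.mul_apply, inv_eq_iff_eq, hτ1, Perm.mul_apply, swap_apply_left,
        swap_apply_of_ne_of_ne]
      · intro h
        apply b23
        rw [← h, t3]
      · exact hτne.symm
    refine ⟨τ1, hτ1Y, u⁻¹ * τ2 * u, ?_, ?_⟩
    · intro p
      rw [Perm.mul_apply, Perm.mul_apply]
      rcases eq_or_ne p p1 with h1 | h1
      · rw [h1, u1, e2, ui2]
      rcases eq_or_ne p p2 with h2 | h2
      · rw [h2, u2, e3, ui3]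
      have hne2 : τ2 (u p) ≠ p2 := by
        intro h
        exact h1 (u.injective ((τ2.injective (h.trans e2.symm)).trans u1.symm))
      have hne3 : τ2 (u p) ≠ p3 := by
        intro h
        exact h2 (u.injective ((τ2.injective (h.trans e3.symm)).trans u2.symm))
      rw [hui _ hne2 hne3, hτ2Y, hup p h1 h2]
    · have hc : v * τ1 = τ1 * v := hd.commute.eq
      calc v * τ * u = (v * τ1) * τ2 * u := by rw [hτ2]; group
        _ = τ1 * (v * u) * (u⁻¹ * τ2 * u) := by rw [hc]; group
        _ = _ := by rw [hvw]

theorem gen_all (H : HY b β)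
    (hcard : ∀ p q, (Finset.univ.filter fun r => b r = b p).card = (Finset.univ.filter fun r => b r = b q).card)
    (H2 : ∀ B' : Finset ι, B'.card ≤ 3 → ∀ v ∈ SB b B', go v ∈ AA b β) :
    ∀ (n : ℕ) (B : Finset ι), B.card = n → ∀ w ∈ SB b B, go w ∈ AA b β := by
  intro n
  induction n using Nat.strong_induction_on with
  | _ n IHn =>
  intro B hB
  have IHB : ∀ B' : Finset ι, B'.card < B.card → ∀ v ∈ SB b B', go v ∈ AA b β :=
    fun B' hB' => IHn _ (hB ▸ hB') B' rfl
  suffices h : ∀ (N : ℕ) (w : Perm P), w ∈ SB b B → (offs b w).card = N → go w ∈ AA b β from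
    fun w hw => h _ w hw rfl
  intro N
  induction N using Nat.strong_induction_on with
  | _ N IHN =>
  suffices h : ∀ (M : ℕ) (w : Perm P), w ∈ SB b B → (offs b w).card = N → w.support.card = M →
      go w ∈ AA b β from fun w hw hN => h _ w hw hN rfl
  intro M
  induction M using Nat.strong_induction_on with
  | _ M IHM =>
  intro w hw hN hM
  by_cases hr : ∀ p, w p ≠ p → b (w p) ≠ b p
  · have hs : offs b w = w.support := by
      ext p; rw [mem_offs, mem_support]; exact ⟨fun h h' => h (by rw [h']), hr p⟩
    have IH : ∀ v ∈ SB b B, (offs b v).card < w.support.card → go v ∈ AA b β := by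
      intro v hv hlt
      rw [← hs, hN] at hlt
      exact IHN _ hlt v hv rfl
    by_cases h1 : w = 1
    · exact H2 ∅ (by simp) w (by rw [h1]; exact one_mem _)
    by_cases hcy : w.IsCycle
    · by_cases hdist : ∀ x y, w x ≠ x → w y ≠ y → b x = b y → x = y
      · exact case_long H hcard hw hr hcy hdist IHB H2 IH
      · push Not at hdist
        obtain ⟨x, y, hx, hy, hb, hxy⟩ := hdist
        exact case_double H hw hr hcy x y hx hy hxy hb IH
    · exact case_noncycle H hw hr h1 hcy IH
  · push Not at hr
    obtain ⟨p, hp, hbp⟩ := hr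
    have hY : swap p (w p) ∈ Yg b := swap_mem_Yg hbp.symm
    have hkey := AA_coset (β := β) (w := w) H hY (one_mem (Yg b))
    rw [mul_one] at hkey
    rw [← hkey]
    refine IHM _ ?_ _ (mul_mem (Yg_SB _ hY) hw) (by rw [offs_mul_left hY, hN]) rfl
    rw [← hM]
    apply Finset.card_lt_card
    rw [Finset.ssubset_iff_of_subset]
    · refine ⟨p, mem_support.2 hp, ?_⟩
      rw [notMem_support, Perm.mul_apply, swap_apply_right]
    · intro q hq
      rw [mem_support] at hq ⊢
      intro h
      apply hq
      rw [Perm.mul_apply, h]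
      have h1 : q ≠ p := by rintro rfl; exact hp h
      have h2 : q ≠ w p := by
        rintro rfl
        exact hp (w.injective h)
      exact swap_apply_of_ne_of_ne h1 h2

theorem abs_main [Fintype ι] (H : HY b β)
    (hcard : ∀ p q, (Finset.univ.filter fun r => b r = b p).card = (Finset.univ.filter fun r => b r = b q).card)
    (H2 : ∀ B' : Finset ι, B'.card ≤ 3 → ∀ v ∈ SB b B', go v ∈ AA b β)
    (H3 : ∀ h : Perm P, ∑ w : Perm P, β (go w) (sy b * go w * go h) = 0) : β 1 1 = 0 := by
  have hall : ∀ a, a ∈ AA b β := by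
    intro a
    induction a using ga_induction with
    | h1 g => exact gen_all H hcard H2 _ Finset.univ rfl g (fun p hp => absurd (Finset.mem_univ _) hp)
    | h2 x y hx hy => exact add_mem hx hy
    | h3 r x hx => exact Submodule.smul_mem _ _ hx
  obtain ⟨h, hc, he⟩ := lemmaZ (sy b) (ginv_sy b) _ (sy_mul_sy b)
  have H3' : ∀ a, ∑ w : Perm P, β (go w) (sy b * go w * a) = 0 := by
    intro a
    induction a using ga_induction with
    | h1 g => exact H3 g
    | h2 x y hx hy => simp only [mul_add, map_add, Finset.sum_add_distrib, hx, hy, add_zero]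
    | h3 r x hx => simp only [mul_smul_comm, map_smul, ← Finset.smul_sum, hx, smul_zero]
  set z : MonoidAlgebra ℚ (Perm P) := ∑ w : Perm P, go w * sy b * go w⁻¹ with hz
  have h1 : β (z * h) 1 = 0 := by
    rw [← H3' (ginv h), hz, Finset.sum_mul, map_sum, LinearMap.sum_apply]
    refine Finset.sum_congr rfl fun w _ => ?_
    rw [mul_assoc _ (go w⁻¹) h, hc, hall, ginv_mul, ginv_go, inv_inv, one_mul, mul_assoc]
  have hsy : ∀ x y, β (x * sy b) y = (syc b : ℚ) • β x y := by
    intro x y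
    rw [sy, Finset.mul_sum, map_sum, LinearMap.sum_apply, Finset.sum_congr rfl (g := fun _ => β x y)]
    · rw [Finset.sum_const, syc, Nat.cast_smul_eq_nsmul]
    · intro σ hσ
      exact (H σ (by simpa using hσ) x y).1
  have h2 := hsy 1 1
  rw [one_mul, he, hsy, h1, smul_zero] at h2
  exact (smul_eq_zero.1 h2.symm).resolve_left (syc_ne b)

end Gen3

section Minors

/-- sorting sign -/
noncomputable def cf {t m : ℕ} (I : Finset (Fin m)) (hI : I.card = t) (A : Fin t → Fin m) : ℤ :=
  ∑ σ : Equiv.Perm (Fin t),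
    if (∀ a, A a = I.orderEmbOfFin hI (σ a)) then (Equiv.Perm.sign σ : ℤ) else 0

theorem cf_perm {t m : ℕ} (I : Finset (Fin m)) (hI : I.card = t) (A : Fin t → Fin m)
    (ρ : Equiv.Perm (Fin t)) :
    cf I hI (fun a => A (ρ a)) = (Equiv.Perm.sign ρ : ℤ) * cf I hI A := by
  rw [cf, cf, Finset.mul_sum]
  refine Fintype.sum_equiv (Equiv.mulRight ρ⁻¹) _ _ fun σ => ?_
  have h : (∀ a, A (ρ a) = I.orderEmbOfFin hI (σ a)) ↔
      (∀ a, A a = I.orderEmbOfFin hI ((Equiv.mulRight ρ⁻¹ σ) a)) := by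
    constructor
    · intro h a
      have := h (ρ⁻¹ a)
      rw [pinv1] at this
      exact this
    · intro h a
      have := h (ρ a)
      rw [Equiv.coe_mulRight, Equiv.Perm.mul_apply, pinv2] at this
      exact this
  by_cases h1 : ∀ a, A (ρ a) = I.orderEmbOfFin hI (σ a)
  · rw [if_pos h1, if_pos (h.1 h1), Equiv.coe_mulRight, Equiv.Perm.sign_mul, Equiv.Perm.sign_inv,
      Units.val_mul, mul_comm, mul_assoc, ← Units.val_mul]
    rcases Int.units_eq_one_or (Equiv.Perm.sign ρ) with h | h <;> simp [h]
  · rw [if_neg h1, if_neg (fun h2 => h1 (h.2 h2)), mul_zero]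

theorem cf_eq {t m : ℕ} (I : Finset (Fin m)) (hI : I.card = t) (A : Fin t → Fin m)
    (σ : Equiv.Perm (Fin t)) (h : ∀ a, A a = I.orderEmbOfFin hI (σ a)) (J : Finset (Fin m))
    (hJ : J.card = t) : cf J hJ A = if J = I then (Equiv.Perm.sign σ : ℤ) else 0 := by
  split_ifs with hJI
  · subst hJI
    rw [cf, Finset.sum_eq_single σ, if_pos h]
    · intro τ _ hτ
      rw [if_neg]
      intro h'
      apply hτ
      ext a
      have := (h' a).symm.trans (h a)
      rw [(J.orderEmbOfFin hJ).injective this]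
    · simp
  · refine Finset.sum_eq_zero fun τ _ => ?_
    rw [if_neg]
    intro h'
    apply hJI
    refine Finset.coe_injective ?_
    rw [← Finset.range_orderEmbOfFin J hJ, ← Finset.range_orderEmbOfFin I hI]
    ext x
    constructor
    · rintro ⟨a, rfl⟩
      refine ⟨σ (τ⁻¹ a), ?_⟩
      rw [← h, h', pinv1]
    · rintro ⟨a, rfl⟩
      refine ⟨τ (σ⁻¹ a), ?_⟩
      rw [← h', h, pinv1]

theorem cf_ninj {t m : ℕ} (I : Finset (Fin m)) (hI : I.card = t) (A : Fin t → Fin m)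
    (h : ¬ Function.Injective A) : cf I hI A = 0 := by
  refine Finset.sum_eq_zero fun τ _ => ?_
  rw [if_neg]
  intro h'
  apply h
  intro x y hxy
  rw [h', h'] at hxy
  exact τ.injective ((I.orderEmbOfFin hI).injective hxy)

theorem exists_sort {t m : ℕ} (A : Fin t → Fin m) (h : Function.Injective A) :
    ∃ (I : Finset (Fin m)) (hI : I.card = t) (σ : Equiv.Perm (Fin t)),
      ∀ a, A a = I.orderEmbOfFin hI (σ a) := by
  have hI : (Finset.univ.image A).card = t := by
    rw [Finset.card_image_of_injective _ h]; simp
  have hex : ∀ a, ∃ c, A a = (Finset.univ.image A).orderEmbOfFin hI c := by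
    intro a
    have : A a ∈ Set.range ((Finset.univ.image A).orderEmbOfFin hI) := by
      rw [Finset.range_orderEmbOfFin]; simp
    obtain ⟨c, hc⟩ := this
    exact ⟨c, hc.symm⟩
  choose f hf using hex
  have finj : Function.Injective f := by
    intro x y hxy
    apply h
    rw [hf, hf, hxy]
  exact ⟨_, hI, Equiv.ofBijective f (Finite.injective_iff_bijective.1 finj), hf⟩

noncomputable instance instFintypeMI (t m n : ℕ) : Fintype (MinorIndex t m n) :=
  inferInstanceAs (Fintype {p : Finset (Fin m) × Finset (Fin n) // p.1.card = t ∧ p.2.card = t})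

def miR {t m n : ℕ} (p : MinorIndex t m n) : Finset (Fin m) := p.1.1

def miC {t m n : ℕ} (p : MinorIndex t m n) : Finset (Fin n) := p.1.2

theorem miR_card {t m n : ℕ} (p : MinorIndex t m n) : (miR p).card = t := p.2.1

theorem miC_card {t m n : ℕ} (p : MinorIndex t m n) : (miC p).card = t := p.2.2

def miMk {t m n : ℕ} (I : Finset (Fin m)) (J : Finset (Fin n)) (hI : I.card = t)
    (hJ : J.card = t) : MinorIndex t m n := ⟨(I, J), hI, hJ⟩

theorem miMk_eq {t m n : ℕ} (p : MinorIndex t m n) :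
    miMk (miR p) (miC p) (miR_card p) (miC_card p) = p := rfl

theorem miR_mk {t m n : ℕ} (I : Finset (Fin m)) (J : Finset (Fin n)) (hI : I.card = t)
    (hJ : J.card = t) : miR (miMk I J hI hJ) = I := rfl

theorem miC_mk {t m n : ℕ} (I : Finset (Fin m)) (J : Finset (Fin n)) (hI : I.card = t)
    (hJ : J.card = t) : miC (miMk I J hI hJ) = J := rfl

theorem mi_ext {t m n : ℕ} {p q : MinorIndex t m n} (h1 : miR p = miR q) (h2 : miC p = miC q) :
    p = q := Subtype.ext (Prod.ext h1 h2)

variable (k : Type*) [Field k] {t m n d : ℕ}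

theorem pi_X (p : MinorIndex t m n) : minorPresentation k t m n (X p) =
    genericMinor k m n t (miR p) (miC p) (miR_card p) (miC_card p) := MvPolynomial.aeval_X _ _

/-- antisymmetrized variable -/
noncomputable def yh (A : Fin t → Fin m) (C : Fin t → Fin n) : MvPolynomial (MinorIndex t m n) k :=
  ∑ p : MinorIndex t m n, (cf (miR p) (miR_card p) A * cf (miC p) (miC_card p) C) • X p

theorem yh_perm_left (A : Fin t → Fin m) (C : Fin t → Fin n) (ρ : Equiv.Perm (Fin t)) :
    yh k (fun a => A (ρ a)) C = (Equiv.Perm.sign ρ : ℤ) • yh k A C := by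
  simp only [yh, cf_perm, Finset.smul_sum, smul_smul, mul_assoc]

theorem yh_perm_right (A : Fin t → Fin m) (C : Fin t → Fin n) (ρ : Equiv.Perm (Fin t)) :
    yh k A (fun a => C (ρ a)) = (Equiv.Perm.sign ρ : ℤ) • yh k A C := by
  simp only [yh, cf_perm, Finset.smul_sum, smul_smul, mul_left_comm]

theorem yh_deg (A : Fin t → Fin m) (C : Fin t → Fin n) : (yh k A C).totalDegree ≤ 1 := by
  refine totalDegree_finsetSum_le fun p _ => ?_
  refine (totalDegree_smul_le _ _).trans ?_
  rw [totalDegree_X]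

theorem yh_eq {A : Fin t → Fin m} {C : Fin t → Fin n} {I : Finset (Fin m)} {hI : I.card = t}
    {J : Finset (Fin n)} {hJ : J.card = t} {σ τ : Equiv.Perm (Fin t)}
    (hA : ∀ a, A a = I.orderEmbOfFin hI (σ a)) (hC : ∀ a, C a = J.orderEmbOfFin hJ (τ a)) :
    yh k A C = ((Equiv.Perm.sign σ : ℤ) * (Equiv.Perm.sign τ : ℤ)) • X (miMk I J hI hJ) := by
  classical
  rw [yh, Finset.sum_eq_single (miMk I J hI hJ)]
  · rw [cf_eq I hI A σ hA, cf_eq J hJ C τ hC, if_pos (miR_mk _ _ _ _), if_pos (miC_mk _ _ _ _)]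
  · intro p _ hne
    rw [cf_eq I hI A σ hA, cf_eq J hJ C τ hC]
    by_cases h1 : miR p = I
    · by_cases h2 : miC p = J
      · exfalso
        apply hne
        exact mi_ext h1 h2
      · rw [if_neg h2, mul_zero, zero_smul]
    · rw [if_neg h1, zero_mul, zero_smul]
  · intro h
    exact absurd (Finset.mem_univ _) h

theorem yh_ninj {A : Fin t → Fin m} {C : Fin t → Fin n}
    (h : ¬ (Function.Injective A ∧ Function.Injective C)) : yh k A C = 0 := by
  refine Finset.sum_eq_zero fun p _ => ?_
  by_cases hA : Function.Injective A
  · rw [cf_ninj _ _ C (fun hC => h ⟨hA, hC⟩), mul_zero, zero_smul]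
  · rw [cf_ninj _ _ A hA, zero_mul, zero_smul]

theorem yh_X (p : MinorIndex t m n) :
    yh k (fun a => (miR p).orderEmbOfFin (miR_card p) a)
      (fun a => (miC p).orderEmbOfFin (miC_card p) a) = X p := by
  refine (yh_eq k (σ := 1) (τ := 1) (hI := miR_card p) (hJ := miC_card p)
    (fun _ => rfl) (fun _ => rfl)).trans ?_
  rw [miMk_eq, Equiv.Perm.sign_one, Units.val_one, mul_one, one_smul]

/-- determinant -/
noncomputable def dt (A : Fin t → Fin m) (C : Fin t → Fin n) : MvPolynomial (Fin m × Fin n) k :=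
  Matrix.det (Matrix.of fun a b : Fin t => (X (A a, C b) : MvPolynomial (Fin m × Fin n) k))

theorem pi_yh (A : Fin t → Fin m) (C : Fin t → Fin n) :
    minorPresentation k t m n (yh k A C) = dt k A C := by
  by_cases h : Function.Injective A ∧ Function.Injective C
  · obtain ⟨I, hI, σ, hA⟩ := exists_sort A h.1
    obtain ⟨J, hJ, τ, hC⟩ := exists_sort C h.2
    rw [yh_eq k hA hC, map_zsmul, pi_X, genericMinor, dt]
    set N : Matrix (Fin t) (Fin t) (MvPolynomial (Fin m × Fin n) k) := Matrix.of fun a b : Fin t =>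
      X (I.orderEmbOfFin hI a, J.orderEmbOfFin hJ b) with hN
    have h1 : (Matrix.of fun a b : Fin t => (X (A a, C b) : MvPolynomial (Fin m × Fin n) k)) =
      (N.submatrix σ id).submatrix id τ := by
      ext1 a b
      simp [hN, hA, hC]
    rw [h1, Matrix.det_permute', Matrix.det_permute, zsmul_eq_mul]
    push_cast
    rw [mul_comm (Equiv.Perm.sign σ : MvPolynomial (Fin m × Fin n) k), mul_assoc]
    rfl
  · rw [yh_ninj k h, map_zero, dt, eq_comm]
    rw [not_and_or] at h
    rcases h with h | h
    · rw [Function.Injective] at h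
      push Not at h
      obtain ⟨x, y, hxy, hne⟩ := h
      exact Matrix.det_zero_of_row_eq hne (by ext1 b; simp [hxy])
    · rw [Function.Injective] at h
      push Not at h
      obtain ⟨x, y, hxy, hne⟩ := h
      exact Matrix.det_zero_of_column_eq hne (by intro b; simp [hxy])

theorem dt_ne {A : Fin t → Fin m} {C : Fin t → Fin n} (hA : Function.Injective A)
    (hC : Function.Injective C) : dt k A C ≠ 0 := by
  classical
  intro h
  have h1 : MvPolynomial.eval (fun p : Fin m × Fin n => if ∃ a, A a = p.1 ∧ C a = p.2 then (1 : k) else 0)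
      (dt k A C) = 1 := by
    rw [dt, RingHom.map_det]
    convert Matrix.det_one (n := Fin t) (R := k) using 2
    ext a c
    simp only [RingHom.mapMatrix_apply, Matrix.map_apply, Matrix.of_apply, eval_X, Matrix.one_apply]
    refine if_congr ⟨?_, ?_⟩ rfl rfl
    · rintro ⟨x, h1, h2⟩
      rw [← hA h1, ← hC h2]
    · rintro rfl
      exact ⟨a, rfl, rfl⟩
  rw [h, map_zero] at h1
  exact zero_ne_one h1

theorem pi_yh_ne {A : Fin t → Fin m} {C : Fin t → Fin n} (h : yh k A C ≠ 0) : dt k A C ≠ 0 := by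
  by_cases h1 : Function.Injective A ∧ Function.Injective C
  · exact dt_ne k h1.1 h1.2
  · exact absurd (yh_ninj k h1) h

theorem dt_hom (A : Fin t → Fin m) (C : Fin t → Fin n) : (dt k A C).IsHomogeneous t := by
  rw [dt, Matrix.det_apply]
  refine IsHomogeneous.sum _ _ _ fun σ _ => ?_
  have h1 : (∏ i, (Matrix.of fun a b : Fin t => (X (A a, C b) : MvPolynomial (Fin m × Fin n) k)) (σ i) i).IsHomogeneous
      (∑ _i : Fin t, 1) := IsHomogeneous.prod _ _ _ fun i _ => by
        simp only [Matrix.of_apply]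
        exact isHomogeneous_X _ _
  simp only [Finset.sum_const, Finset.card_univ, Fintype.card_fin, smul_eq_mul, mul_one] at h1
  rcases Int.units_eq_one_or (Equiv.Perm.sign σ) with h | h
  · rw [h, one_smul]; exact h1
  · rw [h, Units.neg_smul, one_smul]; exact h1.neg

end Minors

section Words

open Equiv

/-- integer sign -/
def sg {Q : Type} [Fintype Q] [DecidableEq Q] (σ : Perm Q) : ℤ := (Perm.sign σ : ℤ)

theorem sg_mul {Q : Type} [Fintype Q] [DecidableEq Q] (σ τ : Perm Q) : sg (σ * τ) = sg σ * sg τ := by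
  simp [sg]

theorem sg_inv {Q : Type} [Fintype Q] [DecidableEq Q] (σ : Perm Q) : sg σ⁻¹ = sg σ := by
  simp [sg]

theorem sg_one {Q : Type} [Fintype Q] [DecidableEq Q] : sg (1 : Perm Q) = 1 := by
  simp [sg]

theorem sg_sq {Q : Type} [Fintype Q] [DecidableEq Q] (σ : Perm Q) : sg σ * sg σ = 1 := by
  rcases Int.units_eq_one_or (Perm.sign σ) with h | h <;> simp [sg, h]

/-- Young subgroup as finset -/
abbrev YF (t d : ℕ) : Finset (Perm (Fin t × Fin d)) :=
  Finset.univ.filter (· ∈ Yg (Prod.snd : Fin t × Fin d → Fin d))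

theorem sum_YF_inv {t d : ℕ} {V : Type*} [AddCommGroup V] (f : Perm (Fin t × Fin d) → V) :
    ∑ σ ∈ YF t d, f σ⁻¹ = ∑ σ ∈ YF t d, f σ := by
  refine Finset.sum_nbij' (fun σ => σ⁻¹) (fun σ => σ⁻¹) ?_ ?_ ?_ ?_ ?_
  · intro σ hσ
    simpa using hσ
  · intro σ hσ
    simpa using hσ
  · intro σ _
    simp
  · intro σ _
    simp
  · intro σ _
    rfl

variable (k : Type*) [Field k] {t m n d : ℕ}

/-- product of antisymmetrized variables -/
noncomputable def Mw (I : Fin t × Fin d → Fin m) (J : Fin t × Fin d → Fin n) :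
    MvPolynomial (MinorIndex t m n) k :=
  ∏ κ : Fin d, yh k (fun a => I (a, κ)) (fun a => J (a, κ))

/-- bi-word monomial -/
noncomputable def xw (I : Fin t × Fin d → Fin m) (J : Fin t × Fin d → Fin n) :
    MvPolynomial (Fin m × Fin n) k :=
  ∏ p, X (I p, J p)

theorem xw_perm (I : Fin t × Fin d → Fin m) (J : Fin t × Fin d → Fin n) (w : Perm (Fin t × Fin d)) :
    xw k (fun p => I (w p)) (fun p => J (w p)) = xw k I J :=
  Equiv.prod_comp w (fun p => (X (I p, J p) : MvPolynomial (Fin m × Fin n) k))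

theorem xw_perm' (I : Fin t × Fin d → Fin m) (J : Fin t × Fin d → Fin n) (w : Perm (Fin t × Fin d)) :
    xw k I (fun p => J (w p)) = xw k (fun p => I (w⁻¹ p)) J := by
  rw [← xw_perm k I _ w⁻¹]
  simp only [pinv1]

theorem pi_Mw (I : Fin t × Fin d → Fin m) (J : Fin t × Fin d → Fin n) :
    minorPresentation k t m n (Mw k I J) = ∑ σ ∈ YF t d, sg σ • xw k (fun p => I (σ p)) J := by
  classical
  rw [Mw, map_prod]
  simp only [pi_yh, dt]
  rw [← Matrix.det_blockDiagonal, Matrix.det_apply, Finset.sum_filter]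
  refine Finset.sum_congr rfl fun σ _ => ?_
  by_cases h : σ ∈ Yg (Prod.snd : Fin t × Fin d → Fin d)
  · rw [if_pos h, Units.smul_def, sg, xw]
    congr 1
    refine Finset.prod_congr rfl fun p _ => ?_
    rw [Matrix.blockDiagonal_apply, if_pos (h p), Matrix.of_apply]
    have h2 : (p.1, (σ p).2) = p := by
      rw [show (σ p).2 = p.2 from h p]
    rw [h2]
  · rw [if_neg h]
    rw [mem_Yg] at h
    push Not at h
    obtain ⟨p, hp⟩ := h
    rw [Finset.prod_eq_zero (Finset.mem_univ p), smul_zero]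
    rw [Matrix.blockDiagonal_apply, if_neg hp]

theorem pi_Mw' (I : Fin t × Fin d → Fin m) (J : Fin t × Fin d → Fin n) :
    minorPresentation k t m n (Mw k I J) = ∑ σ ∈ YF t d, sg σ • xw k I (fun p => J (σ p)) := by
  rw [pi_Mw, ← sum_YF_inv]
  refine Finset.sum_congr rfl fun σ _ => ?_
  rw [xw_perm', sg_inv]

theorem col_perm {w : Perm (Fin t × Fin d)} {κ : Fin d} (h : ∀ a, (w (a, κ)).2 = κ) :
    ∃ ρ : Perm (Fin t), ∀ a, w (a, κ) = (ρ a, κ) := by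
  have h1 : ∀ a, w (a, κ) = ((w (a, κ)).1, κ) := fun a => Prod.ext rfl (h a)
  have finj : Function.Injective fun a => (w (a, κ)).1 := by
    intro x y hxy
    have : w (x, κ) = w (y, κ) := by
      rw [h1 x, h1 y]
      exact Prod.ext hxy rfl
    exact congrArg Prod.fst (w.injective this)
  exact ⟨Equiv.ofBijective _ (Finite.injective_iff_bijective.1 finj), h1⟩

theorem SB_inv {w : Perm (Fin t × Fin d)} {B : Finset (Fin d)}
    (h : w ∈ SB (Prod.snd : Fin t × Fin d → Fin d) B) :
    w⁻¹ ∈ SB (Prod.snd : Fin t × Fin d → Fin d) B := by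
  rintro ⟨a, κ⟩ hκ
  obtain ⟨ρ, hρ⟩ := col_perm (w := w) (κ := κ) fun a => h (a, κ) hκ
  have h1 := hρ (ρ⁻¹ a)
  rw [pinv1] at h1
  rw [← h1, pinv2, h1]

theorem Yg_prod {σ : Perm (Fin t × Fin d)} (h : σ ∈ Yg (Prod.snd : Fin t × Fin d → Fin d)) :
    ∃ ρ : Fin d → Perm (Fin t), (∀ a κ, σ (a, κ) = (ρ κ a, κ)) ∧ sg σ = ∏ κ, sg (ρ κ) := by
  have h1 : ∀ κ, ∃ ρ : Perm (Fin t), ∀ a, σ (a, κ) = (ρ a, κ) := fun κ => col_perm fun a => h (a, κ)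
  choose ρ hρ using h1
  refine ⟨ρ, fun a κ => hρ κ a, ?_⟩
  have h2 : σ = prodCongrLeft ρ := by
    refine Equiv.ext fun ⟨a, κ⟩ => ?_
    rw [hρ]
    rfl
  have h3 : Perm.sign σ = ∏ κ, Perm.sign (ρ κ) := by
    rw [h2]
    exact Perm.sign_prodCongrLeft ρ
  rw [sg, h3]
  simp [sg]

theorem Mw_left {σ : Perm (Fin t × Fin d)} (h : σ ∈ Yg (Prod.snd : Fin t × Fin d → Fin d))
    (I : Fin t × Fin d → Fin m) (J : Fin t × Fin d → Fin n) :
    Mw k (fun p => I (σ p)) J = sg σ • Mw k I J := by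
  obtain ⟨ρ, h1, h2⟩ := Yg_prod h
  rw [Mw, Mw, h2]
  simp only [h1]
  have h3 : ∀ κ, yh k (fun a => I (ρ κ a, κ)) (fun a => J (a, κ)) =
      ((sg (ρ κ) : ℤ) : MvPolynomial (MinorIndex t m n) k) * yh k (fun a => I (a, κ)) (fun a => J (a, κ)) := by
    intro κ
    rw [← zsmul_eq_mul]
    exact yh_perm_left k (fun a => I (a, κ)) _ (ρ κ)
  simp only [h3, Finset.prod_mul_distrib, zsmul_eq_mul, Int.cast_prod]

theorem Mw_right {σ : Perm (Fin t × Fin d)} (h : σ ∈ Yg (Prod.snd : Fin t × Fin d → Fin d))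
    (I : Fin t × Fin d → Fin m) (J : Fin t × Fin d → Fin n) :
    Mw k I (fun p => J (σ p)) = sg σ • Mw k I J := by
  obtain ⟨ρ, h1, h2⟩ := Yg_prod h
  rw [Mw, Mw, h2]
  simp only [h1]
  have h3 : ∀ κ, yh k (fun a => I (a, κ)) (fun a => J (ρ κ a, κ)) =
      ((sg (ρ κ) : ℤ) : MvPolynomial (MinorIndex t m n) k) * yh k (fun a => I (a, κ)) (fun a => J (a, κ)) := by
    intro κ
    rw [← zsmul_eq_mul]
    exact yh_perm_right k _ (fun a => J (a, κ)) (ρ κ)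
  simp only [h3, Finset.prod_mul_distrib, zsmul_eq_mul, Int.cast_prod]

theorem Mw_split (B : Finset (Fin d)) (I I' : Fin t × Fin d → Fin m) (J J' : Fin t × Fin d → Fin n)
    (hB : B.card ≤ 3)
    (h : ∀ κ, κ ∉ B → ∃ z : ℤ, yh k (fun a => I' (a, κ)) (fun a => J' (a, κ)) =
      (z : MvPolynomial (MinorIndex t m n) k) * yh k (fun a => I (a, κ)) (fun a => J (a, κ))) :
    ∃ F : MvPolynomial (MinorIndex t m n) k, F.totalDegree ≤ 3 ∧
      Mw k I' J' = F * ∏ κ ∈ Bᶜ, yh k (fun a => I (a, κ)) (fun a => J (a, κ)) := by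
  classical
  choose! z hz using h
  refine ⟨(∏ κ ∈ B, yh k (fun a => I' (a, κ)) (fun a => J' (a, κ))) *
    C ((∏ κ ∈ Bᶜ, z κ : ℤ) : k), ?_, ?_⟩
  · refine (totalDegree_mul _ _).trans ?_
    rw [totalDegree_C, add_zero]
    refine (totalDegree_finsetProd _ _).trans ?_
    refine (Finset.sum_le_card_nsmul _ _ 1 fun κ _ => yh_deg k _ _).trans ?_
    simpa using hB
  · rw [Mw, ← Finset.prod_mul_prod_compl B, mul_assoc]
    congr 1
    rw [Finset.prod_congr rfl fun κ hκ => hz κ (Finset.mem_compl.1 hκ), Finset.prod_mul_distrib]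
    simp

theorem Mw_split_left {B : Finset (Fin d)} (hB : B.card ≤ 3) {w : Perm (Fin t × Fin d)}
    (hw : w ∈ SB (Prod.snd : Fin t × Fin d → Fin d) B)
    (I : Fin t × Fin d → Fin m) (J : Fin t × Fin d → Fin n) :
    ∃ F : MvPolynomial (MinorIndex t m n) k, F.totalDegree ≤ 3 ∧
      Mw k (fun p => I (w p)) J = F * ∏ κ ∈ Bᶜ, yh k (fun a => I (a, κ)) (fun a => J (a, κ)) := by
  refine Mw_split k B I _ J J hB fun κ hκ => ?_
  obtain ⟨ρ, hρ⟩ := col_perm (w := w) (κ := κ) fun a => hw (a, κ) hκ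
  refine ⟨sg ρ, ?_⟩
  simp only [hρ]
  rw [← zsmul_eq_mul]
  exact yh_perm_left k (fun a => I (a, κ)) _ ρ

theorem Mw_split_right {B : Finset (Fin d)} (hB : B.card ≤ 3) {w : Perm (Fin t × Fin d)}
    (hw : w ∈ SB (Prod.snd : Fin t × Fin d → Fin d) B)
    (I : Fin t × Fin d → Fin m) (J : Fin t × Fin d → Fin n) :
    ∃ F : MvPolynomial (MinorIndex t m n) k, F.totalDegree ≤ 3 ∧
      Mw k I (fun p => J (w p)) = F * ∏ κ ∈ Bᶜ, yh k (fun a => I (a, κ)) (fun a => J (a, κ)) := by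
  refine Mw_split k B I I J _ hB fun κ hκ => ?_
  obtain ⟨ρ, hρ⟩ := col_perm (w := w) (κ := κ) fun a => hw (a, κ) hκ
  refine ⟨sg ρ, ?_⟩
  simp only [hρ]
  rw [← zsmul_eq_mul]
  exact yh_perm_right k _ (fun a => J (a, κ)) ρ

/-- low degree relations -/
noncomputable def I3 (k : Type*) [Field k] (t m n : ℕ) : Ideal (MvPolynomial (MinorIndex t m n) k) :=
  Ideal.span {x | x ∈ minorRelations k t m n ∧ x.totalDegree ≤ 3}

theorem mem_rel {f : MvPolynomial (MinorIndex t m n) k} :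
    f ∈ minorRelations k t m n ↔ minorPresentation k t m n f = 0 := Iff.rfl

theorem core_mem {f F Pr : MvPolynomial (MinorIndex t m n) k} (hF : F.totalDegree ≤ 3) (hf : f = F * Pr)
    (h0 : minorPresentation k t m n f = 0) (hPr : Pr ≠ 0 → minorPresentation k t m n Pr ≠ 0) :
    f ∈ I3 k t m n := by
  by_cases h : Pr = 0
  · rw [hf, h, mul_zero]
    exact zero_mem _
  · rw [hf]
    refine Ideal.mul_mem_right _ _ (Ideal.subset_span ⟨?_, hF⟩)
    rw [mem_rel]
    rw [hf, map_mul] at h0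
    exact (mul_eq_zero.1 h0).resolve_right (hPr h)

theorem H2core {B : Finset (Fin d)} (hB : B.card ≤ 3) {g : Perm (Fin t × Fin d)}
    (hg : g ∈ SB (Prod.snd : Fin t × Fin d → Fin d) B)
    (I : Fin t × Fin d → Fin m) (J : Fin t × Fin d → Fin n) :
    (∑ σ ∈ YF t d, sg σ • Mw k (fun p => I ((σ * g) p)) J) -
      ∑ σ ∈ YF t d, sg σ • Mw k I (fun p => J ((σ * g⁻¹) p)) ∈ I3 k t m n := by
  classical
  have hY : ∀ σ ∈ YF t d, σ ∈ SB (Prod.snd : Fin t × Fin d → Fin d) B := fun σ hσ =>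
    Yg_SB B (Finset.mem_filter.1 hσ).2
  have h1 : ∀ σ, ∃ F : MvPolynomial (MinorIndex t m n) k, σ ∈ YF t d → F.totalDegree ≤ 3 ∧
      Mw k (fun p => I ((σ * g) p)) J =
        F * ∏ κ ∈ Bᶜ, yh k (fun a => I (a, κ)) (fun a => J (a, κ)) := by
    intro σ
    by_cases hσ : σ ∈ YF t d
    · obtain ⟨F, hF⟩ := Mw_split_left k hB (mul_mem (hY σ hσ) hg) I J
      exact ⟨F, fun _ => hF⟩
    · exact ⟨0, fun h => absurd h hσ⟩
  have h2 : ∀ σ, ∃ F : MvPolynomial (MinorIndex t m n) k, σ ∈ YF t d → F.totalDegree ≤ 3 ∧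
      Mw k I (fun p => J ((σ * g⁻¹) p)) =
        F * ∏ κ ∈ Bᶜ, yh k (fun a => I (a, κ)) (fun a => J (a, κ)) := by
    intro σ
    by_cases hσ : σ ∈ YF t d
    · obtain ⟨F, hF⟩ := Mw_split_right k hB (mul_mem (hY σ hσ) (SB_inv hg)) I J
      exact ⟨F, fun _ => hF⟩
    · exact ⟨0, fun h => absurd h hσ⟩
  choose F hF using h1
  choose G hG using h2
  refine core_mem k (F := (∑ σ ∈ YF t d, sg σ • F σ) - ∑ σ ∈ YF t d, sg σ • G σ)
    (Pr := ∏ κ ∈ Bᶜ, yh k (fun a => I (a, κ)) (fun a => J (a, κ))) ?_ ?_ ?_ ?_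
  · refine (totalDegree_sub _ _).trans (max_le ?_ ?_)
    · exact totalDegree_finsetSum_le fun σ hσ => (totalDegree_smul_le _ _).trans (hF σ hσ).1
    · exact totalDegree_finsetSum_le fun σ hσ => (totalDegree_smul_le _ _).trans (hG σ hσ).1
  · rw [sub_mul, Finset.sum_mul, Finset.sum_mul]
    congr 1
    · refine Finset.sum_congr rfl fun σ hσ => ?_
      rw [(hF σ hσ).2, smul_mul_assoc]
    · refine Finset.sum_congr rfl fun σ hσ => ?_
      rw [(hG σ hσ).2, smul_mul_assoc]
  · rw [map_sub, map_sum, map_sum, sub_eq_zero]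
    simp only [map_zsmul]
    rw [← sum_YF_inv (fun σ : Perm (Fin t × Fin d) => sg σ • minorPresentation k t m n (Mw k I (fun p => J ((σ * g⁻¹) p))))]
    simp only [pi_Mw, Finset.smul_sum]
    rw [Finset.sum_comm]
    refine Finset.sum_congr rfl fun σ _ => Finset.sum_congr rfl fun τ _ => ?_
    rw [sg_inv, smul_comm]
    congr 2
    rw [xw_perm' k _ J (σ⁻¹ * g⁻¹)]
    congr 1
  · intro h
    rw [map_prod]
    refine Finset.prod_ne_zero_iff.2 fun κ hκ => ?_
    rw [pi_yh]
    exact pi_yh_ne k (Finset.prod_ne_zero_iff.1 h κ hκ)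

end Words

section Final

open Equiv

theorem exists_bil {G : Type} [Group G] [Fintype G] {V : Type*} [AddCommGroup V] [Module ℚ V]
    (B : G → G → V) : ∃ β : MonoidAlgebra ℚ G →ₗ[ℚ] MonoidAlgebra ℚ G →ₗ[ℚ] V,
      ∀ g h, β (go g) (go h) = B g h := by
  classical
  refine ⟨LinearMap.mk₂ ℚ (fun x y => ∑ g, ∑ h, (x.coeff g * y.coeff h) • B g h) ?_ ?_ ?_ ?_, ?_⟩
  · intro x y z
    simp [add_mul, add_smul, Finset.sum_add_distrib]
  · intro c x y
    simp [mul_assoc, mul_smul, Finset.smul_sum]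
  · intro x y z
    simp [mul_add, add_smul, Finset.sum_add_distrib]
  · intro c x y
    simp [mul_left_comm, mul_smul, Finset.smul_sum]
  · intro g h
    rw [LinearMap.mk₂_apply, Finset.sum_eq_single g, Finset.sum_eq_single h]
    · simp [go]
    · intro h' _ hne
      simp [go, Finsupp.single_apply, hne.symm]
    · simp
    · intro g' _ hne
      simp [go, Finsupp.single_apply, hne.symm]
    · simp

theorem word_perm {Q R : Type} [Fintype Q] [DecidableEq Q] {u v : Q → R}
    (h : ∑ p, Finsupp.single (u p) 1 = ∑ p, Finsupp.single (v p) (1 : ℕ)) :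
    ∃ ρ : Perm Q, ∀ p, v (ρ p) = u p := by
  classical
  have h1 : ∀ c, Nonempty ({a // u a = c} ≃ {a // v a = c}) := by
    intro c
    rw [← Fintype.card_eq]
    have := DFunLike.congr_fun h c
    simp only [Finsupp.finsetSum_apply, Finsupp.single_apply, Finset.sum_boole, Nat.cast_id] at this
    rw [Fintype.card_subtype, Fintype.card_subtype, this]
  exact ⟨Equiv.ofFiberEquiv fun c => (h1 c).some, fun p => Equiv.ofFiberEquiv_map _ p⟩

variable (k : Type*) [Field k] {t m n d : ℕ}

theorem xw_mono (I : Fin t × Fin d → Fin m) (J : Fin t × Fin d → Fin n) :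
    xw k I J = monomial (∑ p, Finsupp.single (I p, J p) 1) 1 := by
  rw [xw, monomial_sum_one]
  rfl

theorem exists_L {V : Type*} [AddCommGroup V] [Module k V]
    (Φ : (Fin t × Fin d → Fin m × Fin n) → V)
    (hΦ : ∀ u (ρ : Perm (Fin t × Fin d)), Φ (fun p => u (ρ p)) = Φ u) :
    ∃ L : MvPolynomial (Fin m × Fin n) k →ₗ[k] V, ∀ I J, L (xw k I J) = Φ fun p => (I p, J p) := by
  classical
  refine ⟨(basisMonomials (Fin m × Fin n) k).constr k fun s =>
    if h : ∃ u : Fin t × Fin d → Fin m × Fin n, ∑ p, Finsupp.single (u p) 1 = s then Φ h.choose else 0,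
    fun I J => ?_⟩
  have h : ∃ u : Fin t × Fin d → Fin m × Fin n, ∑ p, Finsupp.single (u p) 1 =
    ∑ p, Finsupp.single (I p, J p) 1 := ⟨_, rfl⟩
  rw [xw_mono, ← congrFun (coe_basisMonomials (Fin m × Fin n) k) _, Module.Basis.constr_basis, dif_pos h]
  obtain ⟨ρ, hρ⟩ := word_perm h.choose_spec
  rw [← hΦ (fun p => (I p, J p)) ρ]
  congr 1
  funext p
  exact (hρ p).symm

theorem main_words [CharZero k] {α : Type*} (s : Finset α) (c : α → k)
    (I : α → Fin t × Fin d → Fin m) (J : α → Fin t × Fin d → Fin n)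
    (h0 : minorPresentation k t m n (∑ j ∈ s, c j • Mw k (I j) (J j)) = 0) :
    ∑ j ∈ s, c j • Mw k (I j) (J j) ∈ I3 k t m n := by
  classical
  let q : MvPolynomial (MinorIndex t m n) k →ₗ[k] (MvPolynomial (MinorIndex t m n) k ⧸ I3 k t m n) :=
    (Ideal.Quotient.mkₐ k (I3 k t m n)).toLinearMap
  have hq : ∀ f, q f = 0 ↔ f ∈ I3 k t m n := fun f => Ideal.Quotient.eq_zero_iff_mem
  obtain ⟨β, hβ⟩ := exists_bil (G := Perm (Fin t × Fin d)) (fun w w' => (sg w * sg w') •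
    ∑ j ∈ s, c j • q (Mw k (fun p => I j (w p)) (fun p => J j (w' p))))
  have key : β 1 1 = 0 := by
    refine abs_main (b := (Prod.snd : Fin t × Fin d → Fin d)) ?_ ?_ ?_ ?_
    · intro σ hσ x y
      constructor
      · induction x using ga_induction with
        | h2 x x' hx hx' => rw [add_mul, map_add, map_add, LinearMap.add_apply, LinearMap.add_apply, hx, hx']
        | h3 r x hx => rw [smul_mul_assoc, map_smul, map_smul, LinearMap.smul_apply, LinearMap.smul_apply, hx]
        | h1 g =>
          induction y using ga_induction with
          | h2 x x' hx hx' => rw [map_add, map_add, hx, hx']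
          | h3 r x hx => rw [map_smul, map_smul, hx]
          | h1 g' =>
            rw [← go_mul, hβ, hβ]
            have : ∀ j, Mw k (fun p => I j ((g * σ) p)) (fun p => J j (g' p)) =
                sg σ • Mw k (fun p => I j (g p)) (fun p => J j (g' p)) := fun j =>
              Mw_left k hσ (fun p => I j (g p)) _
            simp only [this, map_zsmul, smul_comm (_ : k) (sg σ), ← Finset.smul_sum, smul_smul, sg_mul]
            congr 1
            linear_combination (sg g * sg g') * sg_sq σ
      · induction x using ga_induction with
        | h2 x x' hx hx' => rw [map_add, LinearMap.add_apply, LinearMap.add_apply, hx, hx']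
        | h3 r x hx => rw [map_smul, LinearMap.smul_apply, LinearMap.smul_apply, hx]
        | h1 g =>
          induction y using ga_induction with
          | h2 x x' hx hx' => rw [add_mul, map_add, map_add, hx, hx']
          | h3 r x hx => rw [smul_mul_assoc, map_smul, map_smul, hx]
          | h1 g' =>
            rw [← go_mul, hβ, hβ]
            have : ∀ j, Mw k (fun p => I j (g p)) (fun p => J j ((g' * σ) p)) =
                sg σ • Mw k (fun p => I j (g p)) (fun p => J j (g' p)) := fun j =>
              Mw_right k hσ _ (fun p => J j (g' p))
            simp only [this, map_zsmul, smul_comm (_ : k) (sg σ), ← Finset.smul_sum, smul_smul, sg_mul]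
            congr 1
            linear_combination (sg g * sg g') * sg_sq σ
    · have : ∀ κ : Fin d, (Finset.univ.filter fun r : Fin t × Fin d => r.2 = κ).card = t := by
        intro κ
        have h1 : (Finset.univ.filter fun r : Fin t × Fin d => r.2 = κ) =
            (Finset.univ : Finset (Fin t)).image fun a => (a, κ) := by
          ext ⟨a, κ'⟩
          simp [eq_comm]
        rw [h1, Finset.card_image_of_injective _ (fun a b hab => congrArg Prod.fst hab)]
        simp
      intro p p'
      rw [this, this]
    · intro B hB v hv
      rw [mem_AA]
      intro x y
      induction x using ga_induction with
      | h2 x x' hx hx' =>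
        rw [add_mul, add_mul, map_add, map_add, LinearMap.add_apply, LinearMap.add_apply, hx, hx']
      | h3 r x hx =>
        rw [smul_mul_assoc, smul_mul_assoc, map_smul, map_smul, LinearMap.smul_apply, LinearMap.smul_apply, hx]
      | h1 g =>
        induction y using ga_induction with
        | h2 x x' hx hx' => rw [add_mul, add_mul, map_add, map_add, hx, hx']
        | h3 r x hx => rw [smul_mul_assoc, smul_mul_assoc, map_smul, map_smul, hx]
        | h1 g' =>
          rw [ginv_go, go_mul_sy_mul, go_mul_sy_mul, map_sum, map_sum, LinearMap.sum_apply]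
          simp only [hβ, sg_mul, sg_inv]
          have h2 : ∀ j, (∑ σ ∈ YF t d, sg σ • q (Mw k (fun p => I j ((g * σ * v) p)) (fun p => J j (g' p)))) =
              ∑ σ ∈ YF t d, sg σ • q (Mw k (fun p => I j (g p)) (fun p => J j ((g' * σ * v⁻¹) p))) := by
            intro j
            have h3 := H2core k hB hv (fun p => I j (g p)) (fun p => J j (g' p))
            rw [← hq, map_sub, sub_eq_zero, map_sum, map_sum] at h3
            simp only [map_zsmul] at h3
            exact h3
          have h4 : ∀ (f : Perm (Fin t × Fin d) → α → (MvPolynomial (MinorIndex t m n) k ⧸ I3 k t m n)),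
              ∑ σ ∈ YF t d, (sg g * sg g' * sg v * sg σ) • ∑ j ∈ s, c j • f σ j =
              (sg g * sg g' * sg v) • ∑ j ∈ s, c j • ∑ σ ∈ YF t d, sg σ • f σ j := by
            intro f
            simp only [Finset.smul_sum]
            rw [Finset.sum_comm]
            refine Finset.sum_congr rfl fun j _ => Finset.sum_congr rfl fun σ _ => ?_
            rw [mul_smul, smul_comm (sg σ)]
          refine (Finset.sum_congr rfl fun σ _ => ?_).trans ((h4 fun σ j =>
            q (Mw k (fun p => I j ((g * σ * v) p)) (fun p => J j (g' p)))).trans ?_)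
          · congr 1
            ring
          · simp only [h2]
            rw [← h4]
            refine Finset.sum_congr rfl fun σ _ => ?_
            congr 1
            ring
    · intro h
      obtain ⟨L, hL⟩ := exists_L k (t := t) (d := d) (m := m) (n := n) (fun u => ∑ w : Perm (Fin t × Fin d),
        q (Mw k (fun p => (u (w p)).1) (fun p => (u ((w * h) p)).2))) (by
          intro u ρ
          exact Equiv.sum_comp (Equiv.mulLeft ρ) (fun w : Perm (Fin t × Fin d) =>
            q (Mw k (fun p => (u (w p)).1) (fun p => (u ((w * h) p)).2))))
      have e1 : ∀ w : Perm (Fin t × Fin d), sy Prod.snd * go w * go h =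
          ∑ σ ∈ YF t d, go (σ * w * h) := by
        intro w
        rw [sy, Finset.sum_mul, Finset.sum_mul]
        simp only [go_mul]
      simp only [e1, map_sum, hβ]
      have e2 := congrArg L h0
      simp only [map_sum, map_smul, pi_Mw', map_zsmul, map_zero, hL] at e2
      rw [← smul_zero (sg h), ← e2]
      simp only [Finset.smul_sum]
      refine Finset.sum_comm.trans ?_
      refine Eq.trans ?_ Finset.sum_comm
      refine Finset.sum_congr rfl fun σ _ => ?_
      refine Finset.sum_comm.trans ?_
      refine Finset.sum_congr rfl fun j _ => Finset.sum_congr rfl fun w _ => ?_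
      rw [smul_comm (c j) (sg σ), smul_smul]
      congr 1
      rw [sg_mul, sg_mul]
      linear_combination (sg σ * sg h) * sg_sq w
  rw [← go_one, hβ] at key
  rw [← hq, map_sum]
  simpa [sg_one] using key

end Final

section Final2

theorem mono_word {σ : Type*} (k : Type*) [Field k] (d : ℕ) : ∀ s : σ →₀ ℕ, s.degree = d →
    ∃ i : Fin d → σ, (monomial s (1 : k)) = ∏ κ, X (i κ) := by
  classical
  induction d with
  | zero =>
    intro s hs
    rw [Finsupp.degree_eq_zero_iff] at hs
    refine ⟨Fin.elim0, ?_⟩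
    rw [hs]
    simp
  | succ d ih =>
    intro s hs
    have h1 : ∃ a, s a ≠ 0 := by
      by_contra h
      push Not at h
      have h2 : s = 0 := Finsupp.ext h
      rw [h2] at hs
      simp at hs
    obtain ⟨a, ha⟩ := h1
    have h3 : s = Finsupp.single a 1 + (s - Finsupp.single a 1) := by
      rw [add_tsub_cancel_of_le]
      rwa [Finsupp.single_le_iff, Nat.one_le_iff_ne_zero]
    obtain ⟨i, hi⟩ := ih (s - Finsupp.single a 1) (by
      rw [h3, map_add, Finsupp.degree_single] at hs
      omega)
    refine ⟨Fin.cons a i, ?_⟩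
    rw [Fin.prod_univ_succ, Fin.cons_zero]
    simp only [Fin.cons_succ]
    rw [← hi, X, monomial_mul, ← h3, one_mul]

variable (k : Type*) [Field k] {t m n d : ℕ}

theorem main_hom [CharZero k] {f : MvPolynomial (MinorIndex t m n) k} (hf : f.IsHomogeneous d)
    (h0 : minorPresentation k t m n f = 0) : f ∈ I3 k t m n := by
  classical
  have h1 : ∀ s : f.support, ∃ (I : Fin t × Fin d → Fin m) (J : Fin t × Fin d → Fin n),
      coeff s.1 f • Mw k I J = monomial s.1 (coeff s.1 f) := by
    rintro ⟨s, hs⟩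
    have hd : s.degree = d := by
      rw [Finsupp.degree_eq_weight_one]
      exact hf (mem_support_iff.1 hs)
    obtain ⟨i, hi⟩ := mono_word k d s hd
    refine ⟨fun p => (miR (i p.2)).orderEmbOfFin (miR_card _) p.1,
      fun p => (miC (i p.2)).orderEmbOfFin (miC_card _) p.1, ?_⟩
    rw [Mw, Finset.prod_congr rfl fun κ _ => yh_X k (i κ), ← hi, smul_monomial, smul_eq_mul, mul_one]
  choose I J h using h1
  have h2 : f = ∑ s ∈ f.support.attach, coeff s.1 f • Mw k (I s) (J s) := by
    simp only [h]
    rw [Finset.sum_attach f.support (fun s => monomial s (coeff s f))]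
    exact f.as_sum
  rw [h2]
  apply main_words
  rw [← h2, h0]

theorem main_gen [CharZero k] (ht : 0 < t) : GeneratedInDegreesLE (minorRelations k t m n) 3 := by
  refine le_antisymm ?_ (Ideal.span_le.2 fun x hx => hx.1)
  intro f hf
  rw [mem_rel] at hf
  change f ∈ I3 k t m n
  rw [← sum_homogeneousComponent f]
  refine Ideal.sum_mem _ fun d hd => main_hom k (homogeneousComponent_isHomogeneous d f) ?_
  have hh : ∀ e, (minorPresentation k t m n (homogeneousComponent e f)).IsHomogeneous (t * e) := by
    intro e
    refine (homogeneousComponent_isHomogeneous e f).aeval _ fun p => ?_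
    exact dt_hom k (fun a => (miR p).orderEmbOfFin (miR_card p) a)
      (fun a => (miC p).orderEmbOfFin (miC_card p) a)
  have h1 := congrArg (homogeneousComponent (t * d)) hf
  rw [← sum_homogeneousComponent f, map_sum, map_sum, map_zero, Finset.sum_eq_single d] at h1
  · rwa [homogeneousComponent_of_mem (hh d), if_pos rfl] at h1
  · intro e _ hne
    rw [homogeneousComponent_of_mem (hh e), if_neg]
    intro h
    exact hne (Nat.eq_of_mul_eq_mul_left ht h).symm
  · exact fun h => absurd hd h

end Final2

/-- The ideals of relations among the 2-minors, respectively the 3-minors, of a generic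
`5 × 5` matrix are generated by their elements of degree at most 3. -/
theorem minorRelations_five_five (k : Type*) [Field k] [CharZero k] :
    GeneratedInDegreesLE (minorRelations k 2 5 5) 3 ∧
    GeneratedInDegreesLE (minorRelations k 3 5 5) 3 := by
  exact ⟨main_gen k (by norm_num), main_gen k (by norm_num)⟩
end
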